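/- arXiv:2410.08004 — 2 statements merged into one kernel-verified Lean document; each statement's English description precedes it below -/
import Mathlib

section
/- Under assumptions (A) and (B), with Σ^{(j)} = H_j^{−1} − diag(M_j) + M_j M_j^T positive definite for each j, let ρ^{(k)} = |w|^{−1} Σ_{j=1}^p w_j ρ_j^{⊗k} where ρ_j is the probability measure on {1,…,q} with ρ_j(l) = M_{j,l}. If k = k(N) is a sequence with lim_{N→∞} k/N = α ∈ (0,1], then liminf_{N→∞} H(μ_N^{(k)} | ρ^{(k)}) > 0, where μ_N^{(k)} is the distribution of (σ_1,…,σ_k) under μ_N; i.e., the propagation of chaos stops for marginals of size proportional to N. -/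
/-!
Write `q = d + 1` and let `G*` be the maximum of `G`. For each maximizer `M = M_j`, the Gibbs weight
of a configuration with empirical measure `x` is the weight of the product measure `ρ_j^{⊗N}` times
`exp (N G*) * exp (N (G x - G* + KL(x | M)))` (`gw_eq`). The Hessian of `KL(· | M)` at `M` is the
inverse of `diag M - M Mᵀ`, and positive definiteness of `Σ^{(j)} = H_j⁻¹ - diag M + M Mᵀ` says
exactly that this Hessian strictly dominates `H_j` (`hess_lt_chi`). Hence the exponent is at least
`N η ‖x - M‖²` near `M` (`psi_lower`, `landscape`): macroscopically close to `M`, the Gibbs measure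
favours fluctuations of order `√N` over the product measure.

Laplace's method gives `Z_N ≍ exp (N G*)` (`partition_upper`, `partition_lower`). Fix one
maximizer `M_{j₀}` and let `E` be the event that the first `k` spins have an empirical measure close
to `M_{j₀}`, while the number of those of a given colour is off its mean by at least `(T + 2) √N`.
The remaining spins typically undo at most `2 √N` of this deviation, so for `T` large
`μ_N^{(k)}(E) ≥ 4 ρ_{j₀}^{⊗k}(E)` (`marg_lower`). Since `k` is of order `N`, the probability
`ρ_{j₀}^{⊗k}(E)` is bounded below by some `b₀ > 0` (`tilt_lower`), and the other components of the
mixture give `E` a vanishing mass (`other_small`), so `ρ^{(k)}(E) ≤ 2 ρ_{j₀}^{⊗k}(E)` eventually.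
Testing the relative entropy against `log 2 · 1_E` (`relEnt_ge`) yields the lower bound `b₀ / 2`.

The `liminf` is taken in `ℝ`, where it is meaningful only for sequences that are not eventually
above every bound. An upper bound on the relative entropies follows from data processing
(`relEnt_marg_le`), which reduces it to the full Gibbs measure, and from the quadratic growth of
`G* - G`, which controls the expected value of `N KL(x | M_j)` (`gibbs_entropy_le`).
-/

open Filter Real MeasureTheory

/-- Relative entropy (Kullback–Leibler divergence) between two probability mass
functions on a finite set. -/
noncomputable def relEnt {α : Type*} [Fintype α] (rho pion : α → ℝ) : ℝ :=
  ∑ x, rho x * Real.log (rho x / pion x)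

namespace CurieWeissChaos

/-! ### Configurations and product measures -/

/-- The number of indices at which the configuration `σ` takes the colour `l`. -/
def cnt {N q : ℕ} (σ : Fin N → Fin q) (l : Fin q) : ℕ :=
  (Finset.univ.filter fun i => σ i = l).card

/-- The weight of `σ` under the `N`-fold product of the (not necessarily normalized)
weight `v` on the colours. -/
def pw {N q : ℕ} (v : Fin q → ℝ) (σ : Fin N → Fin q) : ℝ := ∏ i, v (σ i)

section Product
variable {N q : ℕ}

lemma pw_nonneg {v : Fin q → ℝ} (hv : ∀ l, 0 ≤ v l) (σ : Fin N → Fin q) : 0 ≤ pw v σ :=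
  Finset.prod_nonneg fun _ _ => hv _

lemma pw_pos {v : Fin q → ℝ} (hv : ∀ l, 0 < v l) (σ : Fin N → Fin q) : 0 < pw v σ :=
  Finset.prod_pos fun _ _ => hv _

lemma sum_pw (v : Fin q → ℝ) : ∑ σ : Fin N → Fin q, pw v σ = (∑ l, v l) ^ N := by
  simp only [pw]
  rw [Fintype.sum_pow]

lemma sum_pw_eq_one {v : Fin q → ℝ} (h1 : ∑ l, v l = 1) :
    ∑ σ : Fin N → Fin q, pw v σ = 1 := by rw [sum_pw, h1, one_pow]

lemma pw_eq_prod_pow (v : Fin q → ℝ) (σ : Fin N → Fin q) : pw v σ = ∏ l, v l ^ cnt σ l := by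
  unfold pw cnt
  rw [← Finset.prod_fiberwise (s := Finset.univ) (g := σ)]
  refine Finset.prod_congr rfl fun l _ => ?_
  rw [Finset.prod_congr rfl (g := fun _ => v l), Finset.prod_const]
  intro i hi
  simp at hi
  rw [hi]

lemma sum_cnt (σ : Fin N → Fin q) : ∑ l, cnt σ l = N := by
  unfold cnt
  have := Finset.card_eq_sum_card_fiberwise (f := σ) (s := Finset.univ) (t := Finset.univ)
    (fun _ _ => Finset.mem_coe.2 (Finset.mem_univ _))
  simpa using this.symm

lemma cnt_le (σ : Fin N → Fin q) (l : Fin q) : cnt σ l ≤ N := by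
  unfold cnt
  exact (Finset.card_le_univ _).trans (by simp)

lemma sum_cnt_real (σ : Fin N → Fin q) : ∑ l, (cnt σ l : ℝ) = N := by
  exact_mod_cast sum_cnt σ

lemma pw_eq_exp {v : Fin q → ℝ} (hv : ∀ l, 0 < v l) (σ : Fin N → Fin q) :
    pw v σ = Real.exp (∑ l, (cnt σ l : ℝ) * Real.log (v l)) := by
  rw [pw_eq_prod_pow, Real.exp_sum]
  refine Finset.prod_congr rfl fun l _ => ?_
  rw [Real.exp_nat_mul, Real.exp_log (hv l)]

lemma cnt_cons (a : Fin q) (σ : Fin N → Fin q) (l : Fin q) :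
    cnt (Fin.cons a σ : Fin (N + 1) → Fin q) l = (if a = l then 1 else 0) + cnt σ l := by
  unfold cnt
  simp only [Finset.card_filter, Fin.sum_univ_succ, Fin.cons_zero, Fin.cons_succ]

lemma sum_cons {N : ℕ} (φ : (Fin (N + 1) → Fin q) → ℝ) :
    ∑ σ, φ σ = ∑ a : Fin q, ∑ σ : Fin N → Fin q, φ (Fin.cons a σ) := by
  rw [← Fintype.sum_prod_type']
  exact (Equiv.sum_comp (Fin.consEquiv fun _ => Fin q) φ).symm

lemma pw_cons (v : Fin q → ℝ) (a : Fin q) (σ : Fin N → Fin q) :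
    pw v (Fin.cons a σ : Fin (N + 1) → Fin q) = v a * pw v σ := by
  unfold pw; simp [Fin.prod_univ_succ]

lemma sum_v_ind {v : Fin q → ℝ} (h1 : ∑ l, v l = 1) (l : Fin q) :
    ∑ a, v a * ((if a = l then (1 : ℝ) else 0) - v l) = 0 := by
  simp [mul_sub, Finset.sum_sub_distrib, ← Finset.sum_mul, h1]

lemma sum_v_ind_sq {v : Fin q → ℝ} (h1 : ∑ l, v l = 1) (l : Fin q) :
    ∑ a, v a * ((if a = l then (1 : ℝ) else 0) - v l) ^ 2 = v l * (1 - v l) := by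
  have : ∀ a, v a * ((if a = l then (1 : ℝ) else 0) - v l) ^ 2
      = (if a = l then v a * (1 - 2 * v l) else 0) + v a * v l ^ 2 := by
    intro a; split_ifs <;> ring
  simp only [this, Finset.sum_add_distrib, ← Finset.sum_mul, h1]
  simp; ring

lemma first_moment {v : Fin q → ℝ} (h1 : ∑ l, v l = 1) (l : Fin q) :
    ∀ N : ℕ, ∑ σ : Fin N → Fin q, pw v σ * ((cnt σ l : ℝ) - N * v l) = 0
  | 0 => by simp [cnt]
  | N + 1 => by
    rw [sum_cons]
    have : ∀ a : Fin q, ∀ σ : Fin N → Fin q,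
        pw v (Fin.cons a σ : Fin (N + 1) → Fin q) *
          ((cnt (Fin.cons a σ : Fin (N + 1) → Fin q) l : ℝ) - (N + 1 : ℕ) * v l)
        = v a * ((if a = l then (1 : ℝ) else 0) - v l) * pw v σ
          + v a * (pw v σ * ((cnt σ l : ℝ) - N * v l)) := by
      intro a σ
      rw [pw_cons, cnt_cons]
      push_cast
      ring
    simp only [this, Finset.sum_add_distrib, ← Finset.mul_sum, sum_pw_eq_one h1,
      first_moment h1 l N, mul_one, mul_zero, sum_v_ind h1]
    simp

/-- The variance of a count under a product measure. -/
lemma second_moment {v : Fin q → ℝ} (h1 : ∑ l, v l = 1) (l : Fin q) :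
    ∀ N : ℕ, ∑ σ : Fin N → Fin q, pw v σ * ((cnt σ l : ℝ) - N * v l) ^ 2
      = N * (v l * (1 - v l))
  | 0 => by simp [cnt]
  | N + 1 => by
    rw [sum_cons]
    have : ∀ a : Fin q, ∀ σ : Fin N → Fin q,
        pw v (Fin.cons a σ : Fin (N + 1) → Fin q) *
          ((cnt (Fin.cons a σ : Fin (N + 1) → Fin q) l : ℝ) - (N + 1 : ℕ) * v l) ^ 2
        = v a * ((if a = l then (1 : ℝ) else 0) - v l) ^ 2 * pw v σ
          + 2 * (v a * ((if a = l then (1 : ℝ) else 0) - v l))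
              * (pw v σ * ((cnt σ l : ℝ) - N * v l))
          + v a * (pw v σ * ((cnt σ l : ℝ) - N * v l) ^ 2) := by
      intro a σ
      rw [pw_cons, cnt_cons]
      push_cast
      ring
    simp only [this, Finset.sum_add_distrib, ← Finset.mul_sum, sum_pw_eq_one h1,
      first_moment h1 l N, second_moment h1 l N, mul_one, mul_zero, sum_v_ind_sq h1,
      ← Finset.sum_mul, h1]
    push_cast
    simp; ring

open Classical in
/-- Chebyshev's inequality, simultaneously for the counts of all colours. -/
lemma chebyshev {v : Fin q → ℝ} (hv : ∀ l, 0 ≤ v l) (h1 : ∑ l, v l = 1) (N : ℕ) {s : ℝ}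
    (hs : 0 < s) :
    1 - N / s ^ 2 ≤
      ∑ σ : Fin N → Fin q with ∀ l, |(cnt σ l : ℝ) - N * v l| ≤ s, pw v σ := by
  have hbad : ∑ σ : Fin N → Fin q with ¬ ∀ l, |(cnt σ l : ℝ) - N * v l| ≤ s, pw v σ
      ≤ N / s ^ 2 := by
    calc _ ≤ ∑ σ : Fin N → Fin q with ¬ ∀ l, |(cnt σ l : ℝ) - N * v l| ≤ s,
          ∑ l, pw v σ * ((cnt σ l : ℝ) - N * v l) ^ 2 / s ^ 2 := by
          refine Finset.sum_le_sum fun σ hσ => ?_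
          simp only [Finset.mem_filter, Finset.mem_univ, true_and, not_forall, not_le] at hσ
          obtain ⟨l, hl⟩ := hσ
          have h0 : ∀ l ∈ Finset.univ,
              0 ≤ pw v σ * ((cnt σ l : ℝ) - N * v l) ^ 2 / s ^ 2 := fun l _ =>
            div_nonneg (mul_nonneg (pw_nonneg hv σ) (sq_nonneg _)) (sq_nonneg _)
          refine le_trans ?_ (Finset.single_le_sum h0 (Finset.mem_univ l))
          rw [le_div_iff₀ (by positivity)]
          refine mul_le_mul_of_nonneg_left ?_ (pw_nonneg hv σ)
          rw [← sq_abs ((cnt σ l : ℝ) - N * v l)]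
          exact pow_le_pow_left₀ hs.le hl.le 2
      _ ≤ ∑ σ : Fin N → Fin q, ∑ l, pw v σ * ((cnt σ l : ℝ) - N * v l) ^ 2 / s ^ 2 := by
          refine Finset.sum_le_sum_of_subset_of_nonneg (Finset.filter_subset _ _) ?_
          intro σ _ _
          exact Finset.sum_nonneg fun l _ =>
            div_nonneg (mul_nonneg (pw_nonneg hv σ) (sq_nonneg _)) (sq_nonneg _)
      _ = (∑ l, N * (v l * (1 - v l))) / s ^ 2 := by
          rw [Finset.sum_comm, Finset.sum_div]
          refine Finset.sum_congr rfl fun l _ => ?_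
          rw [← Finset.sum_div, second_moment h1]
      _ ≤ N / s ^ 2 := by
          refine div_le_div_of_nonneg_right ?_ (sq_nonneg _)
          rw [← Finset.mul_sum]
          have : ∑ l, v l * (1 - v l) ≤ ∑ l, v l :=
            Finset.sum_le_sum fun l _ => by nlinarith [hv l, sq_nonneg (v l)]
          rw [h1] at this
          nlinarith [(Nat.cast_nonneg N : (0 : ℝ) ≤ N)]
  have := Finset.sum_filter_add_sum_filter_not Finset.univ
    (fun σ : Fin N → Fin q => ∀ l, |(cnt σ l : ℝ) - N * v l| ≤ s) (pw v)
  rw [sum_pw_eq_one h1] at this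
  linarith

open Classical in
lemma sum_filter_pw_le_one {v : Fin q → ℝ} (hv : ∀ l, 0 ≤ v l) (h1 : ∑ l, v l = 1)
    (A : (Fin N → Fin q) → Prop) : ∑ σ with A σ, pw v σ ≤ 1 := by
  rw [← sum_pw_eq_one (N := N) h1]
  exact Finset.sum_le_sum_of_subset_of_nonneg (Finset.filter_subset _ _)
    fun σ _ _ => pw_nonneg hv σ

open Classical in
/-- Change of measure: by Cauchy–Schwarz, an event which is likely under the product of `u`
cannot be too unlikely under the product of `v`. -/
lemma change_of_measure {u v : Fin q → ℝ} (hv : ∀ l, 0 < v l)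
    (A : (Fin N → Fin q) → Prop) :
    (∑ σ with A σ, pw u σ) ^ 2 ≤ (∑ l, u l ^ 2 / v l) ^ N * ∑ σ with A σ, pw v σ := by
  have key : (∑ σ with A σ, pw u σ) ^ 2
      ≤ (∑ σ : Fin N → Fin q with A σ, pw (fun l => u l ^ 2 / v l) σ) *
        ∑ σ with A σ, pw v σ := by
    refine Finset.sum_sq_le_sum_mul_sum_of_sq_le_mul _ (fun σ _ => ?_)
      (fun σ _ => pw_nonneg (fun l => (hv l).le) σ) (fun σ _ => ?_)
    · exact pw_nonneg (fun l => div_nonneg (sq_nonneg _) (hv l).le) σ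
    · refine le_of_eq ?_
      unfold pw
      rw [← Finset.prod_pow, ← Finset.prod_mul_distrib]
      refine Finset.prod_congr rfl fun i _ => ?_
      have := (hv (σ i)).ne'
      field_simp
  refine key.trans (mul_le_mul_of_nonneg_right ?_
    (Finset.sum_nonneg fun σ _ => pw_nonneg (fun l => (hv l).le) σ))
  rw [← sum_pw]
  exact Finset.sum_le_sum_of_subset_of_nonneg (Finset.filter_subset _ _)
    fun σ _ _ => pw_nonneg (fun l => div_nonneg (sq_nonneg _) (hv l).le) σ

/-- The number of configurations with prescribed counts `n` is at most (in fact equal to) the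
multinomial coefficient of `n`. -/
lemma card_same_cnt : ∀ (N : ℕ) (n : Fin q → ℕ), ∑ l, n l = N →
    (Finset.univ.filter fun σ : Fin N → Fin q => ∀ l, cnt σ l = n l).card * ∏ l, (n l).factorial
      ≤ N.factorial
  | 0, n, hn => by
    have : ∀ l, n l = 0 := by simpa using hn
    simp only [this]
    simpa using Finset.card_le_univ
      (Finset.univ.filter fun σ : Fin 0 → Fin q => ∀ l, cnt σ l = 0)
  | N + 1, n, hn => by
    have hc : (Finset.univ.filter fun σ : Fin (N + 1) → Fin q => ∀ l, cnt σ l = n l).card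
        = ∑ a : Fin q, (Finset.univ.filter fun σ : Fin N → Fin q =>
            ∀ l, (if a = l then 1 else 0) + cnt σ l = n l).card := by
      simp only [Finset.card_filter]
      rw [← Equiv.sum_comp (Fin.consEquiv fun _ => Fin q), Fintype.sum_prod_type]
      refine Finset.sum_congr rfl fun a _ => Finset.sum_congr rfl fun σ _ => ?_
      change (if ∀ l, cnt (Fin.cons a σ : Fin (N + 1) → Fin q) l = n l then 1 else 0) = _
      simp only [cnt_cons]
    rw [hc, Finset.sum_mul, Nat.factorial_succ, ← hn, Finset.sum_mul]
    refine Finset.sum_le_sum fun a _ => ?_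
    rcases Nat.eq_zero_or_pos (n a) with h0 | hpos
    · have : (Finset.univ.filter fun σ : Fin N → Fin q =>
            ∀ l, (if a = l then 1 else 0) + cnt σ l = n l) = ∅ := by
        refine Finset.filter_eq_empty_iff.2 fun σ _ h => ?_
        have := h a
        simp at this
        omega
      simp [this]
    · set n' : Fin q → ℕ := Function.update n a (n a - 1) with hn'
      have hset : (Finset.univ.filter fun σ : Fin N → Fin q =>
            ∀ l, (if a = l then 1 else 0) + cnt σ l = n l)
          = Finset.univ.filter fun σ : Fin N → Fin q => ∀ l, cnt σ l = n' l := by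
        refine Finset.filter_congr fun σ _ => forall_congr' fun l => ?_
        by_cases h : a = l
        · subst h; simp [hn']; omega
        · simp [hn', h, Function.update_of_ne (Ne.symm h)]
      have hsum : ∑ l, n' l = N := by
        have h1 := Finset.add_sum_erase Finset.univ n (Finset.mem_univ a)
        have h2 := Finset.add_sum_erase Finset.univ n' (Finset.mem_univ a)
        have h3 : ∑ x ∈ Finset.univ.erase a, n' x = ∑ x ∈ Finset.univ.erase a, n x :=
          Finset.sum_congr rfl fun x hx => by
            simp [hn', Function.update_of_ne (Finset.ne_of_mem_erase hx)]
        have h4 : n' a = n a - 1 := by simp [hn']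
        omega
      have hprod : ∏ l, (n l).factorial = n a * ∏ l, (n' l).factorial := by
        rw [← Finset.mul_prod_erase Finset.univ _ (Finset.mem_univ a),
          ← Finset.mul_prod_erase Finset.univ (fun l => (n' l).factorial) (Finset.mem_univ a)]
        have h3 : ∏ x ∈ Finset.univ.erase a, (n' x).factorial
            = ∏ x ∈ Finset.univ.erase a, (n x).factorial :=
          Finset.prod_congr rfl fun x hx => by
            simp [hn', Function.update_of_ne (Finset.ne_of_mem_erase hx)]
        have h4 : n' a = n a - 1 := by simp [hn']
        rw [h3, h4, ← mul_assoc, Nat.mul_factorial_pred hpos.ne']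
      have ih := card_same_cnt N n' hsum
      rw [hset, hprod]
      calc _ = n a * ((Finset.univ.filter fun σ : Fin N → Fin q => ∀ l, cnt σ l = n' l).card
              * ∏ l, (n' l).factorial) := by ring
        _ ≤ n a * N.factorial := Nat.mul_le_mul_left _ ih

end Product

/-! ### Stirling bounds and Gaussian sums -/

section Stirling

lemma factorial_upper {n : ℕ} (hn : 1 ≤ n) :
    (n.factorial : ℝ) ≤ Real.exp 1 * √n * (n / Real.exp 1) ^ n := by
  obtain ⟨m, rfl⟩ : ∃ m, n = m + 1 := ⟨n - 1, by omega⟩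
  have h := Stirling.stirlingSeq'_antitone (Nat.zero_le m)
  simp only [Function.comp, Nat.succ_eq_add_one, zero_add, Stirling.stirlingSeq_one] at h
  unfold Stirling.stirlingSeq at h
  rw [div_le_iff₀ (by positivity)] at h
  refine h.trans (le_of_eq ?_)
  rw [Real.sqrt_mul (by norm_num)]
  have : √(2 : ℝ) ≠ 0 := by positivity
  field_simp

lemma factorial_lower (n : ℕ) :
    √(max n 1 : ℝ) * (n / Real.exp 1) ^ n ≤ (n.factorial : ℝ) := by
  rcases Nat.eq_zero_or_pos n with rfl | hn
  · simp
  · refine le_trans ?_ (Stirling.le_factorial_stirling n)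
    refine mul_le_mul_of_nonneg_right (Real.sqrt_le_sqrt ?_) (by positivity)
    have : (1 : ℝ) ≤ n := by exact_mod_cast hn
    rw [max_eq_left this]
    nlinarith [Real.pi_gt_three]

/-- Stirling's upper bound for the number of configurations with given counts; the sum in the
exponent is `-N` times the entropy of the empirical measure. -/
lemma card_mul_exp_le {N q : ℕ} (hN : 1 ≤ N) (σ₀ : Fin N → Fin q) :
    ((Finset.univ.filter fun σ : Fin N → Fin q => ∀ l, cnt σ l = cnt σ₀ l).card : ℝ) *
      Real.exp (∑ l, (cnt σ₀ l : ℝ) * Real.log ((cnt σ₀ l : ℝ) / N))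
      ≤ Real.exp 1 * √N / ∏ l, √(max (cnt σ₀ l) 1 : ℝ) := by
  have hN0 : (0 : ℝ) < N := by exact_mod_cast hN
  have hexp : Real.exp (∑ l, (cnt σ₀ l : ℝ) * Real.log ((cnt σ₀ l : ℝ) / N))
      = ∏ l, ((cnt σ₀ l : ℝ) / N) ^ cnt σ₀ l := by
    rw [Real.exp_sum]
    refine Finset.prod_congr rfl fun l _ => ?_
    rcases Nat.eq_zero_or_pos (cnt σ₀ l) with h | h
    · simp [h]
    · have : (0 : ℝ) < cnt σ₀ l := by exact_mod_cast h
      rw [Real.exp_nat_mul, Real.exp_log (by positivity)]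
  have hcard : ((Finset.univ.filter fun σ : Fin N → Fin q => ∀ l, cnt σ l = cnt σ₀ l).card : ℝ)
      * ∏ l, ((cnt σ₀ l).factorial : ℝ) ≤ N.factorial := by
    exact_mod_cast card_same_cnt N (cnt σ₀) (sum_cnt σ₀)
  set K : ℝ := ((Finset.univ.filter fun σ : Fin N → Fin q => ∀ l, cnt σ l = cnt σ₀ l).card : ℝ)
  have hlow : ∏ l, (√(max (cnt σ₀ l) 1 : ℝ) * ((cnt σ₀ l : ℝ) / Real.exp 1) ^ cnt σ₀ l)
      ≤ ∏ l, ((cnt σ₀ l).factorial : ℝ) :=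
    Finset.prod_le_prod (fun l _ => by positivity) fun l _ => factorial_lower _
  have hsplit : ∏ l, ((cnt σ₀ l : ℝ) / Real.exp 1) ^ cnt σ₀ l
      = (∏ l, ((cnt σ₀ l : ℝ) / N) ^ cnt σ₀ l) * (N / Real.exp 1) ^ N := by
    have : (N / Real.exp 1 : ℝ) ^ N = ∏ l, (N / Real.exp 1 : ℝ) ^ cnt σ₀ l := by
      rw [Finset.prod_pow_eq_pow_sum, sum_cnt]
    rw [this, ← Finset.prod_mul_distrib]
    refine Finset.prod_congr rfl fun l _ => ?_
    rw [← mul_pow]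
    congr 1
    field_simp
  rw [Finset.prod_mul_distrib, hsplit] at hlow
  have hK : 0 ≤ K := Nat.cast_nonneg _
  have hfin := (mul_le_mul_of_nonneg_left hlow hK).trans (hcard.trans (factorial_upper hN))
  rw [hexp, le_div_iff₀ (Finset.prod_pos fun l _ => by positivity)]
  have hpos : (0 : ℝ) < (N / Real.exp 1) ^ N := by positivity
  refine le_of_mul_le_mul_right ?_ hpos
  linarith

end Stirling

section Gauss

lemma sum_geom_inj_le {r : ℝ} (h0 : 0 ≤ r) (h1 : r < 1) (s : Finset ℕ) (f : ℕ → ℕ)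
    (hf : Set.InjOn f s) : ∑ n ∈ s, r ^ f n ≤ (1 - r)⁻¹ := by
  rw [← Finset.sum_image (g := f) (f := fun m => r ^ m) hf, ← tsum_geometric_of_lt_one h0 h1]
  exact (summable_geometric_of_lt_one h0 h1).sum_le_tsum _ fun n _ => pow_nonneg h0 n

/-- A discretized Gaussian of variance of order `N` has total mass of order `√N`, uniformly in
its centre. -/
lemma gauss_sum {c : ℝ} (hc : 0 < c) :
    ∃ C : ℝ, 0 < C ∧ ∀ N : ℕ, 1 ≤ N → ∀ m : ℝ, 0 ≤ m →
      ∑ n ∈ Finset.range (N + 1), Real.exp (-(c * (N * ((n : ℝ) / N - m) ^ 2))) ≤ C * √N := by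
  refine ⟨Real.exp (√c + 1 / 4) * (2 * (1 + 1 / √c)), by positivity, fun N hN m hm => ?_⟩
  have hN1 : (1 : ℝ) ≤ N := by exact_mod_cast hN
  have hN0 : (0 : ℝ) < N := by linarith
  have hsN : 0 < √(N : ℝ) := Real.sqrt_pos.2 hN0
  have hsN1 : 1 ≤ √(N : ℝ) := Real.one_le_sqrt.2 hN1
  have hsc : 0 < √c := Real.sqrt_pos.2 hc
  set s : ℝ := √c / √N with hs
  have hs0 : 0 < s := by positivity
  have hs1 : s ≤ √c := div_le_self hsc.le hsN1
  have hs2 : s ^ 2 = c / N := by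
    rw [hs, div_pow, Real.sq_sqrt hc.le, Real.sq_sqrt hN0.le]
  -- the Gaussian terms are dominated by a two-sided geometric sequence centred at `a ≈ N m`,
  -- by `y ^ 2 ≥ y - 1 / 4`
  set a : ℕ := ⌊N * m⌋₊ with ha
  have ha1 : (a : ℝ) ≤ N * m := Nat.floor_le (by positivity)
  have ha2 : N * m < a + 1 := Nat.lt_floor_add_one _
  set r : ℝ := Real.exp (-s) with hr
  have hr0 : 0 ≤ r := (Real.exp_pos _).le
  have hr1 : r < 1 := by rw [hr, Real.exp_lt_one_iff]; linarith
  have hterm : ∀ n : ℕ, Real.exp (-(c * (N * ((n : ℝ) / N - m) ^ 2)))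
      ≤ Real.exp (√c + 1 / 4) * (if n < a then r ^ (a - n) else r ^ (n - a)) := by
    intro n
    have h1 : c * (N * ((n : ℝ) / N - m) ^ 2) = (s * (n - N * m)) ^ 2 := by
      rw [mul_pow, hs2]; field_simp
    have h2 : s * |(n : ℝ) - a| - s - 1 / 4 ≤ (s * (n - N * m)) ^ 2 := by
      have h3 : |(n : ℝ) - a| ≤ |(n : ℝ) - N * m| + 1 := by
        have : |N * m - a| ≤ 1 := by rw [abs_le]; constructor <;> linarith
        calc |(n : ℝ) - a| = |((n : ℝ) - N * m) + (N * m - a)| := by ring_nf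
          _ ≤ _ := (abs_add_le _ _).trans (by linarith)
      have h4 : (s * (n - N * m)) ^ 2 = (s * |(n : ℝ) - N * m|) ^ 2 := by
        rw [mul_pow, mul_pow, sq_abs]
      rw [h4]
      nlinarith [sq_nonneg (s * |(n : ℝ) - N * m| - 1 / 2)]
    have h5 : (if n < a then r ^ (a - n) else r ^ (n - a)) = Real.exp (-(s * |(n : ℝ) - a|)) := by
      split_ifs with h
      · rw [hr, ← Real.exp_nat_mul, Nat.cast_sub h.le, abs_of_nonpos]
        · ring_nf
        · have : (n : ℝ) < a := by exact_mod_cast h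
          linarith
      · have h' : a ≤ n := by omega
        rw [hr, ← Real.exp_nat_mul, Nat.cast_sub h', abs_of_nonneg]
        · ring_nf
        · have : (a : ℝ) ≤ n := by exact_mod_cast h'
          linarith
    rw [h5, ← Real.exp_add, h1]
    exact Real.exp_le_exp.2 (by linarith)
  have hsum : ∑ n ∈ Finset.range (N + 1), (if n < a then r ^ (a - n) else r ^ (n - a))
      ≤ 2 * (1 - r)⁻¹ := by
    rw [Finset.sum_ite]
    have e1 := sum_geom_inj_le hr0 hr1 ((Finset.range (N + 1)).filter fun n => n < a)
      (fun n => a - n) (by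
        intro x hx y hy hxy
        simp at hx hy hxy
        omega)
    have e2 := sum_geom_inj_le hr0 hr1 ((Finset.range (N + 1)).filter fun n => ¬ n < a)
      (fun n => n - a) (by
        intro x hx y hy hxy
        simp at hx hy hxy
        omega)
    linarith
  have hinv : (1 - r)⁻¹ ≤ 1 + 1 / s := by
    have h1 : r ≤ 1 / (1 + s) := by
      rw [hr, Real.exp_neg, ← one_div]
      exact one_div_le_one_div_of_le (by linarith) (by linarith [Real.add_one_le_exp s])
    have h2 : s / (1 + s) ≤ 1 - r := by
      have : s / (1 + s) = 1 - 1 / (1 + s) := by field_simp; ring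
      linarith
    calc (1 - r)⁻¹ ≤ (s / (1 + s))⁻¹ := inv_anti₀ (by positivity) h2
      _ = 1 + 1 / s := by field_simp; ring
  have hfin : 1 + 1 / s ≤ (1 + 1 / √c) * √N := by
    rw [hs, one_div_div, add_mul, one_mul, one_div, inv_mul_eq_div]
    linarith
  calc _ ≤ ∑ n ∈ Finset.range (N + 1),
        Real.exp (√c + 1 / 4) * (if n < a then r ^ (a - n) else r ^ (n - a)) :=
        Finset.sum_le_sum fun n _ => hterm n
    _ = Real.exp (√c + 1 / 4) *
        ∑ n ∈ Finset.range (N + 1), (if n < a then r ^ (a - n) else r ^ (n - a)) := by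
        rw [Finset.mul_sum]
    _ ≤ Real.exp (√c + 1 / 4) * (2 * ((1 + 1 / √c) * √N)) := by
        refine mul_le_mul_of_nonneg_left ?_ (Real.exp_pos _).le
        linarith
    _ = _ := by ring

lemma gauss_sum_pi {c : ℝ} (hc : 0 < c) (d : ℕ) :
    ∃ C : ℝ, 0 < C ∧ ∀ N : ℕ, 1 ≤ N → ∀ m : Fin d → ℝ, (∀ l, 0 ≤ m l) →
      ∑ y : Fin d → Fin (N + 1),
        Real.exp (-(c * (N * ∑ l, (((y l : ℕ) : ℝ) / N - m l) ^ 2))) ≤ C * √N ^ d := by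
  obtain ⟨C, hC, h⟩ := gauss_sum hc
  refine ⟨C ^ d, by positivity, fun N hN m hm => ?_⟩
  calc _ = ∑ y : Fin d → Fin (N + 1),
        ∏ l, Real.exp (-(c * (N * (((y l : ℕ) : ℝ) / N - m l) ^ 2))) := by
        refine Finset.sum_congr rfl fun y _ => ?_
        rw [← Real.exp_sum, Finset.mul_sum, Finset.mul_sum, Finset.sum_neg_distrib]
    _ = ∏ l, ∑ n : Fin (N + 1), Real.exp (-(c * (N * (((n : ℕ) : ℝ) / N - m l) ^ 2))) := by
        rw [Finset.prod_univ_sum, Fintype.piFinset_univ]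
    _ ≤ ∏ _l : Fin d, (C * √N) := by
        refine Finset.prod_le_prod (fun l _ => Finset.sum_nonneg fun _ _ => (Real.exp_pos _).le)
          fun l _ => ?_
        rw [Fin.sum_univ_eq_sum_range
          (fun n => Real.exp (-(c * (N * ((n : ℝ) / N - m l) ^ 2))))]
        exact h N hN (m l) (hm l)
    _ = C ^ d * √N ^ d := by simp [mul_pow]

end Gauss

/-! ### The Laplace bound -/

section Master

/-- The first `d` coordinates of the empirical measure of a configuration of `d + 1` colours. -/
noncomputable def hat {N d : ℕ} (σ : Fin N → Fin (d + 1)) : Fin d → ℝ :=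
  fun l => (cnt σ l.castSucc : ℝ) / N

lemma hat_nonneg {N d : ℕ} (σ : Fin N → Fin (d + 1)) (l : Fin d) : 0 ≤ hat σ l := by
  unfold hat; positivity

lemma one_sub_sum_hat {N d : ℕ} (hN : 1 ≤ N) (σ : Fin N → Fin (d + 1)) :
    1 - ∑ l, hat σ l = (cnt σ (Fin.last d) : ℝ) / N := by
  have hN0 : (0 : ℝ) < N := by exact_mod_cast hN
  have h := sum_cnt_real σ
  rw [Fin.sum_univ_castSucc] at h
  unfold hat
  rw [← Finset.sum_div]
  field_simp
  linarith

lemma sum_hat_le {N d : ℕ} (hN : 1 ≤ N) (σ : Fin N → Fin (d + 1)) : ∑ l, hat σ l ≤ 1 := by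
  have := one_sub_sum_hat hN σ
  have h2 : 0 ≤ (cnt σ (Fin.last d) : ℝ) / N := by positivity
  linarith

lemma sum_sq_le_norm_sq {d : ℕ} (v : Fin d → ℝ) : ∑ l, v l ^ 2 ≤ (d + 1) * ‖v‖ ^ 2 := by
  have : ∀ l, v l ^ 2 ≤ ‖v‖ ^ 2 := fun l => by
    rw [← sq_abs]
    exact pow_le_pow_left₀ (abs_nonneg _) (norm_le_pi_norm v l) 2
  calc ∑ l, v l ^ 2 ≤ ∑ _l : Fin d, ‖v‖ ^ 2 := Finset.sum_le_sum fun l _ => this l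
    _ = d * ‖v‖ ^ 2 := by simp
    _ ≤ _ := by nlinarith [sq_nonneg ‖v‖]

lemma abs_sum_le_norm {d : ℕ} (v : Fin d → ℝ) : |∑ l, v l| ≤ (d + 1) * ‖v‖ := by
  calc |∑ l, v l| ≤ ∑ l, |v l| := Finset.abs_sum_le_sum_abs _ _
    _ ≤ ∑ _l : Fin d, ‖v‖ := Finset.sum_le_sum fun l _ => norm_le_pi_norm v l
    _ = d * ‖v‖ := by simp
    _ ≤ _ := by nlinarith [norm_nonneg v]

/-- In the bulk of the simplex the Stirling prefactor is of order `N ^ (-d / 2)`; outside of it,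
the exponential factor absorbs the polynomial loss. -/
lemma prefactor_le {d p : ℕ} (M : Fin p → Fin d → ℝ) (W : (Fin d → ℝ) → ℝ) {c δ : ℝ}
    (hc : 0 < c) (hδ : 0 < δ) (hM : ∀ j l, 2 * δ ≤ M j l)
    (hMlast : ∀ j, 2 * δ ≤ 1 - ∑ l, M j l)
    (hW : ∀ x : Fin d → ℝ, (∀ l, 0 ≤ x l) → ∑ l, x l ≤ 1 → ∃ j, c * ‖x - M j‖ ^ 2 ≤ W x) :
    ∃ C : ℝ, 0 < C ∧ ∀ N : ℕ, 1 ≤ N → ∀ σ : Fin N → Fin (d + 1), ∃ j,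
      Real.exp 1 * √N / (∏ l, √(max (cnt σ l) 1 : ℝ)) * Real.exp (-(N * W (hat σ) / 2))
        ≤ C / √N ^ d *
          Real.exp (-(c / (4 * (d + 1)) * (N * ∑ l, (hat σ l - M j l) ^ 2))) := by
  set κ : ℝ := c * (δ / (d + 1)) ^ 2 / 4 with hκ
  have hκ0 : 0 < κ := by positivity
  set C₁ : ℝ := Real.exp 1 / √δ ^ (d + 1) with hC1
  set C₂ : ℝ := Real.exp 1 * ((d + 1).factorial / κ ^ (d + 1)) with hC2
  have hC10 : 0 < C₁ := by positivity
  have hC20 : 0 < C₂ := by positivity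
  refine ⟨C₁ + C₂, by positivity, fun N hN σ => ?_⟩
  have hN1 : (1 : ℝ) ≤ N := by exact_mod_cast hN
  have hN0 : (0 : ℝ) < N := by linarith
  have hsN : 0 < √(N : ℝ) := Real.sqrt_pos.2 hN0
  have hsN1 : 1 ≤ √(N : ℝ) := Real.one_le_sqrt.2 hN1
  have hsq : √(N : ℝ) * √N = N := Real.mul_self_sqrt hN0.le
  obtain ⟨j, hj⟩ := hW (hat σ) (hat_nonneg σ) (sum_hat_le hN σ)
  refine ⟨j, ?_⟩
  have hquad : c / (4 * (d + 1)) * (N * ∑ l, (hat σ l - M j l) ^ 2)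
      ≤ N * (c * ‖hat σ - M j‖ ^ 2) / 4 := by
    have := sum_sq_le_norm_sq (hat σ - M j)
    simp only [Pi.sub_apply] at this
    calc c / (4 * (d + 1)) * (N * ∑ l, (hat σ l - M j l) ^ 2)
        ≤ c / (4 * (d + 1)) * (N * ((d + 1) * ‖hat σ - M j‖ ^ 2)) := by gcongr
      _ = _ := by field_simp
  have hNW : N * (c * ‖hat σ - M j‖ ^ 2) ≤ N * W (hat σ) := by gcongr
  have hNpos : 0 ≤ N * (c * ‖hat σ - M j‖ ^ 2) := by positivity
  set D : ℝ := Real.exp (-(c / (4 * (d + 1)) * (N * ∑ l, (hat σ l - M j l) ^ 2))) with hD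
  have hD0 : 0 < D := Real.exp_pos _
  by_cases hbulk : ∀ l, δ * N ≤ cnt σ l
  · have h1 : √δ ^ (d + 1) * √N ^ (d + 1) ≤ ∏ l, √(max (cnt σ l) 1 : ℝ) := by
      calc √δ ^ (d + 1) * √N ^ (d + 1) = ∏ _l : Fin (d + 1), √(δ * N) := by
            rw [Finset.prod_const, ← mul_pow, Real.sqrt_mul hδ.le]; simp
        _ ≤ _ := Finset.prod_le_prod (fun _ _ => Real.sqrt_nonneg _) fun l _ =>
            Real.sqrt_le_sqrt ((hbulk l).trans (le_max_left _ _))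
    have h2 : Real.exp 1 * √N / (∏ l, √(max (cnt σ l) 1 : ℝ)) ≤ C₁ / √N ^ d := by
      calc _ ≤ Real.exp 1 * √N / (√δ ^ (d + 1) * √N ^ (d + 1)) := by gcongr
        _ = C₁ / √N ^ d := by rw [hC1]; field_simp; ring
    have h3 : Real.exp (-(N * W (hat σ) / 2)) ≤ D := Real.exp_le_exp.2 (by linarith)
    calc _ ≤ C₁ / √N ^ d * D := by gcongr
      _ ≤ _ := by gcongr; linarith
  · push Not at hbulk
    obtain ⟨l, hl⟩ := hbulk
    have hfar : δ / (d + 1) ≤ ‖hat σ - M j‖ := by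
      have hdiv : (cnt σ l : ℝ) / N < δ := by rw [div_lt_iff₀ hN0]; exact hl
      refine Fin.lastCases (motive := fun l => (cnt σ l : ℝ) / N < δ → _) ?_ ?_ l hdiv
      · intro h
        rw [← one_sub_sum_hat hN] at h
        have h1 := abs_sum_le_norm (hat σ - M j)
        have h2 := hMlast j
        simp only [Pi.sub_apply, Finset.sum_sub_distrib] at h1
        rw [div_le_iff₀ (by positivity)]
        have := le_abs_self (∑ l, hat σ l - ∑ l, M j l)
        linarith
      · intro i h
        have h1 := norm_le_pi_norm (hat σ - M j) i
        simp only [Pi.sub_apply, Real.norm_eq_abs] at h1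
        have h2 := neg_abs_le (hat σ i - M j i)
        have h3 := hM j i
        have h4 : hat σ i < δ := h
        have h5 : δ / (d + 1) ≤ δ := div_le_self hδ.le (by linarith [(Nat.cast_nonneg d : (0 : ℝ) ≤ d)])
        linarith
    have hκle : κ * N ≤ N * (c * ‖hat σ - M j‖ ^ 2) / 4 := by
      have : (δ / (d + 1)) ^ 2 ≤ ‖hat σ - M j‖ ^ 2 := by gcongr
      calc κ * N = N * (c * (δ / (d + 1)) ^ 2) / 4 := by rw [hκ]; ring
        _ ≤ _ := by gcongr
    have h1 : (1 : ℝ) ≤ ∏ l, √(max (cnt σ l) 1 : ℝ) := by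
      have := Finset.prod_le_prod (s := Finset.univ) (f := fun _ : Fin (d + 1) => (1 : ℝ))
        (g := fun l => √(max (cnt σ l) 1 : ℝ)) (fun _ _ => zero_le_one) fun l _ =>
        Real.one_le_sqrt.2 (le_max_right _ _)
      simpa using this
    have h2 : Real.exp 1 * √N / (∏ l, √(max (cnt σ l) 1 : ℝ)) ≤ Real.exp 1 * √N :=
      div_le_self (by positivity) h1
    have h3 : Real.exp (-(N * W (hat σ) / 2)) ≤ Real.exp (-(κ * N)) * D := by
      rw [hD, ← Real.exp_add]
      exact Real.exp_le_exp.2 (by linarith)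
    have h4 : √N * Real.exp (-(κ * N)) ≤ (d + 1).factorial / κ ^ (d + 1) / √N ^ d := by
      have h5 := Real.pow_div_factorial_le_exp (κ * N) (by positivity) (d + 1)
      rw [div_le_iff₀ (by positivity), mul_pow] at h5
      have h6 : √(N : ℝ) ^ (d + 1) ≤ (N : ℝ) ^ (d + 1) := by
        gcongr
        nlinarith
      rw [Real.exp_neg, ← div_eq_mul_inv, div_div, div_le_div_iff₀ (by positivity) (by positivity)]
      calc √(N : ℝ) * (κ ^ (d + 1) * √N ^ d) = κ ^ (d + 1) * √N ^ (d + 1) := by ring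
        _ ≤ κ ^ (d + 1) * N ^ (d + 1) := by gcongr
        _ ≤ _ := by linarith
    calc _ ≤ Real.exp 1 * √N * (Real.exp (-(κ * N)) * D) := by gcongr
      _ = Real.exp 1 * (√N * Real.exp (-(κ * N))) * D := by ring
      _ ≤ Real.exp 1 * ((d + 1).factorial / κ ^ (d + 1) / √N ^ d) * D := by gcongr
      _ = C₂ / √N ^ d * D := by rw [hC2]; ring
      _ ≤ _ := by gcongr; linarith

/-- The vector of the first `d` counts, as an element of a finite grid. -/
def cntVec {N d : ℕ} (σ : Fin N → Fin (d + 1)) : Fin d → Fin (N + 1) :=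
  fun l => ⟨cnt σ l.castSucc, Nat.lt_succ_of_le (cnt_le σ _)⟩

lemma cnt_eq_of_cntVec_eq {N d : ℕ} {σ τ : Fin N → Fin (d + 1)} (h : cntVec σ = cntVec τ) :
    ∀ l, cnt σ l = cnt τ l := by
  have hc : ∀ i : Fin d, cnt σ i.castSucc = cnt τ i.castSucc := fun i =>
    congrArg Fin.val (congrFun h i)
  intro l
  refine Fin.lastCases ?_ hc l
  have h1 := sum_cnt σ
  have h2 := sum_cnt τ
  rw [Fin.sum_univ_castSucc] at h1 h2
  simp only [hc] at h1
  omega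

/-- The Laplace bound: if `W` grows at least quadratically away from the points `M j`, then the
sum over all configurations of `exp (-N (ent + W / 2))`, evaluated at the empirical measure, is
bounded in `N`. -/
lemma laplace_bound {d p : ℕ} (M : Fin p → Fin d → ℝ) (W : (Fin d → ℝ) → ℝ) {c δ : ℝ}
    (hc : 0 < c) (hδ : 0 < δ) (hM : ∀ j l, 2 * δ ≤ M j l)
    (hMlast : ∀ j, 2 * δ ≤ 1 - ∑ l, M j l)
    (hW : ∀ x : Fin d → ℝ, (∀ l, 0 ≤ x l) → ∑ l, x l ≤ 1 → ∃ j, c * ‖x - M j‖ ^ 2 ≤ W x) :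
    ∃ C : ℝ, 0 < C ∧ ∀ N : ℕ, 1 ≤ N →
      ∑ σ : Fin N → Fin (d + 1), Real.exp (∑ l, (cnt σ l : ℝ) * Real.log ((cnt σ l : ℝ) / N)) *
        Real.exp (-(N * W (hat σ) / 2)) ≤ C := by
  obtain ⟨C₀, hC₀, hpre⟩ := prefactor_le M W hc hδ hM hMlast hW
  obtain ⟨C₁, hC₁, hgauss⟩ := gauss_sum_pi (c := c / (4 * (d + 1))) (by positivity) d
  refine ⟨C₀ * (p * C₁) + 1, by positivity, fun N hN => ?_⟩
  have hN0 : (0 : ℝ) < N := by exact_mod_cast hN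
  have hsN : 0 < √(N : ℝ) := Real.sqrt_pos.2 hN0
  rw [← Finset.sum_fiberwise Finset.univ cntVec]
  set D : Fin p → (Fin d → Fin (N + 1)) → ℝ := fun j y =>
    Real.exp (-(c / (4 * (d + 1)) * (N * ∑ l, (((y l : ℕ) : ℝ) / N - M j l) ^ 2))) with hD
  have hfib : ∀ y : Fin d → Fin (N + 1),
      ∑ σ : Fin N → Fin (d + 1) with cntVec σ = y,
        Real.exp (∑ l, (cnt σ l : ℝ) * Real.log ((cnt σ l : ℝ) / N)) *
        Real.exp (-(N * W (hat σ) / 2)) ≤ C₀ / √N ^ d * ∑ j, D j y := by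
    intro y
    have hDnn : 0 ≤ C₀ / √N ^ d * ∑ j, D j y :=
      mul_nonneg (by positivity) (Finset.sum_nonneg fun j _ => (Real.exp_pos _).le)
    rcases (Finset.univ.filter fun σ : Fin N → Fin (d + 1) => cntVec σ = y).eq_empty_or_nonempty
      with he | ⟨σ₀, hσ₀⟩
    · rw [he]; simpa using hDnn
    · simp only [Finset.mem_filter, Finset.mem_univ, true_and] at hσ₀
      have hconst : ∀ σ ∈ Finset.univ.filter (fun σ : Fin N → Fin (d + 1) => cntVec σ = y),
          Real.exp (∑ l, (cnt σ l : ℝ) * Real.log ((cnt σ l : ℝ) / N)) *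
          Real.exp (-(N * W (hat σ) / 2)) =
          Real.exp (∑ l, (cnt σ₀ l : ℝ) * Real.log ((cnt σ₀ l : ℝ) / N)) *
          Real.exp (-(N * W (hat σ₀) / 2)) := by
        intro σ hσ
        simp only [Finset.mem_filter, Finset.mem_univ, true_and] at hσ
        have hcc := cnt_eq_of_cntVec_eq (hσ.trans hσ₀.symm)
        have hh : hat σ = hat σ₀ := by funext l; simp [hat, hcc]
        rw [hh]
        simp only [hcc]
      rw [Finset.sum_congr rfl hconst, Finset.sum_const, nsmul_eq_mul, ← mul_assoc]
      obtain ⟨j, hj⟩ := hpre N hN σ₀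
      have hle : ((Finset.univ.filter fun σ : Fin N → Fin (d + 1) => cntVec σ = y).card : ℝ) ≤
          ((Finset.univ.filter
            fun σ : Fin N → Fin (d + 1) => ∀ l, cnt σ l = cnt σ₀ l).card : ℝ) := by
        refine Nat.cast_le.2 (Finset.card_le_card fun σ hσ => ?_)
        simp only [Finset.mem_filter, Finset.mem_univ, true_and] at hσ ⊢
        exact cnt_eq_of_cntVec_eq (hσ.trans hσ₀.symm)
      have hy : Real.exp (-(c / (4 * (d + 1)) * (N * ∑ l, (hat σ₀ l - M j l) ^ 2))) = D j y := by
        rw [hD, ← hσ₀]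
        rfl
      calc _ ≤ ((Finset.univ.filter
              fun σ : Fin N → Fin (d + 1) => ∀ l, cnt σ l = cnt σ₀ l).card : ℝ) *
            Real.exp (∑ l, (cnt σ₀ l : ℝ) * Real.log ((cnt σ₀ l : ℝ) / N)) *
            Real.exp (-(N * W (hat σ₀) / 2)) := by gcongr
        _ ≤ Real.exp 1 * √N / (∏ l, √(max (cnt σ₀ l) 1 : ℝ)) *
            Real.exp (-(N * W (hat σ₀) / 2)) := by
            gcongr
            exact card_mul_exp_le hN σ₀
        _ ≤ C₀ / √N ^ d * D j y := by rw [← hy]; exact hj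
        _ ≤ C₀ / √N ^ d * ∑ j, D j y := by
            gcongr
            exact Finset.single_le_sum (f := fun j => D j y)
              (fun j _ => (Real.exp_pos _).le) (Finset.mem_univ j)
  have hMnn : ∀ j l, 0 ≤ M j l := fun j l => by linarith [hM j l]
  calc _ ≤ ∑ y : Fin d → Fin (N + 1), C₀ / √N ^ d * ∑ j, D j y :=
        Finset.sum_le_sum fun y _ => hfib y
    _ = C₀ / √N ^ d * ∑ j, ∑ y, D j y := by rw [← Finset.mul_sum, Finset.sum_comm]
    _ ≤ C₀ / √N ^ d * ∑ _j : Fin p, C₁ * √N ^ d := by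
        gcongr with j
        exact hgauss N hN (M j) (hMnn j)
    _ = C₀ * (p * C₁) := by
        rw [Finset.sum_const, Finset.card_univ, Fintype.card_fin, nsmul_eq_mul]
        field_simp
    _ ≤ _ := by linarith

end Master

/-! ### Second order expansions and relative entropy on the simplex -/

section Analysis

/-- The point of the simplex whose first `d` coordinates are `x`. -/
def full {d : ℕ} (x : Fin d → ℝ) : Fin (d + 1) → ℝ := Fin.snoc x (1 - ∑ k, x k)

@[simp] lemma full_castSucc {d : ℕ} (x : Fin d → ℝ) (l : Fin d) : full x l.castSucc = x l := by
  simp [full]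

@[simp] lemma full_last {d : ℕ} (x : Fin d → ℝ) : full x (Fin.last d) = 1 - ∑ k, x k := by
  simp [full]

lemma sum_full {d : ℕ} (x : Fin d → ℝ) : ∑ l, full x l = 1 := by
  rw [Fin.sum_univ_castSucc]; simp

/-- Second order Taylor expansion at a critical point. -/
lemma taylor_two {E : Type*} [NormedAddCommGroup E] [NormedSpace ℝ E] {f : E → ℝ} {a : E}
    (hf : ContDiffAt ℝ 2 f a) (h0 : fderiv ℝ f a = 0) {ε : ℝ} (hε : 0 < ε) :
    ∃ r > 0, ∀ x, ‖x - a‖ < r →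
      |f x - f a - 1 / 2 * fderiv ℝ (fderiv ℝ f) a (x - a) (x - a)| ≤ ε * ‖x - a‖ ^ 2 := by
  have hd : DifferentiableAt ℝ (fderiv ℝ f) a :=
    (hf.fderiv_right (m := 1) (by norm_num)).differentiableAt (by norm_num)
  have h1 := hd.hasFDerivAt.isLittleO.def hε
  have h2 : ∀ᶠ x in nhds a, DifferentiableAt ℝ f x := by
    have : ∀ᶠ x in nhds a, ContDiffAt ℝ 2 f x := hf.eventually (by simp)
    exact this.mono fun x hx => hx.differentiableAt (by norm_num)
  obtain ⟨r, hr, hball⟩ := Metric.eventually_nhds_iff_ball.1 (h1.and h2)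
  refine ⟨r, hr, fun x hx => ?_⟩
  set v := x - a with hv
  set D := fderiv ℝ (fderiv ℝ f) a with hD
  have hmem : ∀ t ∈ Set.Icc (0 : ℝ) 1, a + t • v ∈ Metric.ball a r := by
    intro t ht
    rw [Metric.mem_ball, dist_eq_norm, add_sub_cancel_left, norm_smul, Real.norm_eq_abs,
      abs_of_nonneg ht.1]
    exact lt_of_le_of_lt (mul_le_of_le_one_left (norm_nonneg _) ht.2) hx
  have hder : ∀ t ∈ Set.Icc (0 : ℝ) 1,
      HasDerivWithinAt (fun t : ℝ => f (a + t • v) - t ^ 2 / 2 * D v v)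
        (fderiv ℝ f (a + t • v) v - t * D v v) (Set.Icc 0 1) t := by
    intro t ht
    have e1 : HasDerivAt (fun t : ℝ => a + t • v) v t := by
      simpa using ((hasDerivAt_id t).smul_const v).const_add a
    have e2 := ((hball _ (hmem t ht)).2.hasFDerivAt.comp_hasDerivAt t e1)
    have e3 : HasDerivAt (fun t : ℝ => t ^ 2 / 2 * D v v) (t * D v v) t := by
      have := ((hasDerivAt_pow 2 t).div_const 2).mul_const (D v v)
      refine this.congr_deriv ?_
      norm_num
    exact (e2.sub e3).hasDerivWithinAt
  have hbound : ∀ t ∈ Set.Ico (0 : ℝ) 1,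
      ‖fderiv ℝ f (a + t • v) v - t * D v v‖ ≤ ε * ‖v‖ ^ 2 := by
    intro t ht
    have ht' : t ∈ Set.Icc (0 : ℝ) 1 := ⟨ht.1, ht.2.le⟩
    have e := (hball _ (hmem t ht')).1
    rw [h0, sub_zero, add_sub_cancel_left, norm_smul, Real.norm_eq_abs, abs_of_nonneg ht.1] at e
    have e1 : fderiv ℝ f (a + t • v) v - t * D v v
        = (fderiv ℝ f (a + t • v) - D (t • v)) v := by simp
    rw [e1]
    calc _ ≤ ‖fderiv ℝ f (a + t • v) - D (t • v)‖ * ‖v‖ := ContinuousLinearMap.le_opNorm _ _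
      _ ≤ ε * (t * ‖v‖) * ‖v‖ := by gcongr
      _ = t * (ε * ‖v‖ ^ 2) := by ring
      _ ≤ 1 * (ε * ‖v‖ ^ 2) := by gcongr; exact ht.2.le
      _ = _ := one_mul _
  have := norm_image_sub_le_of_norm_deriv_le_segment' hder hbound 1 (by simp)
  simp only [one_smul, zero_smul, add_zero, Real.norm_eq_abs] at this
  have hxa : a + v = x := by simp [hv]
  rw [hxa] at this
  calc _ = |f x - 1 ^ 2 / 2 * D v v - (f a - 0 ^ 2 / 2 * D v v)| := by congr 1; ring
    _ ≤ _ := by linarith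

lemma hess_apply {d : ℕ} {G : (Fin d → ℝ) → ℝ} {a : Fin d → ℝ} (hf : ContDiffAt ℝ 2 G a)
    {H : Matrix (Fin d) (Fin d) ℝ}
    (hH : ∀ k l, H k l = -(fderiv ℝ (fun x => fderiv ℝ G x (Pi.single l 1)) a) (Pi.single k 1))
    (v : Fin d → ℝ) : fderiv ℝ (fderiv ℝ G) a v v = -∑ k, ∑ l, v k * v l * H k l := by
  have hd : DifferentiableAt ℝ (fderiv ℝ G) a :=
    (hf.fderiv_right (m := 1) (by norm_num)).differentiableAt (by norm_num)
  have h1 : ∀ k l, H k l = -(fderiv ℝ (fderiv ℝ G) a (Pi.single k 1) (Pi.single l 1)) := by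
    intro k l
    rw [hH k l, fderiv_clm_apply hd (differentiableAt_const _)]
    simp
  have hv : v = ∑ k, v k • (Pi.single k (1 : ℝ) : Fin d → ℝ) := by
    funext i
    simp [Finset.sum_apply, Pi.single_apply]
  conv_lhs => rw [hv]
  simp only [map_sum, map_smul, sum_apply, smul_apply,
    h1, smul_eq_mul, ← Finset.sum_neg_distrib, Finset.mul_sum]
  rw [Finset.sum_comm]
  refine Finset.sum_congr rfl fun k _ => Finset.sum_congr rfl fun l _ => by ring

/-- A continuous positive `2`-homogeneous function dominates a multiple of the squared norm. -/
lemma quad_coercive {d : ℕ} {Q : (Fin d → ℝ) → ℝ} (hc : Continuous Q)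
    (hh : ∀ (t : ℝ) v, Q (t • v) = t ^ 2 * Q v) (hpos : ∀ v, v ≠ 0 → 0 < Q v) :
    ∃ c > 0, ∀ v, c * ‖v‖ ^ 2 ≤ Q v := by
  have hQ0 : Q 0 = 0 := by simpa using hh 0 0
  rcases (Metric.sphere (0 : Fin d → ℝ) 1).eq_empty_or_nonempty with he | hne
  · refine ⟨1, one_pos, fun v => ?_⟩
    by_cases hv : v = 0
    · simp [hv, hQ0]
    · exfalso
      have : ‖v‖⁻¹ • v ∈ Metric.sphere (0 : Fin d → ℝ) 1 := by
        simp [norm_smul, norm_ne_zero_iff.2 hv]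
      rw [he] at this
      exact this
  · obtain ⟨z, hz, hmin⟩ := (isCompact_sphere (0 : Fin d → ℝ) 1).exists_isMinOn hne
      hc.continuousOn
    have hz0 : z ≠ 0 := by
      rintro rfl
      simp at hz
    refine ⟨Q z, hpos z hz0, fun v => ?_⟩
    by_cases hv : v = 0
    · simp [hv, hQ0]
    · have hn : ‖v‖ ≠ 0 := norm_ne_zero_iff.2 hv
      have hs : ‖v‖⁻¹ • v ∈ Metric.sphere (0 : Fin d → ℝ) 1 := by
        simp [norm_smul, hn]
      have h1 : Q z ≤ Q (‖v‖⁻¹ • v) := hmin hs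
      rw [hh, inv_pow, inv_mul_eq_div, le_div_iff₀ (by positivity)] at h1
      exact h1

/-- Near `0`, the function `(1 + u) log (1 + u) - u` is at least `u ^ 2 / 2` up to a factor close
to `1`. -/
lemma entropy_scalar {u ε : ℝ} (hu : -1 < u) (huε : u ≤ 2 * ε) (hε : 0 ≤ ε) :
    (1 - ε) * u ^ 2 / 2 ≤ (1 + u) * Real.log (1 + u) - u := by
  rcases le_total 0 u with h | h
  · have h1 := Real.le_log_one_add_of_nonneg h
    have h2 : (1 + u) * (2 * u / (u + 2)) ≤ (1 + u) * Real.log (1 + u) := by gcongr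
    have h3 : (1 + u) * (2 * u / (u + 2)) - u = u ^ 2 / (u + 2) := by field_simp; ring
    have h4 : (1 - ε) * u ^ 2 / 2 ≤ u ^ 2 / (u + 2) := by
      rw [div_le_div_iff₀ (by norm_num) (by linarith)]
      have : (1 - ε) * (u + 2) ≤ 2 := by nlinarith
      nlinarith [sq_nonneg u]
    linarith
  · have hy : 0 < 1 + u := by linarith
    have hs : 0 ≤ -Real.log (1 + u) := by
      have := Real.log_nonpos hy.le (by linarith)
      linarith
    have h1 := Real.self_le_sinh_iff.2 hs
    rw [Real.sinh_eq, neg_neg, Real.exp_neg, Real.exp_log hy] at h1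
    have h2 : (1 + u) * (-Real.log (1 + u)) ≤ (1 + u) * (((1 + u)⁻¹ - (1 + u)) / 2) := by gcongr
    have h3 : (1 + u) * (((1 + u)⁻¹ - (1 + u)) / 2) = (1 - (1 + u) ^ 2) / 2 := by
      field_simp
    nlinarith [sq_nonneg u, mul_nonneg hε (sq_nonneg u)]

lemma kl_scalar_lower {t m ε : ℝ} (ht : 0 < t) (hm : 0 < m) (h : t - m ≤ 2 * ε * m)
    (hε : 0 ≤ ε) :
    (1 - ε) * ((t - m) ^ 2 / m) / 2 ≤ t * Real.log t - t * Real.log m - (t - m) := by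
  have hu : -1 < (t - m) / m := by rw [lt_div_iff₀ hm]; linarith
  have hu2 : (t - m) / m ≤ 2 * ε := by rw [div_le_iff₀ hm]; linarith
  have h1 := entropy_scalar hu hu2 hε
  have h2 : 1 + (t - m) / m = t / m := by field_simp; ring
  rw [h2, Real.log_div ht.ne' hm.ne'] at h1
  have h3 := mul_le_mul_of_nonneg_left h1 hm.le
  calc _ = m * ((1 - ε) * ((t - m) / m) ^ 2 / 2) := by field_simp
    _ ≤ _ := h3
    _ = _ := by field_simp

lemma kl_scalar_upper {t m : ℝ} (ht : 0 ≤ t) (hm : 0 < m) :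
    t * Real.log t - t * Real.log m - (t - m) ≤ (t - m) ^ 2 / m := by
  rcases ht.eq_or_lt with rfl | ht
  · have : (0 - m) ^ 2 / m = m := by field_simp; simp
    rw [this]; simp
  · have h1 := Real.log_le_sub_one_of_pos (div_pos ht hm)
    rw [Real.log_div ht.ne' hm.ne'] at h1
    have h2 := mul_le_mul_of_nonneg_left h1 ht.le
    have h3 : (t - m) ^ 2 / m = t * (t / m - 1) - (t - m) := by field_simp
    rw [h3]
    linarith

/-- The `χ²` quadratic form of a point of the simplex with first coordinates `M`: the Hessian at
`M` of the relative entropy with respect to `M`, and the inverse of `diag M - M Mᵀ`. -/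
noncomputable def chi {d : ℕ} (M v : Fin d → ℝ) : ℝ :=
  ∑ l, v l ^ 2 / M l + (∑ l, v l) ^ 2 / (1 - ∑ l, M l)

/-- Relative entropy of the simplex point `full x` with respect to `full M`. -/
noncomputable def kl {d : ℕ} (x M : Fin d → ℝ) : ℝ :=
  ∑ l, (full x l * Real.log (full x l) - full x l * Real.log (full M l))

lemma kl_eq {d : ℕ} (x M : Fin d → ℝ) :
    kl x M = ∑ l, (full x l * Real.log (full x l) - full x l * Real.log (full M l)
      - (full x l - full M l)) := by
  rw [Finset.sum_sub_distrib (g := fun l => full x l - full M l), Finset.sum_sub_distrib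
    (f := full x) (g := full M), sum_full, sum_full, kl]
  ring

lemma chi_eq {d : ℕ} (x M : Fin d → ℝ) :
    chi M (x - M) = ∑ l, (full x l - full M l) ^ 2 / full M l := by
  rw [Fin.sum_univ_castSucc, chi]
  simp only [full_castSucc, full_last, Pi.sub_apply, Finset.sum_sub_distrib]
  congr 2
  ring

lemma chi_le {d : ℕ} {M : Fin d → ℝ} {δ : ℝ} (hδ : 0 < δ) (hM : ∀ l, 2 * δ ≤ full M l)
    (v : Fin d → ℝ) : chi M v ≤ (d + 1 + (d + 1) ^ 2) / (2 * δ) * ‖v‖ ^ 2 := by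
  have h1 : ∑ l, v l ^ 2 / M l ≤ (d + 1) * ‖v‖ ^ 2 / (2 * δ) := by
    calc _ ≤ ∑ l, v l ^ 2 / (2 * δ) := by
          gcongr with l
          simpa using hM l.castSucc
      _ = (∑ l, v l ^ 2) / (2 * δ) := by rw [Finset.sum_div]
      _ ≤ _ := by
          gcongr
          exact sum_sq_le_norm_sq v
  have h2 : (∑ l, v l) ^ 2 / (1 - ∑ l, M l) ≤ ((d + 1) * ‖v‖) ^ 2 / (2 * δ) := by
    have := hM (Fin.last d)
    rw [full_last] at this
    rw [← sq_abs]
    gcongr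
    exact abs_sum_le_norm v
  calc chi M v ≤ (d + 1) * ‖v‖ ^ 2 / (2 * δ) + ((d + 1) * ‖v‖) ^ 2 / (2 * δ) := add_le_add h1 h2
    _ = _ := by ring

lemma kl_le {d : ℕ} {x M : Fin d → ℝ} {δ : ℝ} (hδ : 0 < δ) (hM : ∀ l, 2 * δ ≤ full M l)
    (hx : ∀ l, 0 ≤ full x l) :
    kl x M ≤ (d + 1 + (d + 1) ^ 2) / (2 * δ) * ‖x - M‖ ^ 2 := by
  refine le_trans ?_ (chi_le hδ hM (x - M))
  rw [kl_eq, chi_eq]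
  exact Finset.sum_le_sum fun l _ => kl_scalar_upper (hx l) (by linarith [hM l])

lemma abs_full_sub_le {d : ℕ} (x M : Fin d → ℝ) (l : Fin (d + 1)) :
    |full x l - full M l| ≤ (d + 1) * ‖x - M‖ := by
  refine Fin.lastCases ?_ (fun i => ?_) l
  · have := abs_sum_le_norm (x - M)
    simp only [Pi.sub_apply, Finset.sum_sub_distrib] at this
    rw [full_last, full_last, abs_sub_comm]
    calc _ = |∑ l, x l - ∑ l, M l| := by congr 1; ring
      _ ≤ _ := this
  · have := norm_le_pi_norm (x - M) i
    simp only [Pi.sub_apply, Real.norm_eq_abs] at this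
    rw [full_castSucc, full_castSucc]
    nlinarith [norm_nonneg (x - M), (Nat.cast_nonneg d : (0 : ℝ) ≤ d)]

/-- Local strict positivity of `G - G(M) + KL(· | M)`, from the comparison of the Hessians. -/
lemma psi_lower {d : ℕ} {G : (Fin d → ℝ) → ℝ} {M : Fin d → ℝ} {δ : ℝ} (hδ : 0 < δ)
    (hM : ∀ l, 2 * δ ≤ full M l) {q : (Fin d → ℝ) → ℝ} (hqc : Continuous q)
    (hqh : ∀ (t : ℝ) v, q (t • v) = t ^ 2 * q v) (hq : ∀ v, v ≠ 0 → q v < chi M v)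
    (hT : ∀ ε > 0, ∃ r > 0, ∀ x, ‖x - M‖ < r →
      |G x - G M + 1 / 2 * q (x - M)| ≤ ε * ‖x - M‖ ^ 2) :
    ∃ η > 0, ∃ r > 0, ∀ x, ‖x - M‖ < r → η * ‖x - M‖ ^ 2 ≤ G x - G M + kl x M := by
  obtain ⟨c, hc, hcoer⟩ := quad_coercive (Q := fun v => chi M v - q v)
    (by unfold chi; fun_prop)
    (by
      intro t v
      have : chi M (t • v) = t ^ 2 * chi M v := by
        simp only [chi, Pi.smul_apply, smul_eq_mul, ← Finset.mul_sum, mul_pow, mul_add]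
        congr 1
        · rw [Finset.mul_sum]
          exact Finset.sum_congr rfl fun l _ => by ring
        · ring
      simp only [this, hqh]; ring)
    (fun v hv => by linarith [hq v hv])
  set K : ℝ := (d + 1 + (d + 1) ^ 2) / (2 * δ) with hK
  have hK0 : 0 < K := by positivity
  set ε : ℝ := c / (4 * K) with hε
  have hε0 : 0 < ε := by positivity
  obtain ⟨r, hr, hT'⟩ := hT (c / 8) (by positivity)
  refine ⟨c / 4, by positivity, min r (min (δ / (d + 1)) (2 * ε * δ / (d + 1))), by positivity,
    fun x hx => ?_⟩
  have hx1 : ‖x - M‖ < r := hx.trans_le (min_le_left _ _)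
  have hx2 : ‖x - M‖ < δ / (d + 1) :=
    hx.trans_le ((min_le_right _ _).trans (min_le_left _ _))
  have hx3 : ‖x - M‖ < 2 * ε * δ / (d + 1) :=
    hx.trans_le ((min_le_right _ _).trans (min_le_right _ _))
  rw [lt_div_iff₀ (by positivity)] at hx2 hx3
  have hkl : (1 - ε) * chi M (x - M) / 2 ≤ kl x M := by
    rw [kl_eq, chi_eq, Finset.mul_sum, Finset.sum_div]
    refine Finset.sum_le_sum fun l _ => ?_
    have hb := abs_le.1 (abs_full_sub_le x M l)
    have hMl := hM l
    refine kl_scalar_lower (by linarith) (by linarith) ?_ hε0.le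
    nlinarith
  have h1 := (abs_le.1 (hT' x hx1)).1
  have h2 := hcoer (x - M)
  have h3 := chi_le hδ hM (x - M)
  have h4 : ε * chi M (x - M) ≤ c / 4 * ‖x - M‖ ^ 2 := by
    calc _ ≤ ε * (K * ‖x - M‖ ^ 2) := by gcongr
      _ = _ := by rw [hε]; field_simp
  linarith

end Analysis

/-! ### The free energy landscape -/

section Landscape

/-- Positive definiteness of `H⁻¹ - diag M + M Mᵀ` makes `H` strictly smaller, as a quadratic
form, than the inverse `chi M` of `diag M - M Mᵀ`. -/
lemma hess_lt_chi {d : ℕ} {M : Fin d → ℝ} (hM : ∀ l, 0 < M l) (hM1 : ∑ l, M l < 1)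
    {H S : Matrix (Fin d) (Fin d) ℝ} (hH : H.PosDef) (hS : S.PosDef)
    (hSH : S = H⁻¹ - Matrix.diagonal M + Matrix.of fun k l => M k * M l)
    (v : Fin d → ℝ) (hv : v ≠ 0) : ∑ k, ∑ l, v k * v l * H k l < chi M v := by
  set z := H.mulVec v with hz
  have hdet : IsUnit H.det := isUnit_iff_ne_zero.2 hH.det_pos.ne'
  have hzv : H⁻¹.mulVec z = v := by
    rw [hz, Matrix.mulVec_mulVec, Matrix.nonsing_inv_mul _ hdet, Matrix.one_mulVec]
  have hz0 : z ≠ 0 := by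
    rintro h0
    rw [h0, Matrix.mulVec_zero] at hzv
    exact hv hzv.symm
  have hq : ∑ k, ∑ l, v k * v l * H k l = ∑ l, z l * v l := by
    refine Finset.sum_congr rfl fun k _ => ?_
    rw [hz]
    simp only [Matrix.mulVec, dotProduct, Finset.sum_mul]
    exact Finset.sum_congr rfl fun l _ => by ring
  have h1 := hS.dotProduct_mulVec_pos hz0
  rw [hSH, Matrix.add_mulVec, Matrix.sub_mulVec, hzv, dotProduct_add, dotProduct_sub] at h1
  have e1 : star z ⬝ᵥ v = ∑ l, z l * v l := by simp [dotProduct]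
  have e2 : star z ⬝ᵥ (Matrix.diagonal M).mulVec z = ∑ l, M l * z l ^ 2 := by
    simp only [dotProduct, Matrix.mulVec_diagonal, Pi.star_apply, star_trivial]
    exact Finset.sum_congr rfl fun l _ => by ring
  have e3 : star z ⬝ᵥ (Matrix.of fun k l => M k * M l).mulVec z = (∑ l, M l * z l) ^ 2 := by
    simp only [dotProduct, Matrix.mulVec, Matrix.of_apply, Pi.star_apply, star_trivial]
    rw [sq, Finset.sum_mul]
    refine Finset.sum_congr rfl fun k _ => ?_
    rw [Finset.mul_sum, Finset.mul_sum]
    exact Finset.sum_congr rfl fun l _ => by ring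
  rw [e1, e2, e3] at h1
  have hP : 0 < 1 - ∑ l, M l := by linarith
  set t : ℝ := (∑ l, v l) / (1 - ∑ l, M l) with ht
  have hs : ∑ l, v l = t * (1 - ∑ l, M l) := by rw [ht]; field_simp
  -- `v / M + t` is the image of `v` under the inverse of `diag M - M Mᵀ`; Cauchy–Schwarz says that
  -- the latter form is nonnegative at its difference with `z = H v`
  have h2 : (∑ l, M l * (z l - (v l / M l + t))) ^ 2
      ≤ ∑ l, M l * (z l - (v l / M l + t)) ^ 2 := by
    have hcs := Finset.sum_sq_le_sum_mul_sum_of_sq_le_mul Finset.univ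
      (r := fun l => M l * (z l - (v l / M l + t))) (f := M)
      (g := fun l => M l * (z l - (v l / M l + t)) ^ 2) (fun l _ => (hM l).le)
      (fun l _ => mul_nonneg (hM l).le (sq_nonneg _)) (fun l _ => le_of_eq (by ring))
    refine hcs.trans ?_
    exact mul_le_of_le_one_left
      (Finset.sum_nonneg fun l _ => mul_nonneg (hM l).le (sq_nonneg _)) hM1.le
  have h3 : ∑ l, M l * (z l - (v l / M l + t))
      = ∑ l, M l * z l - t := by
    have : ∀ l, M l * (z l - (v l / M l + t)) = M l * z l - v l - t * M l := by
      intro l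
      have := (hM l).ne'
      field_simp
      ring
    simp only [this, Finset.sum_sub_distrib, ← Finset.mul_sum]
    rw [hs]; ring
  have h4 : ∑ l, M l * (z l - (v l / M l + t)) ^ 2
      = ∑ l, M l * z l ^ 2 - 2 * (∑ l, z l * v l + t * ∑ l, M l * z l)
        + (∑ l, v l ^ 2 / M l + 2 * t * ∑ l, v l + t ^ 2 * ∑ l, M l) := by
    simp only [Finset.mul_sum, ← Finset.sum_add_distrib, ← Finset.sum_sub_distrib]
    refine Finset.sum_congr rfl fun l _ => ?_
    have := (hM l).ne'
    field_simp
    ring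
  have h5 : chi M v = ∑ l, v l ^ 2 / M l + t ^ 2 * (1 - ∑ l, M l) := by
    rw [chi, hs]; field_simp
  rw [h3, h4, hs] at h2
  rw [hq, h5]
  nlinarith

lemma interior_pos {d : ℕ} (hd : 1 ≤ d) {x : Fin d → ℝ}
    (hx : x ∈ interior {x : Fin d → ℝ | (∀ k, 0 ≤ x k) ∧ ∑ k, x k ≤ 1}) (l : Fin (d + 1)) :
    0 < full x l := by
  obtain ⟨r, hr, hball⟩ := Metric.isOpen_iff.1 isOpen_interior x hx
  have key : ∀ (i : Fin d) (t : ℝ), |t| < r → (∀ k, 0 ≤ (x + Pi.single i t : Fin d → ℝ) k) ∧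
      ∑ k, (x + Pi.single i t : Fin d → ℝ) k ≤ 1 := by
    intro i t ht
    have hm : x + Pi.single i t ∈ Metric.ball x r := by
      rw [Metric.mem_ball, dist_eq_norm, add_sub_cancel_left, Pi.norm_single]
      exact ht
    have hm2 := interior_subset (hball hm)
    exact hm2
  have hr2 : |r / 2| < r := by rw [abs_of_pos (by positivity)]; linarith
  refine Fin.lastCases ?_ (fun i => ?_) l
  · have := (key ⟨0, hd⟩ (r / 2) hr2).2
    simp only [Pi.add_apply, Finset.sum_add_distrib, Finset.sum_pi_single', Finset.mem_univ,
      if_true] at this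
    rw [full_last]
    linarith
  · have := (key i (-(r / 2)) (by rwa [abs_neg])).1 i
    simp at this
    rw [full_castSucc]
    linarith

lemma contDiff_full {d : ℕ} : ContDiff ℝ 2 (full : (Fin d → ℝ) → Fin (d + 1) → ℝ) := by
  rw [contDiff_pi]
  intro l
  refine Fin.lastCases ?_ (fun i => ?_) l
  · simp only [full_last]; fun_prop
  · simp only [full_castSucc]; fun_prop

lemma full_mem {d : ℕ} {x : Fin d → ℝ} (h : (∀ k, 0 ≤ x k) ∧ ∑ k, x k ≤ 1) (l : Fin (d + 1)) :
    0 ≤ full x l := by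
  refine Fin.lastCases ?_ (fun i => ?_) l
  · rw [full_last]; linarith [h.2]
  · rw [full_castSucc]; exact h.1 i

lemma isCompact_simplex (d : ℕ) :
    IsCompact {x : Fin d → ℝ | (∀ k, 0 ≤ x k) ∧ ∑ k, x k ≤ 1} := by
  refine IsCompact.of_isClosed_subset (isCompact_Icc (a := (0 : Fin d → ℝ)) (b := 1)) ?_ ?_
  · have h1 : IsClosed {x : Fin d → ℝ | ∀ k, 0 ≤ x k} := by
      simp only [Set.ofPred_forall]
      exact isClosed_iInter fun k => isClosed_le continuous_const (continuous_apply k)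
    have h2 : IsClosed {x : Fin d → ℝ | ∑ k, x k ≤ 1} :=
      isClosed_le (by fun_prop) continuous_const
    exact h1.inter h2
  · intro x hx
    refine ⟨fun k => hx.1 k, fun k => ?_⟩
    exact (Finset.single_le_sum (fun i _ => hx.1 i) (Finset.mem_univ k)).trans hx.2

lemma norm_sub_le_one {d : ℕ} {x y : Fin d → ℝ} (hx : (∀ k, 0 ≤ x k) ∧ ∑ k, x k ≤ 1)
    (hy : (∀ k, 0 ≤ y k) ∧ ∑ k, y k ≤ 1) : ‖x - y‖ ≤ 1 := by
  have key : ∀ {x : Fin d → ℝ}, ((∀ k, 0 ≤ x k) ∧ ∑ k, x k ≤ 1) → ∀ k, x k ≤ 1 := fun hx k =>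
    (Finset.single_le_sum (fun i _ => hx.1 i) (Finset.mem_univ k)).trans hx.2
  refine (pi_norm_le_iff_of_nonneg zero_le_one).2 fun k => ?_
  rw [Pi.sub_apply, Real.norm_eq_abs, abs_le]
  constructor <;> linarith [hx.1 k, hy.1 k, key hx k, key hy k]

/-- The three facts on the free energy `G` used by the probabilistic part: the maximizers stay
away from the boundary, `G` has quadratic growth below its maximum, and near each maximizer
`G - G(M) + KL(· | M)` grows quadratically. The last one is where the positive
definiteness of the mixing covariance enters. -/
lemma landscape {d p : ℕ} (hd : 1 ≤ d) (hp : 1 ≤ p) {F : (Fin (d + 1) → ℝ) → ℝ}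
    (hF : ContDiffOn ℝ 2 F {m : Fin (d + 1) → ℝ | (∀ k, 0 ≤ m k) ∧ ∑ k, m k = 1})
    {G : (Fin d → ℝ) → ℝ}
    (hG : ∀ x, G x = F (full x) - ∑ l, full x l * Real.log (full x l))
    (M : Fin p → Fin d → ℝ)
    (hMint : ∀ j, M j ∈ interior {x : Fin d → ℝ | (∀ k, 0 ≤ x k) ∧ ∑ k, x k ≤ 1})
    (hMmax : ∀ j, ∀ x ∈ {x : Fin d → ℝ | (∀ k, 0 ≤ x k) ∧ ∑ k, x k ≤ 1}, G x ≤ G (M j))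
    (hMonly : ∀ x ∈ {x : Fin d → ℝ | (∀ k, 0 ≤ x k) ∧ ∑ k, x k ≤ 1},
      (∀ y ∈ {x : Fin d → ℝ | (∀ k, 0 ≤ x k) ∧ ∑ k, x k ≤ 1}, G y ≤ G x) → ∃ j, x = M j)
    (H : Fin p → Matrix (Fin d) (Fin d) ℝ)
    (hH : ∀ j k l, H j k l =
      -(fderiv ℝ (fun x => fderiv ℝ G x (Pi.single l 1)) (M j)) (Pi.single k 1))
    (hHpd : ∀ j, (H j).PosDef)
    (S : Fin p → Matrix (Fin d) (Fin d) ℝ)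
    (hS : ∀ j, S j = (H j)⁻¹ - Matrix.diagonal (M j) + Matrix.of fun k l => M j k * M j l)
    (hSpd : ∀ j, (S j).PosDef) :
    ∃ δ > 0, (∀ j l, 2 * δ ≤ full (M j) l) ∧
      (∃ c > 0, ∀ j₀, ∀ x : Fin d → ℝ, (∀ k, 0 ≤ x k) → ∑ k, x k ≤ 1 →
        ∃ j, c * ‖x - M j‖ ^ 2 ≤ G (M j₀) - G x) ∧
      ∀ j, ∃ η > 0, ∃ r > 0, ∀ x, ‖x - M j‖ < r →
        η * ‖x - M j‖ ^ 2 ≤ G x - G (M j) + kl x (M j) := by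
  set D := {x : Fin d → ℝ | (∀ k, 0 ≤ x k) ∧ ∑ k, x k ≤ 1} with hD
  have hMD : ∀ j, M j ∈ D := fun j => interior_subset (hMint j)
  have hpos : ∀ j l, 0 < full (M j) l := fun j l => interior_pos hd (hMint j) l
  have : Nonempty (Fin p) := ⟨⟨0, hp⟩⟩
  obtain ⟨δ, hδ, hMδ⟩ : ∃ δ > 0, ∀ j l, 2 * δ ≤ full (M j) l := by
    obtain ⟨jl, -, hjl⟩ := Finset.exists_min_image (Finset.univ : Finset (Fin p × Fin (d + 1)))
      (fun a => full (M a.1) a.2) Finset.univ_nonempty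
    refine ⟨full (M jl.1) jl.2 / 2, half_pos (hpos _ _), fun j l => ?_⟩
    have := hjl (j, l) (Finset.mem_univ _)
    linarith
  have hGeq : ∀ i j, G (M i) = G (M j) := fun i j =>
    le_antisymm (hMmax j _ (hMD i)) (hMmax i _ (hMD j))
  have hmaps : Set.MapsTo (full : (Fin d → ℝ) → _) D
      {m : Fin (d + 1) → ℝ | (∀ k, 0 ≤ m k) ∧ ∑ k, m k = 1} := fun x hx =>
    ⟨full_mem hx, sum_full x⟩
  have hFf : ContDiffOn ℝ 2 (fun x => F (full x)) D := hF.comp contDiff_full.contDiffOn hmaps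
  have hGfun : G = fun x => F (full x) - ∑ l, full x l * Real.log (full x l) := funext hG
  have hfl : ∀ l, ContDiff ℝ 2 (fun x : Fin d → ℝ => full x l) := fun l =>
    (contDiff_pi.1 contDiff_full) l
  have hGcont : ContinuousOn G D := by
    rw [hGfun]
    refine hFf.continuousOn.sub (Continuous.continuousOn ?_)
    refine continuous_finsetSum _ fun l _ => ?_
    exact Real.continuous_mul_log.comp (hfl l).continuous
  have hGd : ∀ j, ContDiffAt ℝ 2 G (M j) := by
    intro j
    rw [hGfun]
    refine (hFf.contDiffAt (mem_interior_iff_mem_nhds.1 (hMint j))).sub ?_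
    refine ContDiffAt.sum fun l _ => ?_
    exact (hfl l).contDiffAt.mul ((hfl l).contDiffAt.log (hpos j l).ne')
  have hcrit : ∀ j, fderiv ℝ G (M j) = 0 := by
    intro j
    refine IsLocalMax.fderiv_eq_zero ?_
    filter_upwards [mem_interior_iff_mem_nhds.1 (hMint j)] with x hx using hMmax j x hx
  set Q : Fin p → (Fin d → ℝ) → ℝ := fun j v => ∑ k, ∑ l, v k * v l * H j k l with hQ
  have hQc : ∀ j, Continuous (Q j) := fun j => by rw [hQ]; fun_prop
  have hQh : ∀ j (t : ℝ) v, Q j (t • v) = t ^ 2 * Q j v := by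
    intro j t v
    simp only [hQ, Finset.mul_sum, Pi.smul_apply, smul_eq_mul]
    exact Finset.sum_congr rfl fun k _ => Finset.sum_congr rfl fun l _ => by ring
  have hQpos : ∀ j v, v ≠ 0 → 0 < Q j v := by
    intro j v hv
    have := (hHpd j).dotProduct_mulVec_pos hv
    refine this.trans_eq ?_
    simp only [hQ, dotProduct, Matrix.mulVec, Pi.star_apply, star_trivial, Finset.mul_sum]
    exact Finset.sum_congr rfl fun k _ => Finset.sum_congr rfl fun l _ => by ring
  have hT : ∀ j, ∀ ε > 0, ∃ r > 0, ∀ x, ‖x - M j‖ < r →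
      |G x - G (M j) + 1 / 2 * Q j (x - M j)| ≤ ε * ‖x - M j‖ ^ 2 := by
    intro j ε hε
    obtain ⟨r, hr, h⟩ := taylor_two (hGd j) (hcrit j) hε
    refine ⟨r, hr, fun x hx => ?_⟩
    have := h x hx
    rw [hess_apply (hGd j) (hH j)] at this
    convert this using 2
    simp only [hQ]
    ring
  refine ⟨δ, hδ, hMδ, ?_, fun j => ?_⟩
  · have hloc : ∀ j, ∃ c > 0, ∃ r > 0, ∀ x, ‖x - M j‖ < r →
        c * ‖x - M j‖ ^ 2 ≤ G (M j) - G x := by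
      intro j
      obtain ⟨c, hc, hcoer⟩ := quad_coercive (hQc j) (hQh j) (hQpos j)
      obtain ⟨r, hr, h⟩ := hT j (c / 4) (by positivity)
      refine ⟨c / 4, by positivity, r, hr, fun x hx => ?_⟩
      have h1 := (abs_le.1 (h x hx)).2
      have h2 := hcoer (x - M j)
      linarith
    choose c hc r hr hcr using hloc
    -- away from the maximizers the gap `G* - G` is bounded below, by compactness
    have hfar : ∃ κ > 0, ∀ x ∈ D, (∀ j, r j ≤ ‖x - M j‖) → ∀ j, κ ≤ G (M j) - G x := by
      set K := D ∩ {x | ∀ j, r j ≤ ‖x - M j‖} with hK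
      have hKc : IsCompact K := by
        refine (isCompact_simplex d).inter_right ?_
        simp only [Set.ofPred_forall]
        exact isClosed_iInter fun j => isClosed_le continuous_const (by fun_prop)
      rcases K.eq_empty_or_nonempty with he | hne
      · refine ⟨1, one_pos, fun x hx hx2 => ?_⟩
        have : x ∈ K := ⟨hx, hx2⟩
        rw [he] at this
        exact this.elim
      · obtain ⟨z, hz, hmax⟩ := hKc.exists_isMaxOn hne (hGcont.mono Set.inter_subset_left)
        refine ⟨G (M ⟨0, hp⟩) - G z, ?_, fun x hx hx2 j => ?_⟩
        · by_contra hcon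
          have hzM : G (M ⟨0, hp⟩) ≤ G z := by linarith [not_lt.1 hcon]
          obtain ⟨j, hj⟩ := hMonly z hz.1 fun y hy => (hMmax _ y hy).trans hzM
          have := hz.2 j
          rw [hj, sub_self, norm_zero] at this
          exact absurd (hr j) (not_lt.2 this)
        · have : G x ≤ G z := hmax ⟨hx, hx2⟩
          rw [hGeq j ⟨0, hp⟩]
          linarith
    obtain ⟨κ, hκ, hfar⟩ := hfar
    obtain ⟨j₁, -, hj₁⟩ := Finset.exists_min_image (Finset.univ : Finset (Fin p)) c
      Finset.univ_nonempty
    refine ⟨min κ (c j₁), lt_min hκ (hc j₁), fun j₀ x hx hx1 => ?_⟩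
    by_cases hnear : ∃ j, ‖x - M j‖ < r j
    · obtain ⟨j, hj⟩ := hnear
      refine ⟨j, ?_⟩
      rw [hGeq j₀ j]
      refine le_trans ?_ (hcr j x hj)
      gcongr
      exact (min_le_right _ _).trans (hj₁ j (Finset.mem_univ _))
    · push Not at hnear
      refine ⟨j₀, ?_⟩
      refine le_trans ?_ (hfar x ⟨hx, hx1⟩ hnear j₀)
      have h1 := norm_sub_le_one ⟨hx, hx1⟩ (hMD j₀)
      calc _ ≤ κ * 1 ^ 2 := by gcongr; exact min_le_left _ _
        _ = κ := by ring
  · refine psi_lower hδ (hMδ j) (hQc j) (hQh j) ?_ (hT j)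
    refine hess_lt_chi (fun l => ?_) ?_ (hHpd j) (hSpd j) (hS j)
    · simpa using hpos j l.castSucc
    · simpa using hpos j (Fin.last d)

end Landscape

/-! ### Marginals, relative entropy and fluctuation events -/

section Marginals

/-- The marginal on the first `k` coordinates of a weight on configurations of length `N`. -/
def marg {N k q : ℕ} (h : k ≤ N) (f : (Fin N → Fin q) → ℝ) (τ : Fin k → Fin q) : ℝ :=
  ∑ σ : Fin N → Fin q, if ∀ i : Fin k, σ (Fin.castLE h i) = τ i then f σ else 0

variable {N k q : ℕ}

lemma sum_mul_marg (h : k ≤ N) (f : (Fin N → Fin q) → ℝ) (φ : (Fin k → Fin q) → ℝ) :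
    ∑ τ, φ τ * marg h f τ = ∑ σ, φ (fun i => σ (Fin.castLE h i)) * f σ := by
  simp only [marg, Finset.mul_sum]
  rw [Finset.sum_comm]
  refine Finset.sum_congr rfl fun σ _ => ?_
  rw [Finset.sum_eq_single (fun i => σ (Fin.castLE h i))]
  · simp
  · intro τ _ hτ
    rw [if_neg, mul_zero]
    exact fun hc => hτ (funext fun i => (hc i).symm)
  · simp

lemma sum_marg (h : k ≤ N) (f : (Fin N → Fin q) → ℝ) : ∑ τ, marg h f τ = ∑ σ, f σ := by
  simpa using sum_mul_marg h f fun _ => 1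

lemma marg_nonneg (h : k ≤ N) {f : (Fin N → Fin q) → ℝ} (hf : ∀ σ, 0 ≤ f σ) (τ : Fin k → Fin q) :
    0 ≤ marg h f τ :=
  Finset.sum_nonneg fun σ _ => by split_ifs <;> simp [hf]

lemma le_marg (h : k ≤ N) {f : (Fin N → Fin q) → ℝ} (hf : ∀ σ, 0 ≤ f σ) (σ : Fin N → Fin q) :
    f σ ≤ marg h f (fun i => σ (Fin.castLE h i)) := by
  have := Finset.single_le_sum (f := fun σ' : Fin N → Fin q =>
    if ∀ i : Fin k, σ' (Fin.castLE h i) = σ (Fin.castLE h i) then f σ' else 0)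
    (s := Finset.univ) (fun σ' _ => by split_ifs <;> simp [hf]) (Finset.mem_univ σ)
  simpa [marg] using this

/-- Data processing: passing to a marginal decreases the relative entropy. -/
lemma relEnt_marg_le (h : k ≤ N) {f g : (Fin N → Fin q) → ℝ} (hf : ∀ σ, 0 < f σ)
    (hg : ∀ σ, 0 < g σ) : relEnt (marg h f) (marg h g) ≤ relEnt f g := by
  unfold relEnt
  set R : (Fin k → Fin q) → ℝ := fun τ => marg h f τ / marg h g τ with hR
  have h1 : ∑ τ, marg h f τ * Real.log (marg h f τ / marg h g τ)
      = ∑ σ, Real.log (R fun i => σ (Fin.castLE h i)) * f σ := by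
    rw [← sum_mul_marg h f fun τ => Real.log (R τ)]
    exact Finset.sum_congr rfl fun τ _ => mul_comm _ _
  have h2 : ∑ σ, R (fun i => σ (Fin.castLE h i)) * g σ ≤ ∑ σ, f σ := by
    rw [← sum_mul_marg h g R, ← sum_marg h f]
    refine Finset.sum_le_sum fun τ _ => ?_
    rw [hR, div_mul_eq_mul_div, mul_div_assoc]
    exact mul_le_of_le_one_right (marg_nonneg h (fun σ => (hf σ).le) τ) (div_self_le_one _)
  -- `log s ≤ s - 1` at `s = R g / f`
  have h3 : ∀ σ, Real.log (R fun i => σ (Fin.castLE h i)) * f σ + f σ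
      - R (fun i => σ (Fin.castLE h i)) * g σ ≤ f σ * Real.log (f σ / g σ) := by
    intro σ
    have hA := (hf σ).trans_le (le_marg h (fun σ => (hf σ).le) σ)
    have hB := (hg σ).trans_le (le_marg h (fun σ => (hg σ).le) σ)
    have hRp : 0 < R fun i => σ (Fin.castLE h i) := div_pos hA hB
    set ρ := R fun i => σ (Fin.castLE h i)
    have h4 := Real.log_le_sub_one_of_pos (div_pos (mul_pos hRp (hg σ)) (hf σ))
    rw [Real.log_div (mul_pos hRp (hg σ)).ne' (hf σ).ne', Real.log_mul hRp.ne' (hg σ).ne'] at h4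
    rw [Real.log_div (hf σ).ne' (hg σ).ne']
    have h5 := mul_le_mul_of_nonneg_left h4 (hf σ).le
    have h6 : f σ * (ρ * g σ / f σ - 1) = ρ * g σ - f σ := by
      have := (hf σ).ne'
      field_simp
    rw [h6] at h5
    linarith
  have h7 := Finset.sum_le_sum fun σ (_ : σ ∈ Finset.univ) => h3 σ
  rw [Finset.sum_sub_distrib, Finset.sum_add_distrib] at h7
  rw [h1]
  linarith

open Classical in
/-- A lower bound on the relative entropy by testing against the event `E`: the variational
formula with the test function `log 2 · 1_E`. -/
lemma relEnt_ge {α : Type*} [Fintype α] {f g : α → ℝ} (hf : ∀ x, 0 ≤ f x) (hg : ∀ x, 0 < g x)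
    (hf1 : ∑ x, f x = 1) (hg1 : ∑ x, g x = 1) (E : α → Prop) :
    (∑ x with E x, f x) * Real.log 2 - ∑ x with E x, g x ≤ relEnt f g := by
  have key : ∀ x, f x - g x + (if E x then f x * Real.log 2 - g x else 0)
      ≤ f x * Real.log (f x / g x) := by
    intro x
    rcases (hf x).eq_or_lt with h0 | h0
    · rw [← h0]
      have := hg x
      split_ifs <;> simp <;> linarith
    · have hgx := hg x
      rw [Real.log_div h0.ne' hgx.ne']
      split_ifs with hE
      · have h1 := Real.log_le_sub_one_of_pos (div_pos (mul_pos two_pos hgx) h0)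
        rw [Real.log_div (by positivity) h0.ne', Real.log_mul two_ne_zero hgx.ne'] at h1
        have h2 := mul_le_mul_of_nonneg_left h1 h0.le
        have h3 : f x * (2 * g x / f x - 1) = 2 * g x - f x := by field_simp
        rw [h3] at h2
        linarith
      · have h1 := Real.log_le_sub_one_of_pos (div_pos hgx h0)
        rw [Real.log_div hgx.ne' h0.ne'] at h1
        have h2 := mul_le_mul_of_nonneg_left h1 h0.le
        have h3 : f x * (g x / f x - 1) = g x - f x := by field_simp
        rw [h3] at h2
        linarith
  have h := Finset.sum_le_sum fun x (_ : x ∈ Finset.univ) => key x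
  rw [Finset.sum_add_distrib, Finset.sum_sub_distrib, hf1, hg1, ← Finset.sum_filter,
    Finset.sum_sub_distrib, ← Finset.sum_mul] at h
  unfold relEnt
  linarith

lemma sum_append {r : ℕ} (φ : (Fin (k + r) → Fin q) → ℝ) :
    ∑ σ, φ σ = ∑ τ : Fin k → Fin q, ∑ τ' : Fin r → Fin q, φ (Fin.append τ τ') := by
  rw [← Fintype.sum_prod_type']
  exact (Equiv.sum_comp (Fin.appendEquiv k r) φ).symm

lemma pw_append {r : ℕ} (v : Fin q → ℝ) (τ : Fin k → Fin q) (τ' : Fin r → Fin q) :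
    pw v (Fin.append τ τ') = pw v τ * pw v τ' := by
  unfold pw; simp [Fin.prod_univ_add]

lemma cnt_append {r : ℕ} (τ : Fin k → Fin q) (τ' : Fin r → Fin q) (l : Fin q) :
    cnt (Fin.append τ τ') l = cnt τ l + cnt τ' l := by
  unfold cnt
  simp only [Finset.card_filter, Fin.sum_univ_add, Fin.append_left, Fin.append_right]

lemma append_castLE {r : ℕ} (τ : Fin k → Fin q) (τ' : Fin r → Fin q) (h : k ≤ k + r) (i : Fin k) :
    Fin.append τ τ' (Fin.castLE h i) = τ i :=
  Fin.append_left τ τ' i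

lemma marg_append {r : ℕ} (h : k ≤ k + r) (f : (Fin (k + r) → Fin q) → ℝ) (τ : Fin k → Fin q) :
    marg h f τ = ∑ τ' : Fin r → Fin q, f (Fin.append τ τ') := by
  rw [marg, sum_append, Finset.sum_eq_single τ]
  · simp
  · intro τ₁ _ hτ
    refine Finset.sum_eq_zero fun τ' _ => if_neg fun hc => hτ (funext fun i => ?_)
    rw [← hc i, append_castLE]
  · simp

lemma marg_pw (h : k ≤ N) {v : Fin q → ℝ} (h1 : ∑ l, v l = 1) (τ : Fin k → Fin q) :
    marg h (pw v) τ = pw v τ := by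
  obtain ⟨r, rfl⟩ := Nat.exists_eq_add_of_le h
  rw [marg_append]
  simp only [pw_append, ← Finset.mul_sum]
  rw [sum_pw_eq_one h1, mul_one]

lemma marg_mix {p : ℕ} (h : k ≤ N) (a : Fin p → ℝ) {v : Fin p → Fin q → ℝ}
    (h1 : ∀ j, ∑ l, v j l = 1) (τ : Fin k → Fin q) :
    marg h (fun σ => ∑ j, a j * pw (v j) σ) τ = ∑ j, a j * pw (v j) τ := by
  have : ∀ j, a j * pw (v j) τ = a j * marg h (pw (v j)) τ := fun j => by rw [marg_pw h (h1 j)]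
  simp only [this, marg, Finset.mul_sum]
  rw [Finset.sum_comm]
  refine Finset.sum_congr rfl fun σ _ => ?_
  split_ifs <;> simp

end Marginals

section Events
variable {k q : ℕ}

open Classical in
/-- Deviations of order `√k` have probability bounded below: tilt `m` by `t / √k` in the
direction `l₀ - l₁` and change measure. -/
lemma tilt_lower {m : Fin q → ℝ} {δ : ℝ} (hδ : 0 < δ) (hm : ∀ l, 2 * δ ≤ m l)
    (h1 : ∑ l, m l = 1) {l₀ l₁ : Fin q} (hl : l₀ ≠ l₁) {t ε : ℝ} (ht : 0 ≤ t)
    (hk : 1 ≤ k) (hkδ : t ≤ δ * √k) (hkε : t + 2 ≤ ε * √k) (E : (Fin k → Fin q) → Prop)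
    (hE : ∀ τ, (t - 2) * √k ≤ |(cnt τ l₀ : ℝ) - k * m l₀| →
      (∀ l, |(cnt τ l : ℝ) - k * m l| ≤ ε * k) → E τ) :
    9 / 16 * Real.exp (-(t ^ 2 / δ)) ≤ ∑ τ with E τ, pw m τ := by
  have hk0 : (0 : ℝ) < k := by exact_mod_cast hk
  have hs : 0 < √(k : ℝ) := Real.sqrt_pos.2 hk0
  have hss : √(k : ℝ) * √(k : ℝ) = k := Real.mul_self_sqrt hk0.le
  set e : Fin q → ℝ := fun l => (if l = l₀ then t / √k else 0) - (if l = l₁ then t / √k else 0)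
    with he
  have htk : 0 ≤ t / √(k : ℝ) := by positivity
  have htδ : t / √(k : ℝ) ≤ δ := by rwa [div_le_iff₀ hs]
  have hmpos : ∀ l, 0 < m l := fun l => by linarith [hm l]
  have he0 : ∑ l, e l = 0 := by simp [he, Finset.sum_sub_distrib]
  have heabs : ∀ l, |e l| ≤ t / √k := by
    intro l
    simp only [he]
    split_ifs <;> simp [abs_of_nonneg htk, htk]
  have hel₀ : e l₀ = t / √k := by simp [he, hl]
  have hmul : (k : ℝ) * (t / √k) = t * √k := by
    rw [mul_div_assoc', div_eq_iff hs.ne', mul_assoc, hss, mul_comm]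
  set u : Fin q → ℝ := fun l => m l + e l with hu
  have hu0 : ∀ l, 0 ≤ u l := fun l => by
    have := (abs_le.1 (heabs l)).1
    have := hm l
    simp only [hu]
    linarith
  have hu1 : ∑ l, u l = 1 := by simp only [hu, Finset.sum_add_distrib, h1, he0, add_zero]
  have hcheb := chebyshev hu0 hu1 k (s := 2 * √k) (by positivity)
  have h34 : 1 - (k : ℝ) / (2 * √k) ^ 2 = 3 / 4 := by
    rw [mul_pow, Real.sq_sqrt hk0.le]
    field_simp
    norm_num
  have hmass : 3 / 4 ≤ ∑ τ : Fin k → Fin q with E τ, pw u τ := by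
    rw [h34] at hcheb
    refine hcheb.trans (Finset.sum_le_sum_of_subset_of_nonneg ?_ fun τ _ _ => pw_nonneg hu0 τ)
    intro τ hτ
    rw [Finset.mem_filter] at hτ ⊢
    refine ⟨Finset.mem_univ _, hE τ ?_ fun l => ?_⟩
    · have h2 := abs_le.1 (hτ.2 l₀)
      have h3 : (k : ℝ) * u l₀ = k * m l₀ + t * √k := by simp only [hu, hel₀, mul_add, hmul]
      refine le_trans ?_ (le_abs_self _)
      linarith
    · have h2 := abs_le.1 (hτ.2 l)
      have h3 : (k : ℝ) * u l = k * m l + k * e l := by simp only [hu, mul_add]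
      have h4 := abs_le.1 (heabs l)
      have h5 : -(t * √k) ≤ k * e l := by
        rw [← hmul, ← mul_neg]; exact mul_le_mul_of_nonneg_left h4.1 hk0.le
      have h6 : k * e l ≤ t * √k := by
        rw [← hmul]; exact mul_le_mul_of_nonneg_left h4.2 hk0.le
      have h7 : (t + 2) * √k ≤ ε * k := by
        calc (t + 2) * √k ≤ ε * √k * √k := by gcongr
          _ = ε * k := by rw [mul_assoc, hss]
      rw [abs_le]
      constructor <;> linarith
  have hcm := change_of_measure (u := u) hmpos E
  have hsq : ∑ l, u l ^ 2 / m l ≤ 1 + t ^ 2 / δ / k := by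
    have h2 : ∀ l, u l ^ 2 / m l = m l + 2 * e l + e l ^ 2 / m l := by
      intro l
      have := (hmpos l).ne'
      simp only [hu]
      field_simp
      ring
    have h3 : ∀ l, e l ^ 2 / m l
        ≤ (if l = l₀ then t ^ 2 / k / (2 * δ) else 0)
          + (if l = l₁ then t ^ 2 / k / (2 * δ) else 0) := by
      intro l
      have h4 : e l ^ 2 = (if l = l₀ then t ^ 2 / k else 0) + (if l = l₁ then t ^ 2 / k else 0) := by
        have hsq' : (t / √(k : ℝ)) ^ 2 = t ^ 2 / k := by rw [div_pow, Real.sq_sqrt hk0.le]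
        simp only [he]
        split_ifs with ha hb
        · exact absurd (ha.symm.trans hb) hl
        · simp [hsq']
        · simp [hsq']
        · simp
      calc e l ^ 2 / m l ≤ e l ^ 2 / (2 * δ) := by gcongr; exact hm l
        _ = _ := by rw [h4, add_div]; split_ifs <;> simp
    simp only [h2, Finset.sum_add_distrib, ← Finset.mul_sum, h1, he0]
    have h5 := Finset.sum_le_sum fun l (_ : l ∈ Finset.univ) => h3 l
    rw [Finset.sum_add_distrib] at h5
    simp only [Finset.sum_ite_eq', Finset.mem_univ, if_true] at h5
    have h6 : t ^ 2 / k / (2 * δ) + t ^ 2 / k / (2 * δ) = t ^ 2 / δ / k := by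
      field_simp
      ring
    linarith
  have hsq0 : 0 ≤ ∑ l, u l ^ 2 / m l :=
    Finset.sum_nonneg fun l _ => div_nonneg (sq_nonneg _) (hmpos l).le
  have hexp : (∑ l, u l ^ 2 / m l) ^ k ≤ Real.exp (t ^ 2 / δ) := by
    calc _ ≤ (Real.exp (t ^ 2 / δ / k)) ^ k := by
          gcongr
          refine hsq.trans ?_
          linarith [Real.add_one_le_exp (t ^ 2 / δ / k)]
      _ = Real.exp (t ^ 2 / δ) := by
          rw [← Real.exp_nat_mul]; congr 1; field_simp
  have hb0 : 0 ≤ ∑ τ : Fin k → Fin q with E τ, pw m τ :=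
    Finset.sum_nonneg fun τ _ => pw_nonneg (fun l => (hmpos l).le) τ
  have h9 : 9 / 16 ≤ Real.exp (t ^ 2 / δ) * ∑ τ : Fin k → Fin q with E τ, pw m τ := by
    calc (9 / 16 : ℝ) = (3 / 4) ^ 2 := by norm_num
      _ ≤ _ := by gcongr
      _ ≤ _ := hcm
      _ ≤ _ := by gcongr
  rw [Real.exp_neg, ← div_eq_mul_inv, div_le_iff₀ (Real.exp_pos _)]
  linarith

open Classical in
/-- Configurations typical for `m` are atypical for a different `m'`. -/
lemma other_small {m m' : Fin q → ℝ} (hm' : ∀ l, 0 ≤ m' l) (h1' : ∑ l, m' l = 1) {ε : ℝ}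
    (hε : 0 < ε) {l₂ : Fin q} (hl : 2 * ε < |m l₂ - m' l₂|) (hk : 1 ≤ k)
    (E : (Fin k → Fin q) → Prop) (hE : ∀ τ, E τ → ∀ l, |(cnt τ l : ℝ) - k * m l| ≤ ε * k) :
    ∑ τ with E τ, pw m' τ ≤ 1 / (ε ^ 2 * k) := by
  have hk0 : (0 : ℝ) < k := by exact_mod_cast hk
  have hcheb := chebyshev hm' h1' k (s := ε * k) (by positivity)
  have h2 : (k : ℝ) / (ε * k) ^ 2 = 1 / (ε ^ 2 * k) := by field_simp
  rw [h2] at hcheb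
  have hdisj : Disjoint (Finset.univ.filter E) (Finset.univ.filter fun τ : Fin k → Fin q =>
      ∀ l, |(cnt τ l : ℝ) - k * m' l| ≤ ε * k) := by
    rw [Finset.disjoint_filter]
    intro τ _ hτ hτ'
    have h4 : |(k : ℝ) * m l₂ - k * m' l₂| ≤ ε * k + ε * k := by
      calc _ = |((cnt τ l₂ : ℝ) - k * m' l₂) - ((cnt τ l₂ : ℝ) - k * m l₂)| := by congr 1; ring
        _ ≤ |(cnt τ l₂ : ℝ) - k * m' l₂| + |(cnt τ l₂ : ℝ) - k * m l₂| := abs_sub _ _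
        _ ≤ _ := add_le_add (hτ' l₂) (hE τ hτ l₂)
    rw [← mul_sub, abs_mul, abs_of_pos hk0] at h4
    nlinarith
  have h5 : ∑ τ with E τ, pw m' τ + ∑ τ : Fin k → Fin q with
      ∀ l, |(cnt τ l : ℝ) - k * m' l| ≤ ε * k, pw m' τ ≤ 1 := by
    rw [← Finset.sum_union hdisj, ← sum_pw_eq_one (N := k) h1']
    exact Finset.sum_le_sum_of_subset_of_nonneg (Finset.subset_univ _)
      fun τ _ _ => pw_nonneg hm' τ
  linarith

end Events

/-! ### Bounds on the Gibbs measure -/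

section Gibbs

/-- The unnormalized Gibbs weight `exp (N F(m_N(σ)))`. -/
noncomputable def gw {N q : ℕ} (F : (Fin q → ℝ) → ℝ) (σ : Fin N → Fin q) : ℝ :=
  Real.exp (N * F fun l => (cnt σ l : ℝ) / N)

lemma gw_pos {N q : ℕ} (F : (Fin q → ℝ) → ℝ) (σ : Fin N → Fin q) : 0 < gw F σ := Real.exp_pos _

variable {N d : ℕ}

lemma full_hat (hN : 1 ≤ N) (σ : Fin N → Fin (d + 1)) (l : Fin (d + 1)) :
    full (hat σ) l = (cnt σ l : ℝ) / N := by
  refine Fin.lastCases ?_ (fun i => ?_) l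
  · rw [full_last, one_sub_sum_hat hN]
  · rw [full_castSucc, hat]

lemma F_emp {F : (Fin (d + 1) → ℝ) → ℝ} {G : (Fin d → ℝ) → ℝ}
    (hG : ∀ x, G x = F (full x) - ∑ l, full x l * Real.log (full x l)) (hN : 1 ≤ N)
    (σ : Fin N → Fin (d + 1)) :
    N * F (fun l => (cnt σ l : ℝ) / N)
      = N * G (hat σ) + ∑ l, (cnt σ l : ℝ) * Real.log ((cnt σ l : ℝ) / N) := by
  have hN0 : (N : ℝ) ≠ 0 := by positivity
  have h1 : (fun l => (cnt σ l : ℝ) / N) = full (hat σ) := funext fun l => (full_hat hN σ l).symm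
  rw [h1, hG (hat σ), mul_sub, Finset.mul_sum]
  have h2 : ∀ l, (cnt σ l : ℝ) * Real.log ((cnt σ l : ℝ) / N)
      = N * (full (hat σ) l * Real.log (full (hat σ) l)) := by
    intro l
    rw [full_hat hN]
    field_simp
  simp only [h2]
  ring

/-- The Gibbs weight as a tilting of the product measure at `M`. -/
lemma gw_eq {F : (Fin (d + 1) → ℝ) → ℝ} {G : (Fin d → ℝ) → ℝ}
    (hG : ∀ x, G x = F (full x) - ∑ l, full x l * Real.log (full x l)) (hN : 1 ≤ N)
    {M : Fin d → ℝ} (hM : ∀ l, 0 < full M l) (σ : Fin N → Fin (d + 1)) :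
    gw F σ = Real.exp (N * G M) * pw (full M) σ
      * Real.exp (N * (G (hat σ) - G M + kl (hat σ) M)) := by
  have hN0 : (N : ℝ) ≠ 0 := by positivity
  rw [gw, F_emp hG hN, pw_eq_exp hM, ← Real.exp_add, ← Real.exp_add]
  congr 1
  have h1 : N * kl (hat σ) M = ∑ l, (cnt σ l : ℝ) * Real.log ((cnt σ l : ℝ) / N)
      - ∑ l, (cnt σ l : ℝ) * Real.log (full M l) := by
    rw [kl, Finset.mul_sum, ← Finset.sum_sub_distrib]
    refine Finset.sum_congr rfl fun l _ => ?_
    rw [full_hat hN]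
    field_simp
  rw [mul_add, h1]
  ring

lemma norm_hat_sub_le (hN : 1 ≤ N) {σ : Fin N → Fin (d + 1)} {M : Fin d → ℝ} {s : ℝ} (hs : 0 ≤ s)
    (h : ∀ l, |(cnt σ l : ℝ) - N * full M l| ≤ s * N) : ‖hat σ - M‖ ≤ s := by
  have hN0 : (0 : ℝ) < N := by positivity
  refine (pi_norm_le_iff_of_nonneg hs).2 fun l => ?_
  have h1 := h l.castSucc
  rw [full_castSucc] at h1
  have h2 : (hat σ - M) l = ((cnt σ l.castSucc : ℝ) - N * M l) / N := by
    simp only [Pi.sub_apply, hat]; field_simp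
  rw [h2, Real.norm_eq_abs, abs_div, abs_of_pos hN0, div_le_iff₀ hN0]
  exact h1

lemma le_norm_hat_sub (hN : 1 ≤ N) (σ : Fin N → Fin (d + 1)) (M : Fin d → ℝ) (l : Fin d) :
    |(cnt σ l.castSucc : ℝ) - N * M l| ≤ N * ‖hat σ - M‖ := by
  have hN0 : (0 : ℝ) < N := by positivity
  have h1 := norm_le_pi_norm (hat σ - M) l
  have h2 : (cnt σ l.castSucc : ℝ) - N * M l = N * (hat σ - M) l := by
    simp only [Pi.sub_apply, hat]; field_simp
  rw [h2, abs_mul, abs_of_pos hN0]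
  exact mul_le_mul_of_nonneg_left h1 hN0.le

/-- Laplace upper bound for the partition function, together with an exponential moment of
`N (G(M) - G)`. -/
lemma partition_upper {p : ℕ} {F : (Fin (d + 1) → ℝ) → ℝ} {G : (Fin d → ℝ) → ℝ}
    (hG : ∀ x, G x = F (full x) - ∑ l, full x l * Real.log (full x l)) (M : Fin p → Fin d → ℝ)
    {δ c g : ℝ} (hδ : 0 < δ) (hM : ∀ j l, 2 * δ ≤ full (M j) l) (hc : 0 < c)
    (hW : ∀ x : Fin d → ℝ, (∀ k, 0 ≤ x k) → ∑ k, x k ≤ 1 → ∃ j, c * ‖x - M j‖ ^ 2 ≤ g - G x) :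
    ∃ C : ℝ, 0 < C ∧ ∀ N : ℕ, 1 ≤ N → ∑ σ : Fin N → Fin (d + 1),
      gw F σ * Real.exp (N * (g - G (hat σ)) / 2) ≤ C * Real.exp (N * g) := by
  obtain ⟨C, hC, hCN⟩ := laplace_bound M (fun x => g - G x) hc hδ
    (fun j l => by simpa using hM j l.castSucc) (fun j => by simpa using hM j (Fin.last d)) hW
  refine ⟨C, hC, fun N hN => ?_⟩
  have := mul_le_mul_of_nonneg_right (hCN N hN) (Real.exp_pos (N * g)).le
  refine le_trans (le_of_eq ?_) this
  rw [Finset.sum_mul]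
  refine Finset.sum_congr rfl fun σ _ => ?_
  rw [gw, F_emp hG hN, ← Real.exp_add, ← Real.exp_add, ← Real.exp_add]
  congr 1
  ring

open Classical in
/-- Laplace lower bound for the partition function. -/
lemma partition_lower {F : (Fin (d + 1) → ℝ) → ℝ} {G : (Fin d → ℝ) → ℝ}
    (hG : ∀ x, G x = F (full x) - ∑ l, full x l * Real.log (full x l)) (hN : 1 ≤ N)
    {M : Fin d → ℝ} (hM : ∀ l, 0 < full M l) {r : ℝ}
    (hΨ : ∀ x, ‖x - M‖ < r → 0 ≤ G x - G M + kl x M) (hr : 2 < r * √N) :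
    3 / 4 * Real.exp (N * G M) ≤ ∑ σ : Fin N → Fin (d + 1), gw F σ := by
  have hN0 : (0 : ℝ) < N := by positivity
  have hs : 0 < √(N : ℝ) := Real.sqrt_pos.2 hN0
  have hss : √(N : ℝ) * √(N : ℝ) = N := Real.mul_self_sqrt hN0.le
  have hcheb := chebyshev (fun l => (hM l).le) (sum_full M) N (s := 2 * √N) (by positivity)
  have h34 : 1 - (N : ℝ) / (2 * √N) ^ 2 = 3 / 4 := by
    rw [mul_pow, Real.sq_sqrt hN0.le]
    field_simp
    norm_num
  rw [h34] at hcheb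
  calc _ ≤ (∑ σ : Fin N → Fin (d + 1) with ∀ l, |(cnt σ l : ℝ) - N * full M l| ≤ 2 * √N,
        pw (full M) σ) * Real.exp (N * G M) := by gcongr
    _ ≤ ∑ σ : Fin N → Fin (d + 1) with ∀ l, |(cnt σ l : ℝ) - N * full M l| ≤ 2 * √N, gw F σ := by
        rw [Finset.sum_mul]
        refine Finset.sum_le_sum fun σ hσ => ?_
        rw [Finset.mem_filter] at hσ
        have h1 : ‖hat σ - M‖ ≤ 2 / √N := by
          refine norm_hat_sub_le hN (by positivity) fun l => (hσ.2 l).trans (le_of_eq ?_)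
          rw [div_mul_eq_mul_div, eq_div_iff hs.ne', mul_assoc, hss]
        have h2 : 2 / √(N : ℝ) < r := by rwa [div_lt_iff₀ hs]
        have h3 := hΨ _ (h1.trans_lt h2)
        rw [gw_eq hG hN hM, mul_comm (pw (full M) σ)]
        exact le_mul_of_one_le_right
          (mul_nonneg (Real.exp_pos _).le (pw_nonneg (fun l => (hM l).le) σ))
          (Real.one_le_exp (mul_nonneg hN0.le h3))
    _ ≤ _ := Finset.sum_le_sum_of_subset_of_nonneg (Finset.subset_univ _)
        fun σ _ _ => (gw_pos F σ).le

open Classical in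
/-- On the event that the first `k` spins fluctuate by at least `(T + 2) √N`, the Gibbs weight
exceeds the product weight by a factor `exp (η T ^ 2)`: with probability at least `3 / 4` under
the product measure the other spins do not compensate the fluctuation. -/
lemma marg_lower {F : (Fin (d + 1) → ℝ) → ℝ} {G : (Fin d → ℝ) → ℝ}
    (hG : ∀ x, G x = F (full x) - ∑ l, full x l * Real.log (full x l)) (hN : 1 ≤ N)
    {M : Fin d → ℝ} (hM : ∀ l, 0 < full M l) {r η T : ℝ} (hη : 0 ≤ η) (hT : 0 ≤ T)
    (hr0 : 0 < r)
    (hΨ : ∀ x, ‖x - M‖ < r → η * ‖x - M‖ ^ 2 ≤ G x - G M + kl x M) (hr : 4 < r * √N)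
    {k : ℕ} (hk : k ≤ N) (l₀ : Fin d) (E : (Fin k → Fin (d + 1)) → Prop)
    (hE₀ : ∀ τ, E τ → (T + 2) * √N ≤ |(cnt τ l₀.castSucc : ℝ) - k * M l₀|)
    (hE₁ : ∀ τ, E τ → ∀ l, |(cnt τ l : ℝ) - k * full M l| ≤ r / 2 * k) :
    3 / 4 * Real.exp (N * G M) * Real.exp (η * T ^ 2) * ∑ τ with E τ, pw (full M) τ
      ≤ ∑ τ with E τ, marg hk (gw F) τ := by
  have hN0 : (0 : ℝ) < N := by positivity
  have hs : 0 < √(N : ℝ) := Real.sqrt_pos.2 hN0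
  have hss : √(N : ℝ) * √(N : ℝ) = N := Real.mul_self_sqrt hN0.le
  obtain ⟨n, rfl⟩ := Nat.exists_eq_add_of_le hk
  set N := k + n with hNdef
  have hNr : (N : ℝ) = k + n := by rw [hNdef]; push_cast; ring
  have hk0 : (0 : ℝ) ≤ k := Nat.cast_nonneg k
  have hcheb := chebyshev (fun l => (hM l).le) (sum_full M) n (s := 2 * √N) (by positivity)
  have h34 : 3 / 4 ≤ 1 - (n : ℝ) / (2 * √N) ^ 2 := by
    rw [mul_pow, Real.sq_sqrt hN0.le]
    have : (n : ℝ) / (2 ^ 2 * N) ≤ 1 / 4 := by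
      rw [div_le_div_iff₀ (by positivity) (by norm_num)]
      linarith
    linarith
  have hB := h34.trans hcheb
  rw [Finset.mul_sum]
  refine Finset.sum_le_sum fun τ hτ => ?_
  rw [Finset.mem_filter] at hτ
  have e₀ := hE₀ τ hτ.2
  have e₁ := hE₁ τ hτ.2
  have hpτ := pw_nonneg (fun l => (hM l).le) τ
  rw [marg_append]
  calc _ = 3 / 4 * (Real.exp (N * G M) * Real.exp (η * T ^ 2) * pw (full M) τ) := by ring
    _ ≤ (∑ τ' : Fin n → Fin (d + 1) with ∀ l, |(cnt τ' l : ℝ) - n * full M l| ≤ 2 * √N,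
          pw (full M) τ') * (Real.exp (N * G M) * Real.exp (η * T ^ 2) * pw (full M) τ) := by
        gcongr
    _ ≤ ∑ τ' : Fin n → Fin (d + 1) with ∀ l, |(cnt τ' l : ℝ) - n * full M l| ≤ 2 * √N,
          gw F (Fin.append τ τ') := by
        rw [Finset.sum_mul]
        refine Finset.sum_le_sum fun τ' hτ' => ?_
        rw [Finset.mem_filter] at hτ'
        have hdec : ∀ l, (cnt (Fin.append τ τ') l : ℝ) - N * full M l
            = ((cnt τ l : ℝ) - k * full M l) + ((cnt τ' l : ℝ) - n * full M l) := by
          intro l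
          rw [cnt_append, hNr]; push_cast; ring
        have h1 : ‖hat (Fin.append τ τ') - M‖ ≤ r / 2 + 2 / √N := by
          refine norm_hat_sub_le hN (by positivity) fun l => ?_
          rw [hdec]
          have e2 : (r / 2 + 2 / √N) * (N : ℝ) = r / 2 * N + 2 * √N := by
            rw [add_mul]
            congr 1
            rw [div_mul_eq_mul_div, div_eq_iff hs.ne', mul_assoc, hss]
          rw [e2]
          refine (abs_add_le _ _).trans (add_le_add ((e₁ l).trans ?_) (hτ'.2 l))
          gcongr
        have h2 : 2 / √(N : ℝ) < r / 2 := by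
          rw [div_lt_iff₀ hs]; linarith
        have h3 := hΨ _ (h1.trans_lt (by linarith))
        have h4 : T * √N ≤ N * ‖hat (Fin.append τ τ') - M‖ := by
          refine le_trans ?_ (le_norm_hat_sub hN _ M l₀)
          have e3 := hdec l₀.castSucc
          rw [full_castSucc] at e3
          rw [e3]
          have e4 := hτ'.2 l₀.castSucc
          rw [full_castSucc] at e4
          have e5 := abs_sub_abs_le_abs_add ((cnt τ l₀.castSucc : ℝ) - k * M l₀)
            ((cnt τ' l₀.castSucc : ℝ) - n * M l₀)
          linarith
        have h5 : T ≤ √N * ‖hat (Fin.append τ τ') - M‖ := by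
          refine le_of_mul_le_mul_left ?_ hs
          rw [← mul_assoc, hss, mul_comm]
          exact h4
        have h6 : η * T ^ 2 ≤ N * (G (hat (Fin.append τ τ')) - G M
            + kl (hat (Fin.append τ τ')) M) := by
          calc η * T ^ 2 ≤ η * (√N * ‖hat (Fin.append τ τ') - M‖) ^ 2 := by gcongr
            _ = N * (η * ‖hat (Fin.append τ τ') - M‖ ^ 2) := by
                rw [mul_pow, Real.sq_sqrt hN0.le]; ring
            _ ≤ _ := by gcongr
        rw [gw_eq hG hN hM, pw_append]
        calc _ = Real.exp (N * G M) * (pw (full M) τ * pw (full M) τ')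
              * Real.exp (η * T ^ 2) := by ring
          _ ≤ _ := by
            have := pw_nonneg (fun l => (hM l).le) τ'
            gcongr
    _ ≤ _ := Finset.sum_le_sum_of_subset_of_nonneg (Finset.subset_univ _)
        fun σ _ _ => (gw_pos F _).le

/-- The relative entropy of the Gibbs measure with respect to the mixture of product measures
is bounded uniformly in `N`. -/
lemma gibbs_entropy_le {p : ℕ} {F : (Fin (d + 1) → ℝ) → ℝ} {G : (Fin d → ℝ) → ℝ}
    (hG : ∀ x, G x = F (full x) - ∑ l, full x l * Real.log (full x l)) (hN : 1 ≤ N)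
    (M : Fin p → Fin d → ℝ) {δ c g C a₀ Z : ℝ} (hδ : 0 < δ) (hM : ∀ j l, 2 * δ ≤ full (M j) l)
    (hc : 0 < c) (hg : ∀ j, G (M j) = g)
    (hW : ∀ x : Fin d → ℝ, (∀ k, 0 ≤ x k) → ∑ k, x k ≤ 1 → ∃ j, c * ‖x - M j‖ ^ 2 ≤ g - G x)
    (hC : ∑ σ : Fin N → Fin (d + 1), gw F σ * Real.exp (N * (g - G (hat σ)) / 2)
      ≤ C * Real.exp (N * g))
    (hZ : Z = ∑ σ : Fin N → Fin (d + 1), gw F σ) (hZl : 3 / 4 * Real.exp (N * g) ≤ Z)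
    {a : Fin p → ℝ} (ha₀ : 0 < a₀) (ha : ∀ j, a₀ ≤ a j) :
    relEnt (fun σ : Fin N → Fin (d + 1) => gw F σ / Z) (fun σ => ∑ j, a j * pw (full (M j)) σ)
      ≤ Real.log (4 / (3 * a₀)) + 2 * ((d + 1 + (d + 1) ^ 2) / (2 * δ)) / c * (4 / 3 * C) := by
  have hN0 : (0 : ℝ) < N := by positivity
  set K : ℝ := (d + 1 + (d + 1) ^ 2) / (2 * δ) with hK
  have hK0 : 0 < K := by positivity
  have hZ0 : 0 < Z := lt_of_lt_of_le (by positivity) hZl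
  have hMp : ∀ j l, 0 < full (M j) l := fun j l => by linarith [hM j l]
  have hpt : ∀ σ : Fin N → Fin (d + 1),
      gw F σ / Z * Real.log (gw F σ / Z / ∑ j, a j * pw (full (M j)) σ)
        ≤ gw F σ / Z * Real.log (4 / (3 * a₀))
          + 2 * K / c / Z * (gw F σ * Real.exp (N * (g - G (hat σ)) / 2)) := by
    intro σ
    have hx : (∀ k, 0 ≤ hat σ k) ∧ ∑ k, hat σ k ≤ 1 := ⟨hat_nonneg σ, sum_hat_le hN σ⟩
    obtain ⟨j, hj⟩ := hW (hat σ) hx.1 hx.2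
    have hGle : G (hat σ) ≤ g := by
      have : 0 ≤ c * ‖hat σ - M j‖ ^ 2 := by positivity
      linarith
    have hpj := pw_pos (hMp j) σ
    have hmix : a₀ * pw (full (M j)) σ ≤ ∑ j, a j * pw (full (M j)) σ := by
      refine le_trans (mul_le_mul_of_nonneg_right (ha j) hpj.le) ?_
      exact Finset.single_le_sum (f := fun j => a j * pw (full (M j)) σ)
        (fun i _ => mul_nonneg (ha₀.le.trans (ha i)) (pw_nonneg (fun l => (hMp i l).le) σ))
        (Finset.mem_univ j)
    -- the relative entropy with respect to the nearby maximizer is controlled by the gap `g - G`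
    have hkl := kl_le hδ (hM j) (full_mem hx)
    rw [← hK] at hkl
    have hkl2 : N * kl (hat σ) (M j) ≤ 2 * K / c * (N * (g - G (hat σ)) / 2) := by
      have h1 : ‖hat σ - M j‖ ^ 2 ≤ (g - G (hat σ)) / c := by
        rw [le_div_iff₀ hc]; linarith
      calc N * kl (hat σ) (M j) ≤ N * (K * ((g - G (hat σ)) / c)) := by
            gcongr
            exact hkl.trans (by gcongr)
        _ = _ := by ring
    have hratio : gw F σ / Z / ∑ j, a j * pw (full (M j)) σ
        ≤ 4 / (3 * a₀) * Real.exp (N * kl (hat σ) (M j)) := by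
      have hgw : gw F σ ≤ Real.exp (N * g) * pw (full (M j)) σ
          * Real.exp (N * kl (hat σ) (M j)) := by
        rw [gw_eq hG hN (hMp j), hg j]
        gcongr
        linarith
      calc _ ≤ Real.exp (N * g) * pw (full (M j)) σ * Real.exp (N * kl (hat σ) (M j))
            / (3 / 4 * Real.exp (N * g)) / (a₀ * pw (full (M j)) σ) := by
              gcongr
        _ = _ := by field_simp
    have hmixpos : 0 < ∑ j, a j * pw (full (M j)) σ :=
      lt_of_lt_of_le (mul_pos ha₀ hpj) hmix
    have hlog : Real.log (gw F σ / Z / ∑ j, a j * pw (full (M j)) σ)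
        ≤ Real.log (4 / (3 * a₀)) + 2 * K / c * Real.exp (N * (g - G (hat σ)) / 2) := by
      have h1 := Real.log_le_log (div_pos (div_pos (gw_pos F σ) hZ0) hmixpos) hratio
      rw [Real.log_mul (by positivity) (Real.exp_pos _).ne', Real.log_exp] at h1
      have h2 : N * (g - G (hat σ)) / 2 ≤ Real.exp (N * (g - G (hat σ)) / 2) := by
        linarith [Real.add_one_le_exp (N * (g - G (hat σ)) / 2)]
      have h3 : 2 * K / c * (N * (g - G (hat σ)) / 2)
          ≤ 2 * K / c * Real.exp (N * (g - G (hat σ)) / 2) := by gcongr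
      linarith
    have h4 := mul_le_mul_of_nonneg_left hlog (div_pos (gw_pos F σ) hZ0).le
    refine h4.trans (le_of_eq ?_)
    ring
  unfold relEnt
  refine (Finset.sum_le_sum fun σ _ => hpt σ).trans ?_
  rw [Finset.sum_add_distrib, ← Finset.sum_mul, ← Finset.sum_div, ← hZ, div_self hZ0.ne', one_mul,
    ← Finset.mul_sum]
  refine add_le_add_right ?_ _
  calc _ ≤ 2 * K / c / Z * (C * Real.exp (N * g)) := by gcongr
    _ = 2 * K / c * (C * (Real.exp (N * g) / Z)) := by ring
    _ ≤ 2 * K / c * (C * (4 / 3)) := by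
        have hC0 : 0 ≤ C := by
          have h1 : 0 ≤ C * Real.exp (N * g) :=
            le_trans (Finset.sum_nonneg fun σ _ =>
              mul_nonneg (gw_pos F σ).le (Real.exp_pos _).le) hC
          exact nonneg_of_mul_nonneg_left h1 (Real.exp_pos _)
        have h2 : Real.exp (N * g) / Z ≤ 4 / 3 := by
          rw [div_le_iff₀ hZ0]
          linarith
        gcongr
    _ = _ := by ring

end Gibbs

end CurieWeissChaos

/-! ### Failure of propagation of chaos -/

open CurieWeissChaos in
/-- Under assumptions (A) and (B) (with each `Σ^{(j)}` positive definite),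
let `ρ^{(k)} = |w|⁻¹ ∑_j w_j ρ_j^{⊗k}` with `ρ_j(l) = M_{j,l}`. If `k(N)/N → α ∈ (0,1]`
then `liminf_N H(μ_N^{(k)} | ρ^{(k)}) > 0`: propagation of chaos stops for marginals of
size proportional to `N`. Here `q = d + 1`, `d ≥ 1`. -/
theorem stmt_5
    (d p : ℕ) (hd : 1 ≤ d) (hp : 1 ≤ p)
    (F : (Fin (d + 1) → ℝ) → ℝ)
    (hF : ContDiffOn ℝ 2 F {m : Fin (d + 1) → ℝ | (∀ k, 0 ≤ m k) ∧ ∑ k, m k = 1})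
    (ent : (Fin (d + 1) → ℝ) → ℝ)
    (hent : ∀ m, ent m = -∑ k, m k * Real.log (m k))
    (G : (Fin d → ℝ) → ℝ)
    (hG : ∀ x : Fin d → ℝ,
      G x = F (Fin.snoc x (1 - ∑ k, x k)) + ent (Fin.snoc x (1 - ∑ k, x k)))
    (Δhat : Set (Fin d → ℝ))
    (hΔhat : Δhat = {x : Fin d → ℝ | (∀ k, 0 ≤ x k) ∧ ∑ k, x k ≤ 1})
    -- (A): the global maximizers of `G` on `Δ̂` are exactly the `p` distinct points
    -- `M 1, …, M p`, all lying in the interior of `Δ̂`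
    (M : Fin p → Fin d → ℝ)
    (hMinj : Function.Injective M)
    (hMint : ∀ j, M j ∈ interior Δhat)
    (hMmax : ∀ j, ∀ x ∈ Δhat, G x ≤ G (M j))
    (hMonly : ∀ x ∈ Δhat, (∀ y ∈ Δhat, G y ≤ G x) → ∃ j, x = M j)
    -- (B): `H_j = -Hess G (M_j)` is positive definite
    (H : Fin p → Matrix (Fin d) (Fin d) ℝ)
    (hH : ∀ j k l, H j k l =
      -(fderiv ℝ (fun x => fderiv ℝ G x (Pi.single l 1)) (M j)) (Pi.single k 1))
    (hHpd : ∀ j, (H j).PosDef)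
    (Mfull : Fin p → Fin (d + 1) → ℝ)
    (hMfull : ∀ j, Mfull j = Fin.snoc (M j) (1 - ∑ k, M j k))
    (w : Fin p → ℝ)
    (hw : ∀ j, w j = (Real.sqrt ((H j).det * ∏ k, Mfull j k))⁻¹)
    (Z : ℕ → ℝ)
    (hZ : ∀ N : ℕ, Z N = ∑ σ : Fin N → Fin (d + 1),
      Real.exp ((N : ℝ) * F (fun k => ((Finset.univ.filter fun i => σ i = k).card : ℝ) / N)))
    (μ : ∀ N : ℕ, (Fin N → Fin (d + 1)) → ℝ)
    (hμ : ∀ N σ, μ N σ =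
      Real.exp ((N : ℝ) * F (fun k => ((Finset.univ.filter fun i => σ i = k).card : ℝ) / N)) / Z N)
    -- the mixing covariance matrices are positive definite
    (Smat : Fin p → Matrix (Fin d) (Fin d) ℝ)
    (hS : ∀ j, Smat j = (H j)⁻¹ - Matrix.diagonal (M j) + Matrix.of fun k l => M j k * M j l)
    (hSpd : ∀ j, (Smat j).PosDef)
    -- the marginal block sizes, with k(N)/N → α ∈ (0,1]
    (k : ℕ → ℕ) (hk2 : ∀ N, k N ≤ N)
    (α : ℝ) (hα0 : 0 < α) (hα1 : α ≤ 1)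
    (hkα : Tendsto (fun N => (k N : ℝ) / N) atTop (nhds α))
    -- the k(N)-dimensional marginal of μ_N
    (μmarg : ∀ N : ℕ, (Fin (k N) → Fin (d + 1)) → ℝ)
    (hμmarg : ∀ N (τ : Fin (k N) → Fin (d + 1)), μmarg N τ =
      ∑ σ : Fin N → Fin (d + 1),
        if ∀ i : Fin (k N), σ (Fin.castLE (hk2 N) i) = τ i then μ N σ else 0)
    -- the mixture of product measures ρ^{(k)}
    (ρmix : ∀ N : ℕ, (Fin (k N) → Fin (d + 1)) → ℝ)
    (hρmix : ∀ N (τ : Fin (k N) → Fin (d + 1)), ρmix N τ =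
      (∑ j, w j)⁻¹ * ∑ j, w j * ∏ i, Mfull j (τ i)) :
    0 < Filter.liminf (fun N => relEnt (μmarg N) (ρmix N)) atTop := by
  subst hΔhat
  have hG' : ∀ x, G x = F (full x) - ∑ l, full x l * Real.log (full x l) := by
    intro x
    rw [hG, hent, ← sub_eq_add_neg]
    rfl
  obtain ⟨δ, hδ, hMδ, ⟨c, hc, hW⟩, hΨ⟩ := landscape hd hp hF hG' M hMint hMmax hMonly H hH hHpd
    Smat hS hSpd
  have hMp : ∀ j l, 0 < full (M j) l := fun j l => by linarith [hMδ j l]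
  have hMnn : ∀ j l, 0 ≤ full (M j) l := fun j l => (hMp j l).le
  obtain rfl : Mfull = fun j => full (M j) := funext hMfull
  set j₀ : Fin p := ⟨0, hp⟩ with hj₀
  have hne : Nonempty (Fin p) := ⟨j₀⟩
  set g := G (M j₀) with hg
  have hgj : ∀ j, G (M j) = g := fun j =>
    le_antisymm (hMmax _ _ (interior_subset (hMint j))) (hMmax _ _ (interior_subset (hMint j₀)))
  obtain ⟨η, hη, r, hr, hΨ₀⟩ := hΨ j₀
  obtain ⟨C, hC, hCN⟩ := partition_upper hG' M hδ hMδ hc (hW j₀)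
  have hwpos : ∀ j, 0 < w j := by
    intro j
    rw [hw]
    exact inv_pos.2 (Real.sqrt_pos.2 (mul_pos (hHpd j).det_pos (Finset.prod_pos fun l _ => hMp j l)))
  have hwsum : 0 < ∑ j, w j := Finset.sum_pos (fun j _ => hwpos j) Finset.univ_nonempty
  set a : Fin p → ℝ := fun j => (∑ j, w j)⁻¹ * w j with ha
  have hapos : ∀ j, 0 < a j := fun j => mul_pos (inv_pos.2 hwsum) (hwpos j)
  have hasum : ∑ j, a j = 1 := by
    rw [ha, ← Finset.mul_sum, inv_mul_cancel₀ hwsum.ne']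
  obtain ⟨j₁, -, hj₁⟩ := Finset.exists_min_image (Finset.univ : Finset (Fin p)) a
    Finset.univ_nonempty
  have hρ : ∀ N, ρmix N = fun τ => ∑ j, a j * pw (full (M j)) τ := by
    intro N
    funext τ
    rw [hρmix, Finset.mul_sum]
    exact Finset.sum_congr rfl fun j _ => by rw [ha, mul_assoc]; rfl
  have hZ' : ∀ N, Z N = ∑ σ : Fin N → Fin (d + 1), gw F σ := fun N => hZ N
  have hZpos : ∀ N, 0 < Z N := fun N => by
    rw [hZ']
    exact Finset.sum_pos (fun σ _ => gw_pos F σ) Finset.univ_nonempty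
  have hμ' : ∀ N, μ N = fun σ => gw F σ / Z N := fun N => funext fun σ => hμ N σ
  have hmarg : ∀ N, μmarg N = marg (hk2 N) (μ N) := fun N => funext fun τ => hμmarg N τ
  have hmarg' : ∀ N τ, μmarg N τ = marg (hk2 N) (gw F) τ / Z N := by
    intro N τ
    rw [hmarg, hμ', marg, marg, Finset.sum_div]
    exact Finset.sum_congr rfl fun σ _ => by split_ifs <;> simp
  -- the size of the fluctuations, chosen to gain a factor `4` over the product measure
  set T : ℝ := √(16 * C / (3 * η)) with hT
  have hT0 : 0 ≤ T := Real.sqrt_nonneg _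
  have hTexp : 16 / 3 * C ≤ Real.exp (η * T ^ 2) := by
    rw [hT, Real.sq_sqrt (by positivity)]
    have h1 : η * (16 * C / (3 * η)) = 16 / 3 * C := by field_simp
    rw [h1]
    linarith [Real.add_one_le_exp (16 / 3 * C)]
  -- the radius separating `M j₀` from the other maximizers
  obtain ⟨ε, hε, hεr, hεsep⟩ : ∃ ε > 0, ε ≤ r / 2 ∧
      ∀ j ≠ j₀, ∃ l, 2 * ε < |full (M j₀) l - full (M j) l| := by
    have h1 : ∀ j, ∃ v > 0, j ≠ j₀ → ∃ l, v ≤ |full (M j₀) l - full (M j) l| := by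
      intro j
      by_cases hj : j = j₀
      · exact ⟨1, one_pos, fun h => absurd hj h⟩
      · have h2 : M j₀ ≠ M j := fun h => hj (hMinj h).symm
        obtain ⟨l, hl⟩ := Function.ne_iff.1 h2
        refine ⟨|M j₀ l - M j l|, abs_pos.2 (sub_ne_zero.2 hl), fun _ => ⟨l.castSucc, ?_⟩⟩
        rw [full_castSucc, full_castSucc]
    choose v hv hvl using h1
    obtain ⟨j₂, -, hj₂⟩ := Finset.exists_min_image (Finset.univ : Finset (Fin p)) v
      Finset.univ_nonempty
    have hv2 := hv j₂
    refine ⟨min (r / 2) (v j₂ / 4), by positivity, min_le_left _ _, fun j hj => ?_⟩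
    obtain ⟨l, hl⟩ := hvl j hj
    refine ⟨l, lt_of_lt_of_le ?_ hl⟩
    have h3 := hj₂ j (Finset.mem_univ _)
    have h4 := min_le_right (r / 2) (v j₂ / 4)
    linarith
  have hα2 : 0 < √(α / 2) := Real.sqrt_pos.2 (by positivity)
  -- as `k ≥ α N / 2` eventually, deviations `(t - 2) √k` of the block exceed `(T + 2) √N`
  set t : ℝ := 2 + (T + 2) / √(α / 2) with ht
  have ht0 : 0 ≤ t := by positivity
  set b₀ : ℝ := 9 / 16 * Real.exp (-(t ^ 2 / δ)) with hb₀
  have hb₀0 : 0 < b₀ := by positivity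
  have hNtop : Tendsto (fun N : ℕ => (N : ℝ)) atTop atTop := tendsto_natCast_atTop_atTop
  have hktop : Tendsto (fun N => (k N : ℝ)) atTop atTop := by
    refine (Tendsto.pos_mul_atTop hα0 hkα hNtop).congr' ?_
    filter_upwards [eventually_ge_atTop 1] with N hN
    have : (N : ℝ) ≠ 0 := by positivity
    field_simp
  have hsqrtN : Tendsto (fun N : ℕ => √(N : ℝ)) atTop atTop := Real.tendsto_sqrt_atTop.comp hNtop
  have hsqrtk : Tendsto (fun N => √(k N : ℝ)) atTop atTop := Real.tendsto_sqrt_atTop.comp hktop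
  have hev : ∀ᶠ N in atTop, b₀ / 2 ≤ relEnt (μmarg N) (ρmix N) ∧
      relEnt (μmarg N) (ρmix N) ≤ Real.log (4 / (3 * a j₁))
        + 2 * ((d + 1 + (d + 1) ^ 2) / (2 * δ)) / c * (4 / 3 * C) := by
    filter_upwards [eventually_ge_atTop 1, (hsqrtN.const_mul_atTop hr).eventually_gt_atTop 4,
      hkα.eventually_const_le (half_lt_self hα0), hktop.eventually_ge_atTop 1,
      (hsqrtk.const_mul_atTop hδ).eventually_ge_atTop t,
      (hsqrtk.const_mul_atTop hε).eventually_ge_atTop (t + 2),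
      hktop.eventually_ge_atTop (1 / (ε ^ 2 * b₀))] with N hN hN4 hkN hk1 hkδ hkε hkb
    have hN0 : (0 : ℝ) < N := by positivity
    have hk1' : 1 ≤ k N := by exact_mod_cast hk1
    have hk0 : (0 : ℝ) < k N := by linarith
    have hZl : 3 / 4 * Real.exp (N * g) ≤ Z N := by
      rw [hZ']
      exact partition_lower hG' hN (hMp j₀)
        (fun x hx => le_trans (by positivity) (hΨ₀ x hx)) (by linarith)
    have hZu : Z N ≤ C * Real.exp (N * g) := by
      rw [hZ']
      refine le_trans (Finset.sum_le_sum fun σ _ => ?_) (hCN N hN)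
      refine le_mul_of_one_le_right (gw_pos F σ).le (Real.one_le_exp ?_)
      have := hMmax j₀ (hat σ) ⟨hat_nonneg σ, sum_hat_le hN σ⟩
      have : 0 ≤ g - G (hat σ) := sub_nonneg.2 this
      positivity
    constructor
    · classical
      set l₀ : Fin d := ⟨0, hd⟩
      set m := full (M j₀) with hm
      obtain ⟨E, hE⟩ : ∃ E : (Fin (k N) → Fin (d + 1)) → Prop, ∀ τ, E τ ↔
          ((T + 2) * √N ≤ |(cnt τ l₀.castSucc : ℝ) - k N * M j₀ l₀| ∧
            ∀ l, |(cnt τ l : ℝ) - k N * m l| ≤ ε * k N) := ⟨_, fun τ => Iff.rfl⟩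
      set b := ∑ τ with E τ, pw m τ with hb
      have hTt : (T + 2) * √N ≤ (t - 2) * √(k N) := by
        have h1 : √(α / 2) * √N ≤ √(k N) := by
          rw [← Real.sqrt_mul (by positivity)]
          refine Real.sqrt_le_sqrt ?_
          rwa [le_div_iff₀ hN0] at hkN
        have h2 : (t - 2) * √(k N) = (T + 2) / √(α / 2) * √(k N) := by rw [ht]; ring
        rw [h2]
        calc (T + 2) * √N = (T + 2) / √(α / 2) * (√(α / 2) * √N) := by field_simp
          _ ≤ _ := by gcongr
      have hbb : b₀ ≤ b := by
        refine tilt_lower hδ (hMδ j₀) (sum_full _) (l₀ := l₀.castSucc) (l₁ := Fin.last d)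
          (Fin.castSucc_lt_last _).ne ht0 hk1' hkδ hkε E fun τ h1 h2 => (hE τ).2 ⟨?_, h2⟩
        rw [full_castSucc] at h1
        exact hTt.trans h1
      have hmu : 4 * b ≤ ∑ τ with E τ, μmarg N τ := by
        have h1 := marg_lower hG' hN (hMp j₀) hη.le hT0 hr hΨ₀ hN4 (hk2 N) l₀ E
          (fun τ hτ => ((hE τ).1 hτ).1)
          (fun τ hτ l => (((hE τ).1 hτ).2 l).trans (by gcongr))
        simp only [hmarg', ← Finset.sum_div]
        rw [le_div_iff₀ (hZpos N)]
        refine le_trans ?_ h1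
        have hb0 : 0 ≤ b := hb₀0.le.trans hbb
        calc 4 * b * Z N ≤ 4 * b * (C * Real.exp (N * g)) := by gcongr
          _ = 3 / 4 * Real.exp (N * g) * (16 / 3 * C) * b := by ring
          _ ≤ 3 / 4 * Real.exp (N * g) * Real.exp (η * T ^ 2) * b := by gcongr
      have hrho : ∑ τ with E τ, ρmix N τ ≤ 2 * b := by
        have h1 : ∑ τ with E τ, ρmix N τ = ∑ j, a j * ∑ τ with E τ, pw (full (M j)) τ := by
          simp only [hρ, Finset.mul_sum]
          rw [Finset.sum_comm]
        have h2 : ∀ j, ∑ τ with E τ, pw (full (M j)) τ ≤ 2 * b := by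
          intro j
          by_cases hj : j = j₀
          · rw [hj, ← hm, ← hb]; linarith
          · obtain ⟨l, hl⟩ := hεsep j hj
            have h3 := other_small (hMnn j) (sum_full (M j)) hε hl hk1' E
              (fun τ hτ => ((hE τ).1 hτ).2)
            have h4 : 1 / (ε ^ 2 * (k N : ℝ)) ≤ b₀ := by
              rw [div_le_iff₀ (by positivity)] at hkb ⊢
              linarith
            linarith
        rw [h1]
        calc _ ≤ ∑ j, a j * (2 * b) :=
              Finset.sum_le_sum fun j _ => mul_le_mul_of_nonneg_left (h2 j) (hapos j).le
          _ = 2 * b := by rw [← Finset.sum_mul, hasum, one_mul]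
      have hμ1 : ∑ τ, μmarg N τ = 1 := by
        rw [hmarg, sum_marg, hμ', ← Finset.sum_div, ← hZ', div_self (hZpos N).ne']
      have hρ1 : ∑ τ, ρmix N τ = 1 := by
        rw [hρ, Finset.sum_comm]
        simp only [← Finset.mul_sum, sum_pw_eq_one (sum_full _), mul_one, hasum]
      have hge := relEnt_ge (f := μmarg N) (g := ρmix N)
        (fun τ => by
          rw [hmarg']
          exact div_nonneg (marg_nonneg _ (fun σ => (gw_pos F σ).le) τ) (hZpos N).le)
        (fun τ => by
          rw [hρ]
          exact Finset.sum_pos (fun j _ => mul_pos (hapos j) (pw_pos (hMp j) τ))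
            Finset.univ_nonempty) hμ1 hρ1 E
      have hlog := Real.log_two_gt_d9
      have h5 : 4 * b * Real.log 2 ≤ (∑ τ with E τ, μmarg N τ) * Real.log 2 := by gcongr
      have h6 : 4 * b * (5 / 8) ≤ 4 * b * Real.log 2 := by
        have hb0 : 0 ≤ b := hb₀0.le.trans hbb
        gcongr
        linarith
      linarith
    · have h1 := gibbs_entropy_le hG' hN M hδ hMδ hc hgj (hW j₀) (hCN N hN) (hZ' N) hZl
        (hapos j₁) (fun j => hj₁ j (Finset.mem_univ _))
      refine le_trans ?_ h1
      have h2 := relEnt_marg_le (hk2 N) (f := fun σ => gw F σ / Z N)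
        (g := fun σ => ∑ j, a j * pw (full (M j)) σ)
        (fun σ => div_pos (gw_pos F σ) (hZpos N))
        (fun σ => Finset.sum_pos (fun j _ => mul_pos (hapos j) (pw_pos (hMp j) σ))
            Finset.univ_nonempty)
      rw [hmarg, hμ', hρ]
      refine le_trans (le_of_eq ?_) h2
      congr 1
      exact funext fun τ => (marg_mix (hk2 N) a (fun j => sum_full (M j)) τ).symm
  -- the upper bound makes the real-valued `liminf` meaningful
  have hcob : IsCoboundedUnder (· ≥ ·) atTop (fun N => relEnt (μmarg N) (ρmix N)) :=
    (isBoundedUnder_of_eventually_le (hev.mono fun N hN => hN.2)).isCoboundedUnder_ge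
  exact lt_of_lt_of_le (half_pos hb₀0) (le_liminf_of_le hcob (hev.mono fun N hN => hN.1))
end

section
/- Let 0 < β < 1 and h = 0, and fix 0 < δ < 1/6. Let ξ̃ be a real random variable with the Gaussian density of mean 0 and variance β/(1−β), and set ξ_N = ξ̃ 1{|ξ̃| ≤ N^δ}. Define ν_N(σ) = 2^{−N} E[∏_{i=1}^N (1 + σ_i ξ_N/√N)] for σ ∈ {−1,+1}^N. Then H(μ_N | ν_N) → 0 and H(ν_N | μ_N) → 0 as N → ∞. -/
/-!
Write `m = mag σ = N^{-1/2} ∑ σ_i` and `T = N^δ`. The Curie–Weiss weight of `σ` is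
`exp (β m² / 2)`. On `|x| ≤ T` one has `∏ (1 + σ_i x / √N) = exp (m x - x² / 2 + O(T³ / √N))`,
uniformly in `σ`, and `T³ / √N → 0` since `δ < 1/6` (`prod_bounds`). Hence
`2^N ν_N(σ)` is, up to a factor tending to one uniformly in `σ`, the truncated Gaussian expectation
`E[exp (m ξ_N - ξ_N² / 2)]`, whose untruncated version is exactly `√(1 - β) exp (β m² / 2)`
(`integral_tilt`).

* Upper bound (`tiltTrunc_le`): truncation adds at most `O(e^{-T})`. With
  `Z_N ≤ 2^N / √(1 - β)` (`sum_exp_sq_mag_le`) this gives `ν_N ≤ (1 + o(1)) μ_N` everywhere, so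
  `H(ν_N | μ_N) → 0`. Summing over `σ` also gives a matching lower bound on `Z_N`.
* Lower bound (`le_tiltTrunc`): `ν_N ≥ (1 - o(1)) μ_N` where `|m| ≤ T / 2`. Elsewhere
  `log (μ_N / ν_N) = O(1 + m²)` (`tiltTrunc_crude`), and as the fourth moment of `m` under `μ_N` is
  bounded (`sum_moment_le`), this region contributes `O(T⁻²)` to `H(μ_N | ν_N)`.

Both entropies are nonnegative by the Gibbs inequality, and `entropy_bounds` collects the estimates.
-/

open Filter Real MeasureTheory

namespace CurieWeiss

/-! ### Gaussian integrals -/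

/-- The density at `t` of the centred Gaussian with variance `v`. -/
noncomputable def gaussDensity (v t : ℝ) : ℝ :=
  Real.exp (-t ^ 2 / (2 * v)) / Real.sqrt (2 * Real.pi * v)

lemma gaussDensity_nonneg (v t : ℝ) : 0 ≤ gaussDensity v t := by
  unfold gaussDensity; positivity

lemma exp_quadratic_integral {b : ℝ} (hb : 0 < b) (m : ℝ) :
    Integrable (fun t : ℝ => exp (m * t - b * t ^ 2 / 2)) ∧
      ∫ t : ℝ, exp (m * t - b * t ^ 2 / 2) = √(2 * π / b) * exp (m ^ 2 / (2 * b)) := by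
  have key : (fun t : ℝ => exp (m * t - b * t ^ 2 / 2)) =
      fun t => exp (m ^ 2 / (2 * b)) * exp (-(b / 2) * (t - m / b) ^ 2) := by
    funext t
    rw [← exp_add]
    congr 1
    field_simp
    ring
  have hint := (integrable_exp_neg_mul_sq (half_pos hb)).comp_sub_right (m / b)
  rw [key]
  refine ⟨hint.const_mul _, ?_⟩
  rw [integral_const_mul, integral_sub_right_eq_self (fun t : ℝ => exp (-(b / 2) * t ^ 2)),
    integral_gaussian, mul_comm]
  congr 2
  field_simp

lemma integral_exp_mul_gauss {v : ℝ} (hv : 0 < v) {k : ℝ} (hk : 0 ≤ k) (m : ℝ) :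
    Integrable (fun t : ℝ => exp (m * t - k * t ^ 2 / 2) * gaussDensity v t) ∧
      ∫ t : ℝ, exp (m * t - k * t ^ 2 / 2) * gaussDensity v t =
        exp (m ^ 2 * v / (2 * (1 + k * v))) / √(1 + k * v) := by
  have hkv : 0 < 1 + k * v := by positivity
  have key : (fun t : ℝ => exp (m * t - k * t ^ 2 / 2) * gaussDensity v t) =
      fun t => exp (m * t - ((1 + k * v) / v) * t ^ 2 / 2) * (√(2 * π * v))⁻¹ := by
    funext t
    rw [gaussDensity, div_eq_mul_inv (exp _) (√_), ← mul_assoc, ← exp_add]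
    congr 2
    field_simp
    ring
  obtain ⟨h1, h2⟩ := exp_quadratic_integral (b := (1 + k * v) / v) (by positivity) m
  rw [key]
  refine ⟨h1.mul_const _, ?_⟩
  rw [integral_mul_const, h2]
  have e1 : m ^ 2 / (2 * ((1 + k * v) / v)) = m ^ 2 * v / (2 * (1 + k * v)) := by
    field_simp
  have e2 : √(2 * π / ((1 + k * v) / v)) = √(2 * π * v) / √(1 + k * v) := by
    rw [← sqrt_div (by positivity)]
    congr 1
    field_simp
  have : √(2 * π * v) ≠ 0 := by positivity
  rw [e1, e2]
  field_simp

/-- The Gaussian identity behind the mixture: with `v = β / (1 - β)` the right-hand side is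
`√(1 - β) * exp (β m² / 2)`, proportional to the Curie–Weiss weight at rescaled magnetization `m`. -/
lemma integral_tilt {v : ℝ} (hv : 0 < v) (m : ℝ) :
    Integrable (fun t : ℝ => exp (m * t - t ^ 2 / 2) * gaussDensity v t) ∧
      ∫ t : ℝ, exp (m * t - t ^ 2 / 2) * gaussDensity v t =
        exp (m ^ 2 * v / (2 * (1 + v))) / √(1 + v) := by
  simpa using integral_exp_mul_gauss hv zero_le_one m

lemma integral_mgf {v : ℝ} (hv : 0 < v) (m : ℝ) :
    Integrable (fun t : ℝ => exp (m * t) * gaussDensity v t) ∧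
      ∫ t : ℝ, exp (m * t) * gaussDensity v t = exp (m ^ 2 * v / 2) := by
  simpa using integral_exp_mul_gauss hv le_rfl m

lemma integral_gauss_one {v : ℝ} (hv : 0 < v) :
    Integrable (gaussDensity v) ∧ ∫ t : ℝ, gaussDensity v t = 1 := by
  simpa using integral_mgf hv 0

/-! ### The partition function -/

/-- The spin `±1` encoded by a Boolean. -/
def spn (b : Bool) : ℝ := if b then 1 else -1

/-- The rescaled magnetization `N^{-1/2} ∑ σ_i`. -/
noncomputable def mag {N : ℕ} (σ : Fin N → Bool) : ℝ := (∑ i, spn (σ i)) / √N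

lemma sum_prod_spin (N : ℕ) (f : Bool → ℝ) :
    ∑ σ : Fin N → Bool, ∏ i, f (σ i) = (f true + f false) ^ N := by
  have := Fintype.prod_sum (fun (_ : Fin N) (b : Bool) => f b)
  rw [← this]
  simp

lemma sum_exp_mag_mul {N : ℕ} (hN : 1 ≤ N) (t : ℝ) :
    ∑ σ : Fin N → Bool, exp (mag σ * t) ≤ 2 ^ N * exp (t ^ 2 / 2) := by
  have h0 : (0 : ℝ) < N := by exact_mod_cast hN
  have e : ∀ σ : Fin N → Bool, exp (mag σ * t) = ∏ i, exp (spn (σ i) * (t / √N)) := by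
    intro σ
    rw [← exp_sum, ← Finset.sum_mul, mag]
    congr 1
    ring
  simp_rw [e]
  rw [sum_prod_spin N (fun b => exp (spn b * (t / √N)))]
  have h1 : exp (spn true * (t / √N)) + exp (spn false * (t / √N)) = 2 * cosh (t / √N) := by
    rw [cosh_eq]; simp [spn]; ring
  rw [h1, mul_pow]
  gcongr
  calc cosh (t / √N) ^ N ≤ exp ((t / √N) ^ 2 / 2) ^ N := by
        gcongr
        exact cosh_le_exp_half_sq _
    _ = exp (t ^ 2 / 2) := by
        rw [← exp_nat_mul, div_pow, sq_sqrt h0.le]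
        congr 1
        field_simp

/-- Hubbard–Stratonovich bound on the partition function: linearize the square by a Gaussian
integral, sum the spins, and use `cosh x ≤ exp (x² / 2)`. -/
lemma sum_exp_sq_mag_le {N : ℕ} (hN : 1 ≤ N) {γ : ℝ} (hγ0 : 0 < γ) (hγ1 : γ < 1) :
    ∑ σ : Fin N → Bool, exp (γ * mag σ ^ 2 / 2) ≤ 2 ^ N / √(1 - γ) := by
  have h1γ : 0 < 1 - γ := by linarith
  set v := γ / (1 - γ) with hvdef
  have hv : 0 < v := by positivity
  have hv1 : 1 + v = (1 - γ)⁻¹ := by rw [hvdef]; field_simp; ring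
  have hs : √(1 + v) = (√(1 - γ))⁻¹ := by rw [hv1, sqrt_inv]
  have e : ∀ σ : Fin N → Bool, exp (γ * mag σ ^ 2 / 2) =
      √(1 + v) * ∫ t : ℝ, exp (mag σ * t - t ^ 2 / 2) * gaussDensity v t := by
    intro σ
    rw [(integral_tilt hv _).2]
    have : √(1 + v) ≠ 0 := by positivity
    field_simp
    congr 1
    rw [hv1, hvdef]; field_simp
  simp_rw [e]
  rw [← Finset.mul_sum, ← integral_finsetSum _ (fun σ _ => (integral_tilt hv (mag σ)).1), hs,
    div_eq_inv_mul]
  gcongr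
  calc ∫ t : ℝ, ∑ σ : Fin N → Bool, exp (mag σ * t - t ^ 2 / 2) * gaussDensity v t
      ≤ ∫ t : ℝ, 2 ^ N * gaussDensity v t := by
        apply integral_mono (integrable_finsetSum _ fun σ _ => (integral_tilt hv (mag σ)).1)
          ((integral_gauss_one hv).1.const_mul _)
        intro t
        show ∑ σ : Fin N → Bool, exp (mag σ * t - t ^ 2 / 2) * gaussDensity v t ≤ _
        rw [← Finset.sum_mul]
        refine mul_le_mul_of_nonneg_right ?_ (gaussDensity_nonneg v t)
        simp_rw [exp_sub]
        rw [← Finset.sum_div, div_le_iff₀ (exp_pos _)]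
        exact sum_exp_mag_mul hN t
    _ = 2 ^ N := by rw [integral_const_mul, (integral_gauss_one hv).2, mul_one]

/-! ### The truncated Gaussian tilt -/

/-- The truncation `t ↦ t 1{|t| ≤ T}`. -/
noncomputable def trunc (T t : ℝ) : ℝ := if |t| ≤ T then t else 0

lemma abs_trunc_le {T : ℝ} (hT : 0 ≤ T) (t : ℝ) : |trunc T t| ≤ T := by
  unfold trunc; split_ifs with h <;> simp [*]

lemma integrable_trunc {v : ℝ} (hv : 0 < v) {T : ℝ} (hT : 0 ≤ T) {f : ℝ → ℝ}
    (hf : Continuous f) : Integrable (fun t : ℝ => f (trunc T t) * gaussDensity v t) := by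
  obtain ⟨C, hC⟩ := (isCompact_Icc (a := -T) (b := T)).exists_bound_of_continuousOn
    hf.continuousOn
  have hm : Measurable (trunc T) := by
    unfold trunc
    exact Measurable.ite (measurableSet_le (by fun_prop) (by fun_prop)) measurable_id
      measurable_const
  refine (integral_gauss_one hv).1.bdd_mul (c := C)
    (hf.measurable.comp hm).aestronglyMeasurable (ae_of_all _ fun t => hC _ ?_)
  exact abs_le.mp (abs_trunc_le hT t)

/-- `E[exp (m ξ - ξ² / 2)]`, where `ξ` is the centred Gaussian of variance `v` truncated at `T`. -/
noncomputable def tiltTrunc (v T m : ℝ) : ℝ :=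
  ∫ t : ℝ, exp (m * trunc T t - trunc T t ^ 2 / 2) * gaussDensity v t

/-- Exponential Chebyshev bound for `1{|t| > T}`; it turns tail integrals into Gaussian integrals
with `m` shifted by `±1`. -/
lemma cutoff {T t : ℝ} (h : T < |t|) : 1 ≤ exp (-T) * (exp t + exp (-t)) := by
  have h1 : exp |t| ≤ exp t + exp (-t) := by
    rcases abs_cases t with ⟨h, _⟩ | ⟨h, _⟩ <;> rw [h]
    · linarith [exp_pos (-t)]
    · linarith [exp_pos t]
  calc (1 : ℝ) ≤ exp (-T) * exp |t| := by
        rw [← exp_add]; exact one_le_exp (by linarith)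
    _ ≤ _ := by gcongr

lemma tiltTrunc_le {v : ℝ} (hv : 0 < v) {T : ℝ} (hT : 0 ≤ T) (m : ℝ) :
    tiltTrunc v T m ≤ exp (m ^ 2 * v / (2 * (1 + v))) / √(1 + v) + 2 * exp (v / 2 - T) := by
  have i1 := integral_tilt hv m
  have i2 := integral_mgf hv 1
  have i3 := integral_mgf hv (-1)
  have : tiltTrunc v T m ≤ ∫ t : ℝ, (exp (m * t - t ^ 2 / 2) * gaussDensity v t +
      exp (-T) * (exp (1 * t) * gaussDensity v t + exp (-1 * t) * gaussDensity v t)) := by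
    refine integral_mono (integrable_trunc hv hT (f := fun x => exp (m * x - x ^ 2 / 2))
      (by fun_prop)) (i1.1.add ((i2.1.add i3.1).const_mul _)) fun t => ?_
    have hg := gaussDensity_nonneg v t
    show exp (m * trunc T t - trunc T t ^ 2 / 2) * gaussDensity v t ≤
      exp (m * t - t ^ 2 / 2) * gaussDensity v t +
      exp (-T) * (exp (1 * t) * gaussDensity v t + exp (-1 * t) * gaussDensity v t)
    rw [← add_mul, ← mul_assoc, ← add_mul]
    refine mul_le_mul_of_nonneg_right ?_ hg
    by_cases h : |t| ≤ T
    · simp only [trunc, h, if_true]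
      have : 0 ≤ exp (-T) * (exp (1 * t) + exp (-1 * t)) := by positivity
      linarith
    · have := cutoff (not_le.mp h)
      simp only [trunc, h, if_false]
      simp only [one_mul, neg_one_mul, mul_zero, ne_eq, OfNat.ofNat_ne_zero, not_false_eq_true, zero_pow, zero_div, sub_zero, exp_zero]
      linarith [exp_pos (m * t - t ^ 2 / 2)]
  refine this.trans_eq ?_
  have i4 := (i2.1.fun_add i3.1).const_mul (exp (-T))
  rw [integral_add i1.1 i4, integral_const_mul,
    integral_add i2.1 i3.1, i1.2, i2.2, i3.2, exp_sub, exp_neg]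
  norm_num
  ring

/-- For `|m| ≤ T / 2` truncation costs only a factor `1 - 2 exp (1 / 2 - T / 2)`. -/
lemma le_tiltTrunc {v : ℝ} (hv : 0 < v) {T : ℝ} (hT : 0 ≤ T) {m : ℝ} (hm : |m| ≤ T / 2) :
    exp (m ^ 2 * v / (2 * (1 + v))) / √(1 + v) * (1 - 2 * exp (1 / 2 - T / 2)) ≤
      tiltTrunc v T m := by
  have i1 := integral_tilt hv m
  have i2 := integral_tilt hv (m + 1)
  have i3 := integral_tilt hv (m - 1)
  have : ∫ t : ℝ, (exp (m * t - t ^ 2 / 2) * gaussDensity v t -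
      exp (-T) * (exp ((m + 1) * t - t ^ 2 / 2) * gaussDensity v t +
        exp ((m - 1) * t - t ^ 2 / 2) * gaussDensity v t)) ≤ tiltTrunc v T m := by
    refine integral_mono (i1.1.sub ((i2.1.add i3.1).const_mul _))
      (integrable_trunc hv hT (f := fun x => exp (m * x - x ^ 2 / 2))
      (by fun_prop)) fun t => ?_
    have hg := gaussDensity_nonneg v t
    show exp (m * t - t ^ 2 / 2) * gaussDensity v t -
      exp (-T) * (exp ((m + 1) * t - t ^ 2 / 2) * gaussDensity v t +
        exp ((m - 1) * t - t ^ 2 / 2) * gaussDensity v t) ≤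
      exp (m * trunc T t - trunc T t ^ 2 / 2) * gaussDensity v t
    rw [← add_mul, ← mul_assoc, ← sub_mul]
    refine mul_le_mul_of_nonneg_right ?_ hg
    have e2 : exp ((m + 1) * t - t ^ 2 / 2) = exp (m * t - t ^ 2 / 2) * exp t := by
      rw [← exp_add]; congr 1; ring
    have e3 : exp ((m - 1) * t - t ^ 2 / 2) = exp (m * t - t ^ 2 / 2) * exp (-t) := by
      rw [← exp_add]; congr 1; ring
    rw [e2, e3]
    by_cases h : |t| ≤ T
    · simp only [trunc, h, if_true]
      have : 0 ≤ exp (-T) * (exp (m * t - t ^ 2 / 2) * exp t +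
        exp (m * t - t ^ 2 / 2) * exp (-t)) := by positivity
      linarith
    · have := cutoff (not_le.mp h)
      have h2 := mul_le_mul_of_nonneg_left this (exp_pos (m * t - t ^ 2 / 2)).le
      simp only [trunc, h, if_false]
      have h3 : 0 ≤ exp (m * 0 - 0 ^ 2 / 2) := by positivity
      linarith
  refine le_trans ?_ this
  have i4 := (i2.1.fun_add i3.1).const_mul (exp (-T))
  rw [integral_sub i1.1 i4, integral_const_mul,
    integral_add i2.1 i3.1, i1.2, i2.2, i3.2]
  have hw : v / (1 + v) ≤ 1 := by rw [div_le_one (by positivity)]; linarith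
  have hw0 : 0 ≤ v / (1 + v) := by positivity
  have bd : ∀ s : ℝ, (s = 1 ∨ s = -1) → exp (-T) * exp ((m + s) ^ 2 * v / (2 * (1 + v))) ≤
      exp (m ^ 2 * v / (2 * (1 + v))) * exp (1 / 2 - T / 2) := by
    intro s hs
    rw [← exp_add, ← exp_add, exp_le_exp]
    have e : ∀ x : ℝ, x * v / (2 * (1 + v)) = x * (v / (1 + v)) / 2 := by
      intro x; field_simp
    rw [e, e]
    have hss : s ^ 2 = 1 := by rcases hs with rfl | rfl <;> norm_num
    have hms : m * s ≤ T / 2 := by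
      rcases hs with rfl | rfl <;> linarith [abs_le.mp hm]
    have : (1 + 2 * (m * s)) * (v / (1 + v)) ≤ 1 + T := by
      calc _ ≤ (1 + T) * (v / (1 + v)) := by
            gcongr; linarith
        _ ≤ _ := mul_le_of_le_one_right (by linarith) hw
    nlinarith
  have b1 := bd 1 (Or.inl rfl)
  have b2 := bd (-1) (Or.inr rfl)
  rw [← sub_eq_add_neg] at b2
  have b3 := div_le_div_of_nonneg_right (add_le_add b1 b2) (sqrt_nonneg (1 + v))
  have e4 : ∀ x y z w r : ℝ, x / r - y * (z / r + w / r) = x / r - (y * z + y * w) / r := by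
    intros; ring
  have e5 : ∀ x z r : ℝ, x / r * (1 - 2 * z) = x / r - (x * z + x * z) / r := by
    intros; ring
  rw [e4, e5]
  linarith

/-- A lower bound valid for every `m`, from `m x ≥ -(m² + x²) / 2`. -/
lemma tiltTrunc_crude {v : ℝ} (hv : 0 < v) {T : ℝ} (hT : 0 ≤ T) (m : ℝ) :
    exp (-(m ^ 2 / 2)) / √(1 + 2 * v) ≤ tiltTrunc v T m := by
  have i1 := integral_exp_mul_gauss hv (k := 2) (by norm_num) 0
  have : ∫ t : ℝ, exp (-(m ^ 2 / 2)) * (exp (0 * t - 2 * t ^ 2 / 2) * gaussDensity v t) ≤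
      tiltTrunc v T m := by
    refine integral_mono (i1.1.const_mul _)
      (integrable_trunc hv hT (f := fun x => exp (m * x - x ^ 2 / 2))
      (by fun_prop)) fun t => ?_
    have hg := gaussDensity_nonneg v t
    show exp (-(m ^ 2 / 2)) * (exp (0 * t - 2 * t ^ 2 / 2) * gaussDensity v t) ≤
      exp (m * trunc T t - trunc T t ^ 2 / 2) * gaussDensity v t
    rw [← mul_assoc, ← exp_add]
    refine mul_le_mul_of_nonneg_right (exp_le_exp.mpr ?_) hg
    have : trunc T t ^ 2 ≤ t ^ 2 := by
      unfold trunc; split_ifs <;> simp [sq_nonneg]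
    nlinarith [sq_nonneg (m + trunc T t)]
  refine le_trans (le_of_eq ?_) this
  rw [integral_const_mul, i1.2]
  simp
  ring

/-! ### Product measures versus exponential tilts -/

lemma abs_log_one_add {x : ℝ} (hx : |x| ≤ 1 / 2) :
    |log (1 + x) - (x - x ^ 2 / 2)| ≤ 2 * |x| ^ 3 := by
  have h := abs_log_sub_add_sum_range_le (x := -x) (by rw [abs_neg]; linarith) 2
  rw [abs_neg] at h
  have h2 : |x| ^ (2 + 1) / (1 - |x|) ≤ 2 * |x| ^ 3 := by
    rw [div_le_iff₀ (by linarith)]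
    have := mul_nonneg (pow_nonneg (abs_nonneg x) 3) (by linarith : (0 : ℝ) ≤ 1 - 2 * |x|)
    calc |x| ^ (2 + 1) ≤ |x| ^ 3 + |x| ^ 3 * (1 - 2 * |x|) := le_add_of_nonneg_right this
      _ = 2 * |x| ^ 3 * (1 - |x|) := by ring
  refine le_trans (le_of_eq ?_) (h.trans h2)
  congr 1
  norm_num [Finset.sum_range_succ]
  ring

/-- The cubic Taylor error of each factor is at most `2 (T / √N)³`, so the total error in the exponent
is at most `2 T³ / √N`, uniformly in the configuration. -/
lemma prod_bounds {N : ℕ} (hN : 1 ≤ N) {T : ℝ} (hT2 : T / √N ≤ 1 / 2)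
    (σ : Fin N → Bool) {x : ℝ} (hx : |x| ≤ T) :
    exp (-(2 * T ^ 3 / √N)) * exp (mag σ * x - x ^ 2 / 2) ≤ ∏ i, (1 + spn (σ i) * x / √N) ∧
      ∏ i, (1 + spn (σ i) * x / √N) ≤ exp (2 * T ^ 3 / √N) * exp (mag σ * x - x ^ 2 / 2) := by
  have h0 : (0 : ℝ) < N := by exact_mod_cast hN
  have hs0 : 0 < √(N : ℝ) := by positivity
  have hsq : ∀ b, spn b ^ 2 = 1 := by intro b; cases b <;> simp [spn]
  have habs : ∀ b, |spn b| = 1 := by intro b; cases b <;> simp [spn]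
  have hu : ∀ b, |spn b * x / √N| ≤ T / √N := by
    intro b
    rw [abs_div, abs_mul, habs, one_mul, abs_of_pos hs0]
    gcongr
  have hpos : ∀ b, 0 < 1 + spn b * x / √N := by
    intro b
    linarith [(abs_le.mp ((hu b).trans hT2)).1]
  have hprod : ∏ i, (1 + spn (σ i) * x / √N) = exp (∑ i, log (1 + spn (σ i) * x / √N)) := by
    rw [exp_sum]
    exact Finset.prod_congr rfl fun i _ => (exp_log (hpos _)).symm
  have hN3 : (N : ℝ) * (2 * (T / √N) ^ 3) = 2 * T ^ 3 / √N := by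
    have : (N : ℝ) = √N ^ 2 := (sq_sqrt h0.le).symm
    nth_rw 1 [this]
    field_simp
  have hmain : |∑ i, log (1 + spn (σ i) * x / √N) - (mag σ * x - x ^ 2 / 2)| ≤
      2 * T ^ 3 / √N := by
    have e : mag σ * x - x ^ 2 / 2 =
        ∑ i, (spn (σ i) * x / √N - (spn (σ i) * x / √N) ^ 2 / 2) := by
      rw [Finset.sum_sub_distrib]
      simp_rw [div_pow, mul_pow, hsq, sq_sqrt h0.le]
      simp only [Finset.sum_const, Finset.card_univ, Fintype.card_fin, nsmul_eq_mul]
      rw [← Finset.sum_div, ← Finset.sum_mul, mag]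
      field_simp
    rw [e, ← Finset.sum_sub_distrib, ← hN3]
    refine (Finset.abs_sum_le_sum_abs _ _).trans ?_
    calc _ ≤ ∑ i : Fin N, 2 * (T / √N) ^ 3 := by
          refine Finset.sum_le_sum fun i _ => (abs_log_one_add ((hu _).trans hT2)).trans ?_
          gcongr
          exact hu _
      _ = _ := by simp
  rw [hprod, ← exp_add, ← exp_add, exp_le_exp, exp_le_exp]
  constructor <;> linarith [abs_le.mp hmain]



/-- The density `2 ^ N ν_N(σ)` of the mixture with respect to the uniform measure. -/
noncomputable def mixDensity (v T : ℝ) {N : ℕ} (σ : Fin N → Bool) : ℝ :=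
  ∫ t : ℝ, (∏ i, (1 + spn (σ i) * trunc T t / √N)) * gaussDensity v t

lemma integrable_mix {v : ℝ} (hv : 0 < v) {T : ℝ} (hT : 0 ≤ T) {N : ℕ} (σ : Fin N → Bool) :
    Integrable fun t : ℝ => (∏ i, (1 + spn (σ i) * trunc T t / √N)) * gaussDensity v t :=
  integrable_trunc hv hT (f := fun x => ∏ i, (1 + spn (σ i) * x / √N)) (by fun_prop)

lemma mixDensity_bounds {v : ℝ} (hv : 0 < v) {T : ℝ} (hT : 0 ≤ T) {N : ℕ} (hN : 1 ≤ N)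
    (hT2 : T / √N ≤ 1 / 2) (σ : Fin N → Bool) :
    exp (-(2 * T ^ 3 / √N)) * tiltTrunc v T (mag σ) ≤ mixDensity v T σ ∧
      mixDensity v T σ ≤ exp (2 * T ^ 3 / √N) * tiltTrunc v T (mag σ) := by
  have i1 := integrable_mix hv hT σ
  have i2 := integrable_trunc hv hT (f := fun x => exp (mag σ * x - x ^ 2 / 2)) (by fun_prop)
  have b := fun t => prod_bounds hN hT2 σ (abs_trunc_le hT t)
  unfold tiltTrunc mixDensity
  rw [← integral_const_mul, ← integral_const_mul]
  constructor
  · refine integral_mono (i2.const_mul _) i1 fun t => ?_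
    simp only
    rw [← mul_assoc]
    exact mul_le_mul_of_nonneg_right (b t).1 (gaussDensity_nonneg v t)
  · refine integral_mono i1 (i2.const_mul _) fun t => ?_
    simp only
    rw [← mul_assoc]
    exact mul_le_mul_of_nonneg_right (b t).2 (gaussDensity_nonneg v t)

lemma sum_mixDensity {v : ℝ} (hv : 0 < v) {T : ℝ} (hT : 0 ≤ T) (N : ℕ) :
    ∑ σ : Fin N → Bool, mixDensity v T σ = 2 ^ N := by
  unfold mixDensity
  rw [← integral_finsetSum _ (fun σ _ => integrable_mix hv hT σ)]
  have : ∀ t, ∑ σ : Fin N → Bool, (∏ i, (1 + spn (σ i) * trunc T t / √N)) * gaussDensity v t =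
      2 ^ N * gaussDensity v t := by
    intro t
    rw [← Finset.sum_mul, sum_prod_spin N (fun b => 1 + spn b * trunc T t / √N)]
    congr 2
    simp [spn]
    ring
  simp_rw [this]
  rw [integral_const_mul, (integral_gauss_one hv).2, mul_one]

/-! ### Entropy estimates -/

/-- The Gibbs inequality. -/
lemma relEnt_nonneg {α : Type*} [Fintype α] {p q : α → ℝ} (hp : ∀ x, 0 < p x)
    (hq : ∀ x, 0 < q x) (hp1 : ∑ x, p x = 1) (hq1 : ∑ x, q x = 1) : 0 ≤ relEnt p q := by
  have : ∑ x, (p x - q x) ≤ relEnt p q := by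
    refine Finset.sum_le_sum fun x _ => ?_
    have h := one_sub_inv_le_log_of_pos (div_pos (hp x) (hq x))
    have h2 := mul_le_mul_of_nonneg_left h (hp x).le
    refine le_trans (le_of_eq ?_) h2
    have := (hp x).ne'
    field_simp
  rw [Finset.sum_sub_distrib, hp1, hq1, sub_self] at this
  exact this

lemma relEnt_le {α : Type*} [Fintype α] {p q : α → ℝ} (hp : ∀ x, 0 < p x)
    (hq : ∀ x, 0 < q x) (f : α → ℝ) (h : ∀ x, p x ≤ exp (f x) * q x) :
    relEnt p q ≤ ∑ x, p x * f x := by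
  refine Finset.sum_le_sum fun x _ => mul_le_mul_of_nonneg_left ?_ (hp x).le
  rw [log_le_iff_le_exp (div_pos (hp x) (hq x)), div_le_iff₀ (hq x)]
  exact h x

/-- An `N`-independent bound for `E_{μ_N}[(1 + mag²)²]`. -/
noncomputable def momentConst (β : ℝ) : ℝ :=
  32 / (1 - β) ^ 2 * exp ((1 - β) / 4) / √((1 - β) / 2)

/-- The weight `(1 + mag²)²` is absorbed by raising the inverse temperature halfway from `β` to `1`,
where the partition function is still `O(2 ^ N)`. -/
lemma sum_moment_le {N : ℕ} (hN : 1 ≤ N) {β : ℝ} (hβ0 : 0 < β) (hβ1 : β < 1) :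
    ∑ σ : Fin N → Bool, exp (β * mag σ ^ 2 / 2) * (1 + mag σ ^ 2) ^ 2 ≤
      momentConst β * 2 ^ N := by
  have h1 : 0 < 1 - β := by linarith
  have key := sum_exp_sq_mag_le hN (γ := β + (1 - β) / 2) (by linarith) (by linarith)
  have e : 1 - (β + (1 - β) / 2) = (1 - β) / 2 := by ring
  rw [e] at key
  have pt : ∀ σ : Fin N → Bool, exp (β * mag σ ^ 2 / 2) * (1 + mag σ ^ 2) ^ 2 ≤
      32 / (1 - β) ^ 2 * exp ((1 - β) / 4) * exp ((β + (1 - β) / 2) * mag σ ^ 2 / 2) := by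
    intro σ
    have q := quadratic_le_exp_of_nonneg (x := (1 - β) / 4 * (1 + mag σ ^ 2)) (by positivity)
    have q2 : (1 + mag σ ^ 2) ^ 2 ≤ 32 / (1 - β) ^ 2 * exp ((1 - β) / 4 * (1 + mag σ ^ 2)) := by
      have : 0 ≤ (1 - β) / 4 * (1 + mag σ ^ 2) := by positivity
      have q3 : ((1 - β) / 4 * (1 + mag σ ^ 2)) ^ 2 / 2 ≤
        exp ((1 - β) / 4 * (1 + mag σ ^ 2)) := by linarith
      calc (1 + mag σ ^ 2) ^ 2
          = 32 / (1 - β) ^ 2 * (((1 - β) / 4 * (1 + mag σ ^ 2)) ^ 2 / 2) := by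
            field_simp; ring
        _ ≤ _ := by gcongr
    calc _ ≤ exp (β * mag σ ^ 2 / 2) *
          (32 / (1 - β) ^ 2 * exp ((1 - β) / 4 * (1 + mag σ ^ 2))) := by gcongr
      _ = 32 / (1 - β) ^ 2 *
          (exp (β * mag σ ^ 2 / 2) * exp ((1 - β) / 4 * (1 + mag σ ^ 2))) := by ring
      _ = _ := by
        rw [mul_assoc, ← exp_add, ← exp_add]
        congr 2
        ring
  calc _ ≤ ∑ σ : Fin N → Bool,
        32 / (1 - β) ^ 2 * exp ((1 - β) / 4) * exp ((β + (1 - β) / 2) * mag σ ^ 2 / 2) :=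
        Finset.sum_le_sum fun σ _ => pt σ
    _ ≤ 32 / (1 - β) ^ 2 * exp ((1 - β) / 4) * (2 ^ N / √((1 - β) / 2)) := by
        rw [← Finset.mul_sum]; gcongr
    _ = _ := by unfold momentConst; ring

/-- The non-asymptotic form of the result: `p` is the Curie–Weiss measure and `q` the mixture.
The errors `ε`, `η`, `ζ` come respectively from the Taylor expansion of the product, the mass beyond
the truncation level, and the truncation of the tilted Gaussian at `|mag| ≤ T / 2`; the term in
`momentConst β` accounts for `|mag| > T / 2`. -/
theorem entropy_bounds {N : ℕ} (hN : 1 ≤ N) {β v T ε η ζ Z : ℝ} (hβ0 : 0 < β) (hβ1 : β < 1)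
    (hv : v = β / (1 - β)) (hT : 0 < T) (hT2 : T / √N ≤ 1 / 2)
    (hε : ε = 2 * T ^ 3 / √N) (hε1 : ε ≤ 1)
    (hη : η = 2 * √(1 + v) * exp (v / 2 - T))
    (hζ : ζ = 2 * exp (1 / 2 - T / 2)) (hζ1 : ζ ≤ 1 / 2)
    (hZ : Z = ∑ σ : Fin N → Bool, exp (β * mag σ ^ 2 / 2))
    {p q : (Fin N → Bool) → ℝ}
    (hp : ∀ σ, p σ = exp (β * mag σ ^ 2 / 2) / Z)
    (hq : ∀ σ, q σ = mixDensity v T σ / 2 ^ N) :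
    (0 ≤ relEnt p q ∧
      relEnt p q ≤ 2 * ε + η + 2 * ζ + 4 * (1 + v) * momentConst β / T ^ 2) ∧
    (0 ≤ relEnt q p ∧ relEnt q p ≤ ε + η) := by
  have h1β : 0 < 1 - β := by linarith
  have hv0 : 0 < v := by rw [hv]; positivity
  have hv1 : 1 + v = (1 - β)⁻¹ := by rw [hv]; field_simp; ring
  have hs : √(1 + v) = (√(1 - β))⁻¹ := by rw [hv1, sqrt_inv]
  have hs0 : 0 < √(1 + v) := by positivity
  have hε0 : 0 ≤ ε := by rw [hε]; positivity
  have hη0 : 0 ≤ η := by rw [hη]; positivity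
  have hζ0 : 0 ≤ ζ := by rw [hζ]; positivity
  have h2N : (0 : ℝ) < 2 ^ N := by positivity
  have hexpo : ∀ m : ℝ, m ^ 2 * v / (2 * (1 + v)) = β * m ^ 2 / 2 := by
    intro m; rw [hv1, hv]; field_simp
  have hZlow : (2 : ℝ) ^ N ≤ Z := by
    rw [hZ]
    calc (2 : ℝ) ^ N = ∑ σ : Fin N → Bool, (1 : ℝ) := by simp
      _ ≤ _ := Finset.sum_le_sum fun σ _ => one_le_exp (by positivity)
  have hZ0 : 0 < Z := h2N.trans_le hZlow
  have hZup : Z ≤ 2 ^ N * √(1 + v) := by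
    rw [hZ, hs, ← div_eq_mul_inv]; exact sum_exp_sq_mag_le hN hβ0 hβ1
  have hb := fun σ => mixDensity_bounds hv0 hT.le hN hT2 σ
  rw [← hε] at hb
  have hcrude : ∀ σ, exp (-ε) * (exp (-(mag σ ^ 2 / 2)) / √(1 + 2 * v)) / 2 ^ N ≤ q σ := by
    intro σ
    rw [hq]
    gcongr
    refine le_trans ?_ (hb σ).1
    gcongr
    exact tiltTrunc_crude hv0 hT.le _
  have hq0 : ∀ σ, 0 < q σ := fun σ => lt_of_lt_of_le (by positivity) (hcrude σ)
  have hp0 : ∀ σ, 0 < p σ := fun σ => by rw [hp]; positivity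
  have hp1 : ∑ σ, p σ = 1 := by
    simp_rw [hp]
    rw [← Finset.sum_div, ← hZ, div_self hZ0.ne']
  have hq1 : ∑ σ, q σ = 1 := by
    simp_rw [hq]
    rw [← Finset.sum_div, sum_mixDensity hv0 hT.le, div_self h2N.ne']
  have hup : ∀ σ, q σ ≤ exp (ε + η) * (Z / (2 ^ N * √(1 + v))) * p σ := by
    intro σ
    rw [hp, hq]
    have h1 := tiltTrunc_le hv0 hT.le (mag σ)
    rw [hexpo] at h1
    have h2 : exp (β * mag σ ^ 2 / 2) / √(1 + v) + 2 * exp (v / 2 - T) ≤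
        exp (β * mag σ ^ 2 / 2) / √(1 + v) * exp η := by
      have h3 : 2 * exp (v / 2 - T) = 1 / √(1 + v) * η := by rw [hη]; field_simp
      have h4 : 1 / √(1 + v) * η ≤ exp (β * mag σ ^ 2 / 2) / √(1 + v) * η := by
        gcongr; exact one_le_exp (by positivity)
      have h5 : exp (β * mag σ ^ 2 / 2) / √(1 + v) * (η + 1) ≤
          exp (β * mag σ ^ 2 / 2) / √(1 + v) * exp η := by
        gcongr; exact add_one_le_exp η
      linarith
    have h6 : mixDensity v T σ ≤
        exp ε * (exp (β * mag σ ^ 2 / 2) / √(1 + v) * exp η) :=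
      (hb σ).2.trans (by gcongr; exact h1.trans h2)
    calc mixDensity v T σ / 2 ^ N
        ≤ exp ε * (exp (β * mag σ ^ 2 / 2) / √(1 + v) * exp η) / 2 ^ N := by gcongr
      _ = _ := by rw [exp_add]; field_simp
  have hc1 : Z / (2 ^ N * √(1 + v)) ≤ 1 := by
    rw [div_le_one (by positivity)]; exact hZup
  -- Summing `hup` over all configurations, both measures having mass one.
  have hclow : exp (-(ε + η)) ≤ Z / (2 ^ N * √(1 + v)) := by
    have h := Finset.sum_le_sum fun σ (_ : σ ∈ Finset.univ) => hup σ
    rw [← Finset.mul_sum, hp1, hq1, mul_one] at h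
    rw [exp_neg, inv_le_iff_one_le_mul₀ (exp_pos _), mul_comm]
    exact h
  refine ⟨⟨relEnt_nonneg hp0 hq0 hp1 hq1, ?_⟩, relEnt_nonneg hq0 hp0 hq1 hp1, ?_⟩
  · refine (relEnt_le hp0 hq0
      (fun σ => 2 * ε + η + 2 * ζ + 4 * (1 + v) / T ^ 2 * (1 + mag σ ^ 2) ^ 2)
      fun σ => ?_).trans ?_
    · by_cases hm : |mag σ| ≤ T / 2
      · have h1 := le_tiltTrunc hv0 hT.le hm
        rw [hexpo, ← hζ] at h1
        have h7 : exp (-(2 * ζ)) ≤ 1 - ζ := by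
          rw [exp_neg, inv_le_iff_one_le_mul₀ (exp_pos _)]
          have := add_one_le_exp (2 * ζ)
          nlinarith
        have h2 : exp (-(2 * ε + η + 2 * ζ)) * p σ ≤ q σ := by
          calc exp (-(2 * ε + η + 2 * ζ)) * p σ
              = exp (-ε) * exp (-(2 * ζ)) * exp (-(ε + η)) * p σ := by
                rw [← exp_add, ← exp_add]; congr 2; ring
            _ ≤ exp (-ε) * (1 - ζ) * (Z / (2 ^ N * √(1 + v))) * p σ := by
                have h8 : 0 ≤ 1 - ζ := by linarith
                have h9 := (hp0 σ).le
                gcongr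
            _ = exp (-ε) * (exp (β * mag σ ^ 2 / 2) / √(1 + v) * (1 - ζ)) / 2 ^ N := by
                rw [hp]; field_simp
            _ ≤ q σ := by
                rw [hq]
                gcongr
                exact le_trans (by gcongr) (hb σ).1
        rw [exp_neg, inv_mul_le_iff₀ (exp_pos _)] at h2
        refine h2.trans (mul_le_mul_of_nonneg_right (exp_le_exp.mpr ?_) (hq0 σ).le)
        have : 0 ≤ 4 * (1 + v) / T ^ 2 * (1 + mag σ ^ 2) ^ 2 := by positivity
        linarith
      -- On this rare event the crude bound `O(1 + mag²)` on the log-ratio is multiplied by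
      -- `4 mag² / T² ≥ 1`, to be controlled by the fourth moment.
      · have hm2 : T ^ 2 ≤ 4 * mag σ ^ 2 := by
          have := not_le.mp hm
          rw [← sq_abs (mag σ)]
          nlinarith
        have hsv : √(1 + 2 * v) ≤ exp v := by
          rw [sqrt_le_iff]
          refine ⟨(exp_pos v).le, ?_⟩
          have := add_one_le_exp v
          nlinarith
        have h2 : p σ ≤ exp (ε + v + mag σ ^ 2) * q σ := by
          calc p σ ≤ exp (mag σ ^ 2 / 2) / 2 ^ N := by
                rw [hp]
                gcongr
                nlinarith [sq_nonneg (mag σ)]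
            _ = exp (ε + v + mag σ ^ 2) *
                  (exp (-ε) * (exp (-(mag σ ^ 2 / 2)) / exp v) / 2 ^ N) := by
                rw [← exp_sub, ← exp_add, mul_div_assoc', ← exp_add]
                congr 2
                ring
            _ ≤ exp (ε + v + mag σ ^ 2) *
                  (exp (-ε) * (exp (-(mag σ ^ 2 / 2)) / √(1 + 2 * v)) / 2 ^ N) := by gcongr
            _ ≤ _ := by gcongr; exact hcrude σ
        refine h2.trans (mul_le_mul_of_nonneg_right (exp_le_exp.mpr ?_) (hq0 σ).le)
        have h8 : 1 ≤ 4 * mag σ ^ 2 / T ^ 2 := by rw [le_div_iff₀ (by positivity)]; linarith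
        have h9 : ε + v + mag σ ^ 2 ≤ (1 + v) * (1 + mag σ ^ 2) := by
          nlinarith [sq_nonneg (mag σ)]
        have h10 : (1 + v) * (1 + mag σ ^ 2) ≤ 4 * (1 + v) / T ^ 2 * (1 + mag σ ^ 2) ^ 2 := by
          calc (1 + v) * (1 + mag σ ^ 2)
              ≤ (1 + v) * (1 + mag σ ^ 2) * (4 * mag σ ^ 2 / T ^ 2) :=
                le_mul_of_one_le_right (by positivity) h8
            _ ≤ (1 + v) * (1 + mag σ ^ 2) * (4 * (1 + mag σ ^ 2) / T ^ 2) := by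
                gcongr; linarith
            _ = _ := by ring
        linarith
    · simp_rw [mul_add _ (2 * ε + η + 2 * ζ)]
      rw [Finset.sum_add_distrib, ← Finset.sum_mul, hp1, one_mul]
      gcongr
      have hmom := sum_moment_le hN hβ0 hβ1
      have e : ∑ σ, p σ * (4 * (1 + v) / T ^ 2 * (1 + mag σ ^ 2) ^ 2) =
          4 * (1 + v) / T ^ 2 *
            ((∑ σ : Fin N → Bool, exp (β * mag σ ^ 2 / 2) * (1 + mag σ ^ 2) ^ 2) / Z) := by
        rw [Finset.sum_div, Finset.mul_sum]
        refine Finset.sum_congr rfl fun σ _ => ?_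
        rw [hp]; ring
      have hK : 0 ≤ momentConst β := by unfold momentConst; positivity
      have e2 : 4 * (1 + v) * momentConst β / T ^ 2 = 4 * (1 + v) / T ^ 2 * momentConst β := by
        ring
      rw [e, e2]
      refine mul_le_mul_of_nonneg_left ?_ (by positivity)
      rw [div_le_iff₀ hZ0]
      exact hmom.trans (mul_le_mul_of_nonneg_left hZlow hK)
  · refine (relEnt_le hq0 hp0 (fun _ => ε + η) fun σ => ?_).trans ?_
    · refine (hup σ).trans (mul_le_mul_of_nonneg_right ?_ (hp0 σ).le)
      exact mul_le_of_le_one_right (exp_pos _).le hc1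
    · rw [← Finset.sum_mul, hq1, one_mul]

end CurieWeiss

/-- For the Curie–Weiss model with `0 < β < 1` and `h = 0`, with
`ξ̃ ∼ N(0, β/(1−β))` truncated at `N^δ` (`0 < δ < 1/6`) and the mixture of product
measures `ν_N(σ) = 2^{−N} E[∏_i (1 + σ_i ξ_N/√N)]`, one has `H(μ_N|ν_N) → 0` and
`H(ν_N|μ_N) → 0` as `N → ∞`. Spins `±1` are encoded by `Bool` via `spin`. -/
theorem stmt_6
    (β : ℝ) (hβ0 : 0 < β) (hβ1 : β < 1)
    (δ : ℝ) (hδ0 : 0 < δ) (hδ : δ < 1 / 6)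
    (spin : Bool → ℝ) (hspin : ∀ b, spin b = if b then 1 else -1)
    (Z : ℕ → ℝ)
    (hZ : ∀ N : ℕ, Z N = ∑ σ : Fin N → Bool,
      Real.exp (β / (2 * N) * ∑ i, ∑ j, spin (σ i) * spin (σ j)))
    (μ : ∀ N : ℕ, (Fin N → Bool) → ℝ)
    (hμ : ∀ N σ, μ N σ =
      Real.exp (β / (2 * N) * ∑ i, ∑ j, spin (σ i) * spin (σ j)) / Z N)
    (gauss : ℝ → ℝ)
    (hgauss : ∀ t, gauss t =
      Real.exp (-t ^ 2 / (2 * (β / (1 - β)))) / Real.sqrt (2 * Real.pi * (β / (1 - β))))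
    (ν : ∀ N : ℕ, (Fin N → Bool) → ℝ)
    (hν : ∀ N σ, ν N σ = (2 : ℝ) ^ (-(N : ℤ)) *
      ∫ t : ℝ, (∏ i, (1 + spin (σ i) *
        (if |t| ≤ (N : ℝ) ^ δ then t else 0) / Real.sqrt N)) * gauss t) :
    Tendsto (fun N => relEnt (μ N) (ν N)) atTop (nhds 0) ∧
      Tendsto (fun N => relEnt (ν N) (μ N)) atTop (nhds 0) := by
  have h1β : 0 < 1 - β := by linarith
  set v := β / (1 - β) with hv
  have hv0 : 0 < v := by positivity
  have hT : Tendsto (fun N : ℕ => (N : ℝ) ^ δ) atTop atTop :=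
    (tendsto_rpow_atTop hδ0).comp tendsto_natCast_atTop_atTop
  have hpow : ∀ a : ℝ, a < 0 → Tendsto (fun N : ℕ => (N : ℝ) ^ a) atTop (nhds 0) := by
    intro a ha
    have := (tendsto_rpow_neg_atTop (neg_pos.mpr ha)).comp tendsto_natCast_atTop_atTop
    simpa [Function.comp_def] using this
  have hu : Tendsto (fun N : ℕ => (N : ℝ) ^ δ / √N) atTop (nhds 0) := by
    refine (hpow (δ - 1 / 2) (by linarith)).congr' ?_
    filter_upwards [eventually_ge_atTop 1] with N hN
    have h0 : (0 : ℝ) < N := by exact_mod_cast hN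
    rw [rpow_sub h0, sqrt_eq_rpow]
  have hε : Tendsto (fun N : ℕ => 2 * ((N : ℝ) ^ δ) ^ 3 / √N) atTop (nhds 0) := by
    have := (hpow (δ * 3 - 1 / 2) (by linarith)).const_mul 2
    rw [mul_zero] at this
    refine this.congr' ?_
    filter_upwards [eventually_ge_atTop 1] with N hN
    have h0 : (0 : ℝ) < N := by exact_mod_cast hN
    rw [rpow_sub h0, sqrt_eq_rpow, rpow_mul h0.le, mul_div_assoc]
    norm_num
  have hη : Tendsto (fun N : ℕ => 2 * √(1 + v) * exp (v / 2 - (N : ℝ) ^ δ)) atTop (nhds 0) := by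
    have h1 : Tendsto (fun N : ℕ => v / 2 - (N : ℝ) ^ δ) atTop atBot :=
      tendsto_const_nhds.add_atBot (tendsto_neg_atTop_atBot.comp hT)
    simpa using (tendsto_exp_atBot.comp h1).const_mul (2 * √(1 + v))
  have hζ : Tendsto (fun N : ℕ => 2 * exp (1 / 2 - (N : ℝ) ^ δ / 2)) atTop (nhds 0) := by
    have h1 : Tendsto (fun N : ℕ => 1 / 2 - (N : ℝ) ^ δ / 2) atTop atBot :=
      tendsto_const_nhds.add_atBot
        (tendsto_neg_atTop_atBot.comp (hT.atTop_div_const two_pos))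
    simpa using (tendsto_exp_atBot.comp h1).const_mul 2
  have hK : Tendsto (fun N : ℕ => 4 * (1 + v) * CurieWeiss.momentConst β / ((N : ℝ) ^ δ) ^ 2)
      atTop (nhds 0) :=
    ((tendsto_pow_atTop two_ne_zero).comp hT).const_div_atTop _
  have hs : spin = CurieWeiss.spn := by
    funext b; rw [hspin]; rfl
  have hg : gauss = CurieWeiss.gaussDensity v := by
    funext t; rw [hgauss]; rfl
  subst hs hg
  have hbound : ∀ᶠ N : ℕ in atTop,
      (0 ≤ relEnt (μ N) (ν N) ∧ relEnt (μ N) (ν N) ≤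
        2 * (2 * ((N : ℝ) ^ δ) ^ 3 / √N) + 2 * √(1 + v) * exp (v / 2 - (N : ℝ) ^ δ) +
        2 * (2 * exp (1 / 2 - (N : ℝ) ^ δ / 2)) +
        4 * (1 + v) * CurieWeiss.momentConst β / ((N : ℝ) ^ δ) ^ 2) ∧
      (0 ≤ relEnt (ν N) (μ N) ∧ relEnt (ν N) (μ N) ≤
        2 * ((N : ℝ) ^ δ) ^ 3 / √N + 2 * √(1 + v) * exp (v / 2 - (N : ℝ) ^ δ)) := by
    filter_upwards [eventually_ge_atTop 1, hT.eventually_gt_atTop 0,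
      hu.eventually_le_const (by norm_num : (0 : ℝ) < 1 / 2),
      hε.eventually_le_const one_pos,
      hζ.eventually_le_const (by norm_num : (0 : ℝ) < 1 / 2)] with N hN hT0 hu1 hε1 hζ1
    have h0 : (0 : ℝ) < N := by exact_mod_cast hN
    have he : ∀ σ : Fin N → Bool,
        β / (2 * N) * ∑ i, ∑ j, CurieWeiss.spn (σ i) * CurieWeiss.spn (σ j) = β * CurieWeiss.mag σ ^ 2 / 2 := by
      intro σ
      rw [← Finset.sum_mul_sum, CurieWeiss.mag, div_pow, sq_sqrt h0.le]
      field_simp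
    refine CurieWeiss.entropy_bounds hN hβ0 hβ1 hv hT0 hu1 rfl hε1 rfl rfl hζ1 (Z := Z N) ?_ ?_ ?_
    · rw [hZ]; simp_rw [he]
    · intro σ; rw [hμ, he]
    · intro σ
      rw [hν, zpow_neg, zpow_natCast, div_eq_inv_mul]
      rfl
  constructor
  · refine squeeze_zero' (hbound.mono fun N h => h.1.1) (hbound.mono fun N h => h.1.2) ?_
    simpa using (((hε.const_mul 2).add hη).add (hζ.const_mul 2)).add hK
  · refine squeeze_zero' (hbound.mono fun N h => h.2.1) (hbound.mono fun N h => h.2.2) ?_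
    simpa using hε.add hη
end
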